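/- arXiv:1602.05738 — 2 statements merged into one kernel-verified Lean document; each statement's English description precedes it below -/
import Mathlib

section
/- Let T be a finite-dimensional torus (ℝ/ℤ)^d and let α be an action of ℤ² on T by continuous group automorphisms that is unipotent, i.e., for each g ∈ ℤ² there exists k ≥ 1 with (α(g) − I)^k = 0. Let ν be an ergodic α-invariant Borel probability measure on T. Then there exists a finite index subgroup Λ ⊆ ℤ² such that each Λ-ergodic component of ν is the normalized Haar measure on a translate of a subtorus (a coset x + S where S ⊆ T is a closed connected subgroup). -/
open MeasureTheory

/-- `Xs` is the family of `Λ`-ergodic components of `(X, μ)` for the `ℤ²`-action `T` :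
the `Xs i` are measurable `Λ`-invariant sets of positive measure, pairwise disjoint
and covering `X` up to null sets, and on each of them every `Λ`-invariant set is
trivial (i.e. the `Xs i` are the atoms of the σ-algebra of `Λ`-invariant sets). -/
def IsErgodicComponents {X : Type*} [MeasurableSpace X] (μ : Measure X)
    (T : ℤ × ℤ → X → X) (Λ : AddSubgroup (ℤ × ℤ)) {n : ℕ} (Xs : Fin n → Set X) : Prop :=
  (∀ i, MeasurableSet (Xs i)) ∧
  (∀ i, 0 < μ (Xs i)) ∧
  (∀ i j, i ≠ j → μ (Xs i ∩ Xs j) = 0) ∧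
  μ (Set.univ \ ⋃ i, Xs i) = 0 ∧
  (∀ i, ∀ g ∈ Λ, T g ⁻¹' Xs i =ᵐ[μ] Xs i) ∧
  (∀ i, ∀ S : Set X, MeasurableSet S → (∀ g ∈ Λ, T g ⁻¹' S =ᵐ[μ] S) →
    μ (Xs i ∩ S) = 0 ∨ μ (Xs i \ S) = 0)

/-!
Let `D` be the group of characters of the torus that take only finitely many values `ν`-almost
everywhere. The coset of the common kernel `S` of `D` containing a given point is then, up to null
sets, one of finitely many cosets of positive measure. The acting group permutes these, so a finite
index subgroup `Λ` fixes each of them. Since the dual modulo `D` is torsion-free, `S` is connected.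

Fix such a coset `A`, a `Λ`-invariant set `s`, and a character `χ` outside `D`. The integral of `χ`
over `s` against `ν[|A]` vanishes. Indeed, if some `g ∈ Λ` moves `χ` modulo `D`, then unipotence
makes the differences `g ^ n • χ - χ`, `n ≠ 0`, lie outside `D`; their integrals vanish by
induction, so the `g ^ n • χ` are orthonormal in `L²`, while they all have the same inner product
with the indicator of `s`. Otherwise every `g • χ - χ` with `g ∈ Λ` is constant on `A`. If one of
the constants is nonzero, invariance forces the integral to vanish. If all are zero, `χ` is
`Λ`-invariant on `A`, and by unipotence `g • χ - χ ∈ D` for all `g` in the whole group; ergodicity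
of `ν` then shows that `χ` takes finitely many values, contrary to `χ ∉ D`.

Consequently the Fourier coefficients of `ν[|A]` are those of the Haar measure of a translate of
`S`, and for each `Λ`-invariant `s` the measures `ν[|A].restrict s` and `ν[|A] s • ν[|A]` agree.
-/

/-! ### Commuting unipotent endomorphisms -/

section Unipotent

open Polynomial in
lemma exists_nilpotent_geom_sum_eq {R : Type*} [Ring R] {b : R} (hb : IsNilpotent (b - 1)) (n : ℕ) :
    ∃ c : R, IsNilpotent c ∧ ∑ i ∈ Finset.range n, b ^ i = n + c := by
  obtain ⟨q, hq⟩ : (X - C 1 : ℤ[X]) ∣ ∑ i ∈ Finset.range n, X ^ i - C (n : ℤ) :=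
    dvd_iff_isRoot.2 (by simp [eval_finsetSum])
  have hcomm : Commute (b - 1) (aeval b q) := by
    have haeval : aeval b (X - C 1 : ℤ[X]) = b - 1 := by simp
    exact haeval ▸ (Commute.all (X - C 1 : ℤ[X]) q).map (aeval b)
  exact ⟨(b - 1) * aeval b q, hcomm.isNilpotent_mul_right hb,
    sub_eq_iff_eq_add'.1 (by simpa using congrArg (aeval b) hq)⟩

variable {M : Type*} [AddCommGroup M]

lemma eq_zero_of_nsmul_add_eq_zero [Module.IsTorsionFree ℤ M] {c : Module.End ℤ M}
    (hc : IsNilpotent c) {n : ℕ} (hn : n ≠ 0) {v : M} (hv : n • v + c v = 0) : v = 0 := by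
  obtain ⟨k, hk⟩ := hc
  have hpow (j : ℕ) : (c ^ j) v = (-n : ℤ) ^ j • v := by
    induction j with
    | zero => simp
    | succ j ih =>
      rw [pow_succ', Module.End.mul_apply, ih, map_smul, eq_neg_of_add_eq_zero_right hv, pow_succ,
        mul_smul, neg_smul, natCast_zsmul]
  have hzero : (-n : ℤ) ^ k • v = 0 := by rw [← hpow, hk, LinearMap.zero_apply]
  exact (smul_eq_zero.1 hzero).resolve_left (pow_ne_zero k (by simpa using hn))

lemma apply_eq_self_of_pow_apply_eq_self [Module.IsTorsionFree ℤ M] {b : Module.End ℤ M}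
    (hb : IsNilpotent (b - 1)) {n : ℕ} (hn : n ≠ 0) {v : M} (hv : (b ^ n) v = v) : b v = v := by
  obtain ⟨c, hc, hsum⟩ := exists_nilpotent_geom_sum_eq hb n
  refine sub_eq_zero.1 (eq_zero_of_nsmul_add_eq_zero hc hn ?_)
  calc n • (b v - v) + c (b v - v) = ((n + c) * (b - 1)) v := by simp
    _ = (b ^ n - 1) v := by rw [← hsum, geom_sum_mul]
    _ = 0 := by rw [LinearMap.sub_apply, hv, Module.End.one_apply, sub_self]

lemma apply_sub_mem_of_pow_apply_sub_mem {N : Submodule ℤ M} [Module.IsTorsionFree ℤ (M ⧸ N)]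
    {b : Module.End ℤ M} (hb : IsNilpotent (b - 1)) (hN : N ≤ N.comap b) {n : ℕ} (hn : n ≠ 0)
    {v : M} (hv : (b ^ n) v - v ∈ N) : b v - v ∈ N := by
  have hb' : IsNilpotent (N.mapQ N b hN - 1) := by
    obtain ⟨k, hk⟩ := hb
    have hsub : N ≤ N.comap (b - 1) := fun v hv ↦ N.sub_mem (hN hv) hv
    have hmapQ : N.mapQ N b hN - 1 = N.mapQ N (b - 1) hsub := by ext; rfl
    refine ⟨k, ?_⟩
    rw [hmapQ, ← Submodule.mapQ_pow]
    simp only [hk, Submodule.mapQ_zero]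
  rw [← Submodule.Quotient.eq] at hv ⊢
  refine apply_eq_self_of_pow_apply_eq_self hb' hn (v := N.mkQ v) ?_
  rw [← Submodule.mapQ_pow]
  exact hv

lemma exists_linearMap_eq_zero_and_sub_mem [Module.Finite ℤ M] (D : Submodule ℤ M)
    [Module.IsTorsionFree ℤ (M ⧸ D)] :
    ∃ p : M →ₗ[ℤ] M, (∀ v ∈ D, p v = 0) ∧ ∀ v, p v - v ∈ D := by
  obtain ⟨s, hs⟩ := Module.projective_lifting_property D.mkQ LinearMap.id D.mkQ_surjective
  refine ⟨s ∘ₗ D.mkQ, fun v hv ↦ ?_, fun v ↦ ?_⟩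
  · rw [LinearMap.comp_apply, D.mkQ_apply, (Submodule.Quotient.mk_eq_zero D).2 hv, map_zero]
  · exact (Submodule.Quotient.eq D).1 (LinearMap.congr_fun hs (D.mkQ v))

-- The annihilator of `v` in the commutant of `ρ` grows strictly when `v` becomes `ρ g v - v`.
theorem induction_of_commuting_unipotent {R G : Type*} [CommRing R] [IsNoetherianRing R]
    [Module R M] [Module.Finite R M] [CommMonoid G] {ρ : G →* Module.End R M}
    (hρ : ∀ g, IsNilpotent (ρ g - 1)) {P : M → Prop}
    (step : ∀ v, (∀ g, ρ g v ≠ v → P (ρ g v - v)) → P v) (v : M) : P v := by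
  let ann (v : M) : Submodule R (Module.End R M) :=
    Subalgebra.toSubmodule (Subalgebra.centralizer R (Set.range ρ)) ⊓
      LinearMap.ker (LinearMap.applyₗ v)
  have hmem {v : M} {T : Module.End R M} : T ∈ ann v ↔ (∀ g, ρ g * T = T * ρ g) ∧ T v = 0 := by
    simp [ann, Subalgebra.mem_centralizer_iff]
  have hlt {g : G} {v : M} (hg : ρ g v ≠ v) : ann v < ann (ρ g v - v) := by
    have hnil : ∃ k : ℕ, ((ρ g - 1) ^ k) (ρ g v - v) = 0 := (hρ g).imp fun k hk ↦ by simp [hk]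
    classical obtain ⟨k, hk, hmin⟩ := Nat.findX hnil
    have hkv : ((ρ g - 1) ^ k) v ≠ 0 := by
      cases k with
      | zero => exact fun h ↦ hg (by simp_all)
      | succ j => rw [pow_succ]; exact hmin j j.lt_succ_self
    have hcomm (h : G) : Commute (ρ h) ((ρ g - 1) ^ k) :=
      (((Commute.all h g).map ρ).sub_right (Commute.one_right _)).pow_right k
    refine SetLike.lt_iff_le_and_exists.2 ⟨fun T hT ↦ ?_, (ρ g - 1) ^ k,
      hmem.2 ⟨hcomm, hk⟩, fun h ↦ hkv (hmem.1 h).2⟩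
    obtain ⟨hTcomm, hTv⟩ := hmem.1 hT
    refine hmem.2 ⟨hTcomm, ?_⟩
    rw [map_sub, ← Module.End.mul_apply, ← hTcomm, Module.End.mul_apply, hTv, map_zero, sub_zero]
  exact (InvImage.wf ann wellFounded_gt).induction (C := P) v fun v ih ↦
    step v fun g hg ↦ ih _ (hlt hg)

end Unipotent

/-! ### Functions with almost surely finite range -/

/-- `f` takes, off a `μ`-null set, only finitely many values. -/
def AEFiniteRange {α β : Type*} [MeasurableSpace α] (f : α → β) (μ : Measure α) : Prop :=
  ∃ F : Set β, F.Finite ∧ ∀ᵐ x ∂μ, f x ∈ F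

namespace AEFiniteRange

variable {α β γ κ : Type*} [MeasurableSpace α] {μ : Measure α} {f : α → β}

lemma const (b : β) : AEFiniteRange (fun _ ↦ b) μ :=
  ⟨{b}, Set.finite_singleton b, .of_forall fun _ ↦ rfl⟩

lemma map (hf : AEFiniteRange f μ) (φ : β → γ) : AEFiniteRange (fun x ↦ φ (f x)) μ := by
  obtain ⟨F, hF, hfF⟩ := hf
  exact ⟨φ '' F, hF.image φ, hfF.mono fun x ↦ Set.mem_image_of_mem φ⟩

lemma map₂ {δ : Type*} {g : α → γ} (hf : AEFiniteRange f μ) (hg : AEFiniteRange g μ)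
    (φ : β → γ → δ) : AEFiniteRange (fun x ↦ φ (f x) (g x)) μ := by
  obtain ⟨F, hF, hfF⟩ := hf
  obtain ⟨K, hK, hgK⟩ := hg
  exact ⟨Set.image2 φ F K, hF.image2 φ hK, hfF.mp <| hgK.mono fun x hg hf ↦
    Set.mem_image2_of_mem hf hg⟩

lemma pi [Finite κ] {f : κ → α → β} (hf : ∀ k, AEFiniteRange (f k) μ) :
    AEFiniteRange (fun x k ↦ f k x) μ := by
  choose F hF hfF using hf
  exact ⟨Set.univ.pi F, Set.Finite.pi hF, (ae_all_iff.2 hfF).mono fun x hx k _ ↦ hx k⟩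

lemma of_factorsThrough {g : α → γ} (hf : AEFiniteRange f μ) (hg : g.FactorsThrough f) :
    AEFiniteRange g μ := by
  rcases isEmpty_or_nonempty α with hα | ⟨⟨x⟩⟩
  · exact ⟨∅, Set.finite_empty, .of_forall isEmptyElim⟩
  have : Nonempty γ := ⟨g x⟩
  obtain ⟨φ, rfl⟩ := (Function.factorsThrough_iff g).1 hg
  exact hf.map φ

lemma of_map {φ : β → γ} (hφ : ∀ c, (φ ⁻¹' {c}).Finite) (h : AEFiniteRange (fun x ↦ φ (f x)) μ) :
    AEFiniteRange f μ := by
  obtain ⟨F, hF, hfF⟩ := h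
  exact ⟨φ ⁻¹' F, hF.preimage' fun c _ ↦ hφ c, hfF⟩

lemma of_ae_exists_eq [Finite κ] {g : κ → α → β} (hg : ∀ k, AEFiniteRange (g k) μ)
    (h : ∀ᵐ x ∂μ, ∃ k, f x = g k x) : AEFiniteRange f μ := by
  choose F hF hgF using hg
  refine ⟨⋃ k, F k, Set.finite_iUnion hF, ?_⟩
  filter_upwards [h, ae_all_iff.2 hgF] with x ⟨k, hk⟩ hx
  exact Set.mem_iUnion.2 ⟨k, hk ▸ hx k⟩

lemma comp_quasiMeasurePreserving {T : α → α} (hf : AEFiniteRange f μ)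
    (hT : Measure.QuasiMeasurePreserving T μ μ) : AEFiniteRange (fun x ↦ f (T x)) μ := by
  obtain ⟨F, hF, hfF⟩ := hf
  exact ⟨F, hF, hT.ae hfF⟩

lemma finite_setOf_measure_fiber_pos (hf : AEFiniteRange f μ) :
    {b | 0 < μ (f ⁻¹' {b})}.Finite := by
  obtain ⟨F, hF, hfF⟩ := hf
  refine hF.subset fun b hb ↦ by_contra fun hbF ↦ (Set.mem_ofPred_eq ▸ hb).ne' ?_
  exact measure_mono_null (fun x (hx : f x = b) (h : f x ∈ F) ↦ hbF (hx ▸ h)) hfF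

lemma ae_measure_fiber_pos (hf : AEFiniteRange f μ) : ∀ᵐ x ∂μ, 0 < μ (f ⁻¹' {f x}) := by
  obtain ⟨F, hF, hfF⟩ := hf
  have hnull : ∀ᵐ x ∂μ, ∀ b ∈ F, μ (f ⁻¹' {b}) = 0 → f x ≠ b :=
    (ae_ball_iff hF.countable).2 fun b _ ↦ by
      by_cases hb : μ (f ⁻¹' {b}) = 0
      · exact (measure_eq_zero_iff_ae_notMem.1 hb).mono fun x hx _ ↦ hx
      · exact .of_forall fun _ h ↦ absurd h hb
  filter_upwards [hfF, hnull] with x hx hnull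
  exact pos_iff_ne_zero.2 fun h ↦ hnull _ hx h rfl

end AEFiniteRange

/-! ### Sets invariant under a finite index subgroup -/

section FiniteIndex

variable {G X : Type*} [Group G] [MulAction G X] [MeasurableSpace X] [MeasurableConstSMul G X]
  {ν : Measure X} [ErgodicSMul G X ν] {Λ : Subgroup G} [Λ.FiniteIndex] {A : Set X}

lemma ae_exists_quotient_out_inv_smul_mem (hA : MeasurableSet A) (hA0 : ν A ≠ 0)
    (hΛ : ∀ g ∈ Λ, (g • ·) ⁻¹' A =ᵐ[ν] A) : ∀ᵐ x ∂ν, ∃ q : G ⧸ Λ, q.out⁻¹ • x ∈ A := by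
  let U (q : G ⧸ Λ) : Set X := (q.out⁻¹ • ·) ⁻¹' A
  have hU (g : G) (q : G ⧸ Λ) : (g • ·) ⁻¹' U q =ᵐ[ν] U (g⁻¹ • q) := by
    have hmem : q.out⁻¹ * g * (g⁻¹ • q).out ∈ Λ := by
      rw [mul_assoc, ← QuotientGroup.eq, QuotientGroup.out_eq', ← smul_eq_mul,
        MulAction.Quotient.mk_smul_out, smul_inv_smul]
    have hcomp : (g • ·) ⁻¹' U q =
        ((g⁻¹ • q).out⁻¹ • ·) ⁻¹' ((q.out⁻¹ * g * (g⁻¹ • q).out) • ·) ⁻¹' A := by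
      ext x
      simp [U, smul_smul]
    rw [hcomp]
    exact (measurePreserving_smul _ ν).quasiMeasurePreserving.preimage_ae_eq (hΛ _ hmem)
  have hinv (g : G) : (g • ·) ⁻¹' ⋃ q, U q =ᵐ[ν] ⋃ q, U q := by
    have hshift : ⋃ q, U (g⁻¹ • q) = ⋃ q, U q :=
      (MulAction.toPerm (β := G ⧸ Λ) g⁻¹).iSup_comp (g := U)
    exact (Filter.EventuallyEq.of_eq Set.preimage_iUnion).trans <|
      (Filter.EventuallyEq.countable_iUnion (hU g)).trans (.of_eq hshift)
  have hUmeas : MeasurableSet (⋃ q, U q) := .iUnion fun q ↦ hA.preimage (measurable_const_smul _)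
  have hU0 : ν (⋃ q, U q) ≠ 0 := fun h ↦ hA0 <| by
    rw [← measure_preimage_smul ν ((1 : G) : G ⧸ Λ).out⁻¹ A]
    exact measure_iUnion_null_iff.1 h _
  have hconst := aeconst_of_forall_preimage_smul_ae_eq G hUmeas.nullMeasurableSet hinv
  have hmem := (Filter.eventuallyConst_set.1 hconst).resolve_right fun h ↦
    hU0 (measure_eq_zero_iff_ae_notMem.2 h)
  exact hmem.mono fun x ↦ Set.mem_iUnion.1

lemma measure_univ_le_index_mul (hA : MeasurableSet A) (hA0 : ν A ≠ 0)
    (hΛ : ∀ g ∈ Λ, (g • ·) ⁻¹' A =ᵐ[ν] A) : ν Set.univ ≤ Λ.index * ν A := by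
  have : Fintype (G ⧸ Λ) := Fintype.ofFinite _
  calc ν Set.univ ≤ ν (⋃ q : G ⧸ Λ, (q.out⁻¹ • ·) ⁻¹' A) :=
        measure_mono_ae <| (ae_exists_quotient_out_inv_smul_mem hA hA0 hΛ).mono fun x hx _ ↦
          Set.mem_iUnion.2 hx
    _ ≤ ∑ q : G ⧸ Λ, ν ((q.out⁻¹ • ·) ⁻¹' A) := measure_iUnion_fintype_le ν _
    _ = Λ.index * ν A := by
      simp [measure_preimage_smul, Subgroup.index_eq_card]

end FiniteIndex

lemma exists_measure_singleton_ne_zero {Y : Type*} [MetricSpace Y] [SecondCountableTopology Y]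
    [MeasurableSpace Y] [BorelSpace Y] {μ : Measure Y} [IsFiniteMeasure μ] [NeZero μ] {c : ENNReal}
    (hc : c ≠ 0) (hμ : ∀ s, MeasurableSet s → μ s ≠ 0 → c ≤ μ s) : ∃ y, μ {y} ≠ 0 := by
  obtain ⟨y, -, hy⟩ := exists_mem_forall_mem_nhdsWithin_pos_measure (NeZero.ne (μ Set.univ))
  have hlim := (tendsto_measure_cthickening_of_isClosed (μ := μ) (s := {y})
    ⟨1, one_pos, measure_ne_top μ _⟩ isClosed_singleton).mono_left
    (nhdsWithin_le_nhds (s := Set.Ioi 0))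
  refine ⟨y, ((pos_iff_ne_zero.2 hc).trans_le (ge_of_tendsto hlim ?_)).ne'⟩
  filter_upwards [self_mem_nhdsWithin] with r hr
  refine hμ _ Metric.isClosed_cthickening.measurableSet (hy _ ?_).ne'
  rw [nhdsWithin_univ]
  exact Filter.mem_of_superset (Metric.ball_mem_nhds y hr) <|
    (Metric.thickening_singleton r y).symm.subset.trans (Metric.thickening_subset_cthickening r _)

lemma preimage_smul_inter_preimage_ae_eq {G X Y : Type*} [SMul G X] [MeasurableSpace X]
    {ν : Measure X} {A : Set X} {g : G} (hg : (g • ·) ⁻¹' A =ᵐ[ν] A) {f : X → Y}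
    (hf : ∀ᵐ x ∂ν, x ∈ A → f (g • x) = f x) (s : Set Y) :
    (g • ·) ⁻¹' (A ∩ f ⁻¹' s) =ᵐ[ν] (A ∩ f ⁻¹' s : Set X) := by
  refine Filter.eventuallyEq_set.2 ?_
  filter_upwards [hg.mem_iff, hf] with x hgx hfx
  exact (and_congr_left' hgx).trans <| and_congr_right fun hx ↦ by
    simp only [Set.mem_preimage, hfx hx]

section FiniteIndex

variable {G X Y : Type*} [Group G] [MulAction G X] [MeasurableSpace X] [MeasurableConstSMul G X]
  {ν : Measure X} [IsFiniteMeasure ν] [ErgodicSMul G X ν] {Λ : Subgroup G} [Λ.FiniteIndex]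
  {A : Set X}

lemma exists_measure_inter_fiber_ne_zero [MetricSpace Y] [SecondCountableTopology Y]
    [MeasurableSpace Y] [BorelSpace Y] (hA : MeasurableSet A) (hA0 : ν A ≠ 0)
    (hΛ : ∀ g ∈ Λ, (g • ·) ⁻¹' A =ᵐ[ν] A) {f : X → Y} (hf : Measurable f)
    (hfΛ : ∀ g ∈ Λ, ∀ᵐ x ∂ν, x ∈ A → f (g • x) = f x) : ∃ y, ν (A ∩ f ⁻¹' {y}) ≠ 0 := by
  have hμ (s : Set Y) (hs : MeasurableSet s) : (ν.restrict A).map f s = ν (A ∩ f ⁻¹' s) := by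
    rw [Measure.map_apply hf hs, Measure.restrict_apply (hf hs), Set.inter_comm]
  have : NeZero ((ν.restrict A).map f) := ⟨fun h ↦ hA0 <| by
    simpa [h] using (hμ Set.univ .univ).symm⟩
  have : NeZero ν := ⟨fun h ↦ hA0 (by simp [h])⟩
  have hc : ν Set.univ / Λ.index ≠ 0 := by simp [NeZero.ne ν]
  obtain ⟨y, hy⟩ := exists_measure_singleton_ne_zero (μ := (ν.restrict A).map f) hc
    fun s hs hs0 ↦ by
      rw [hμ s hs] at hs0 ⊢
      exact ENNReal.div_le_of_le_mul' <| measure_univ_le_index_mul (hA.inter (hf hs)) hs0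
        fun g hg ↦ preimage_smul_inter_preimage_ae_eq (hΛ g hg) (hfΛ g hg) s
  exact ⟨y, hμ {y} (measurableSet_singleton y) ▸ hy⟩

lemma AEFiniteRange.of_smul_sub [AddCommGroup Y] [MetricSpace Y] [SecondCountableTopology Y]
    [MeasurableSpace Y] [BorelSpace Y] (hA : MeasurableSet A) (hA0 : ν A ≠ 0)
    (hΛ : ∀ g ∈ Λ, (g • ·) ⁻¹' A =ᵐ[ν] A) {f : X → Y} (hf : Measurable f)
    (hfΛ : ∀ g ∈ Λ, ∀ᵐ x ∂ν, x ∈ A → f (g • x) = f x)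
    (hfG : ∀ g : G, AEFiniteRange (fun x ↦ f (g • x) - f x) ν) : AEFiniteRange f ν := by
  obtain ⟨y, hy⟩ := exists_measure_inter_fiber_ne_zero hA hA0 hΛ hf hfΛ
  refine .of_ae_exists_eq (g := fun (q : G ⧸ Λ) x ↦ y - (f (q.out⁻¹ • x) - f x))
    (fun q ↦ (hfG q.out⁻¹).map (y - ·)) ?_
  filter_upwards [ae_exists_quotient_out_inv_smul_mem (hA.inter (hf (measurableSet_singleton y))) hy
    fun g hg ↦ preimage_smul_inter_preimage_ae_eq (hΛ g hg) (hfΛ g hg) {y}] with x ⟨q, _, hq⟩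
  refine ⟨q, ?_⟩
  rw [← Set.mem_singleton_iff.1 hq, sub_sub_cancel]

end FiniteIndex

/-! ### Ergodic decompositions -/

/-- `Xs` is a decomposition of `(X, μ)` into ergodic components for the action of `Γ`: modulo `μ`,
it is a partition into invariant measurable sets of positive measure, and every invariant
measurable set is trivial on each of them. -/
structure IsErgodicDecomposition (Γ : Type*) {X κ : Type*} [SMul Γ X] [MeasurableSpace X]
    (μ : Measure X) (Xs : κ → Set X) : Prop where
  measurableSet (i : κ) : MeasurableSet (Xs i)
  measure_pos (i : κ) : 0 < μ (Xs i)
  pairwise_aedisjoint : Pairwise fun i j ↦ AEDisjoint μ (Xs i) (Xs j)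
  ae_exists_mem : ∀ᵐ x ∂μ, ∃ i, x ∈ Xs i
  preimage_smul_ae_eq (i : κ) (γ : Γ) : (γ • ·) ⁻¹' Xs i =ᵐ[μ] Xs i
  measure_eq_zero_or (i : κ) {s : Set X} (hs : MeasurableSet s)
    (hΓs : ∀ γ : Γ, (γ • ·) ⁻¹' s =ᵐ[μ] s) : μ (Xs i ∩ s) = 0 ∨ μ (Xs i \ s) = 0

lemma IsErgodicDecomposition.comp_equiv {Γ X κ κ' : Type*} [SMul Γ X] [MeasurableSpace X]
    {μ : Measure X} {Xs : κ → Set X} (h : IsErgodicDecomposition Γ μ Xs) (e : κ' ≃ κ) :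
    IsErgodicDecomposition Γ μ (Xs ∘ e) where
  measurableSet i := h.measurableSet (e i)
  measure_pos i := h.measure_pos (e i)
  pairwise_aedisjoint := h.pairwise_aedisjoint.comp_of_injective e.injective
  ae_exists_mem := h.ae_exists_mem.mono fun _ ↦ (e.exists_congr_left.2 <| by simpa using ·)
  preimage_smul_ae_eq i := h.preimage_smul_ae_eq (e i)
  measure_eq_zero_or i := h.measure_eq_zero_or (e i)

open scoped Pointwise in
lemma preimage_smul_eq_self {G X : Type*} [Group G] [MulAction G X] {A : Set X} {g : G}
    (hg : g ∈ MulAction.stabilizer G A) : (g • ·) ⁻¹' A = A :=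
  (Set.preimage_smul g A).trans (MulAction.mem_stabilizer_iff.1 (inv_mem hg))

section Cond

open scoped ProbabilityTheory

variable {X : Type*} [MeasurableSpace X] {ν : Measure X} {A : Set X}

lemma ae_cond_iff [IsFiniteMeasure ν] (hA : MeasurableSet A) {p : X → Prop} :
    (∀ᵐ x ∂ν[|A], p x) ↔ ∀ᵐ x ∂ν, x ∈ A → p x := by
  rw [ProbabilityTheory.cond,
    Measure.ae_ennreal_smul_measure_iff (ENNReal.inv_ne_zero.2 (measure_ne_top ν A)),
    ae_restrict_iff' hA]

lemma smulInvariantMeasure_cond {Γ : Type*} [SMul Γ X] [SMulInvariantMeasure Γ X ν]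
    (hA : MeasurableSet A) (hΓ : ∀ γ : Γ, (γ • ·) ⁻¹' A = A) :
    SMulInvariantMeasure Γ X ν[|A] where
  measure_preimage_smul γ s hs := by
    rw [ProbabilityTheory.cond_apply hA, ProbabilityTheory.cond_apply hA,
      ← SMulInvariantMeasure.measure_preimage_smul γ (hA.inter hs), Set.preimage_inter, hΓ]

end Cond

lemma IsErgodicDecomposition.isErgodicComponents {X : Type*} [MeasurableSpace X]
    [MulAction (Multiplicative (ℤ × ℤ)) X] {μ : Measure X} {Λ : Subgroup (Multiplicative (ℤ × ℤ))}
    {n : ℕ} {Xs : Fin n → Set X} (h : IsErgodicDecomposition Λ μ Xs) :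
    IsErgodicComponents μ (fun g x ↦ Multiplicative.ofAdd g • x) Λ.toAddSubgroup' Xs := by
  refine ⟨h.measurableSet, h.measure_pos, fun i j hij ↦ h.pairwise_aedisjoint hij, ?_,
    fun i g hg ↦ h.preimage_smul_ae_eq i ⟨.ofAdd g, hg⟩,
    fun i s hs hΛs ↦ h.measure_eq_zero_or i hs fun γ ↦ hΛs (Multiplicative.toAdd γ.1) γ.2⟩
  rw [← Set.compl_eq_univ_sdiff, ← mem_ae_iff]
  exact h.ae_exists_mem.mono fun x ↦ Set.mem_iUnion.2

lemma ergodicSMul_of_measure_eq_zero_or_one {G X : Type*} [SMul G X] [MeasurableSpace X]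
    {μ : Measure X} [IsProbabilityMeasure μ] [SMulInvariantMeasure G X μ]
    (h : ∀ s, MeasurableSet s → (∀ g : G, (g • ·) ⁻¹' s =ᵐ[μ] s) → μ s = 0 ∨ μ s = 1) :
    ErgodicSMul G X μ where
  aeconst_of_forall_preimage_smul_ae_eq hs hgs := Filter.eventuallyConst_set.2 <|
    (h _ hs hgs).symm.imp (mem_ae_iff_prob_eq_one hs).2 measure_eq_zero_iff_ae_notMem.1

/-! ### Characters of a compact group -/

/-- The Pontryagin dual of an additive topological group, written additively. -/
abbrev CharGroup (X : Type*) [AddCommGroup X] [TopologicalSpace X] : Type _ :=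
  X →ₜ+ UnitAddCircle

section IntegralFunctional

variable {X : Type*} [TopologicalSpace X] [CompactSpace X] [MeasurableSpace X] [BorelSpace X]

/-- Integration against `μ`, as a continuous linear functional on continuous functions. -/
noncomputable def integralFunctional (μ : Measure X) [IsFiniteMeasure μ] : C(X, ℂ) →L[ℂ] ℂ :=
  LinearMap.mkContinuous
    { toFun := fun f ↦ ∫ x, f x ∂μ
      map_add' := fun f g ↦ integral_add
        (f.continuous.integrable_of_hasCompactSupport (.of_compactSpace f))
        (g.continuous.integrable_of_hasCompactSupport (.of_compactSpace g))
      map_smul' := fun c f ↦ integral_const_mul c f }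
    (μ.real Set.univ) fun f ↦ by
      rw [mul_comm]
      exact norm_integral_le_of_norm_le_const (.of_forall f.norm_coe_le_norm)

lemma integralFunctional_apply (μ : Measure X) [IsFiniteMeasure μ] (f : C(X, ℂ)) :
    integralFunctional μ f = ∫ x, f x ∂μ := rfl

end IntegralFunctional

namespace CharGroup

section Fourier

variable {X : Type*} [AddCommGroup X] [TopologicalSpace X]

/-- Evaluation of characters at `x`, as a homomorphism. -/
def eval (x : X) : CharGroup X →+ UnitAddCircle where
  toFun χ := χ x
  map_zero' := rfl
  map_add' _ _ := rfl

lemma sub_apply (χ ψ : CharGroup X) (x : X) : (χ - ψ) x = χ x - ψ x := map_sub (eval x) χ ψ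

lemma zsmul_apply (n : ℤ) (χ : CharGroup X) (x : X) : (n • χ) x = n • χ x := map_zsmul (eval x) n χ

/-- The character `χ` as the complex-valued function `x ↦ exp (2πi χ(x))`. -/
noncomputable def fourier (χ : CharGroup X) : C(X, ℂ) :=
  ⟨fun x ↦ (χ x).toCircle,
    continuous_subtype_val.comp (AddCircle.continuous_toCircle.comp χ.continuous_toFun)⟩

lemma fourier_apply (χ : CharGroup X) (x : X) : fourier χ x = (χ x).toCircle := rfl

lemma fourier_zero : fourier (0 : CharGroup X) = 1 := by
  ext x
  simp [fourier_apply]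

lemma fourier_add (χ ψ : CharGroup X) : fourier (χ + ψ) = fourier χ * fourier ψ := by
  ext x
  simp [fourier_apply, AddCircle.toCircle_add]

lemma fourier_neg (χ : CharGroup X) : fourier (-χ) = star (fourier χ) := by
  ext x
  calc (((-χ) x).toCircle : ℂ) = (χ x).toCircle⁻¹ := congrArg _ (AddCircle.toCircle_neg (χ x))
    _ = star (fourier χ) x := Circle.coe_inv_eq_conj _

lemma fourier_map_add (χ : CharGroup X) (x y : X) :
    fourier χ (x + y) = fourier χ x * fourier χ y := by
  simp [fourier_apply, AddCircle.toCircle_add]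

lemma fourier_eq_iff {χ ψ : CharGroup X} {x y : X} : fourier χ x = fourier ψ y ↔ χ x = ψ y := by
  rw [fourier_apply, fourier_apply, Circle.coe_inj,
    (AddCircle.injective_toCircle one_ne_zero).eq_iff]

lemma fourier_eq_one_iff {χ : CharGroup X} {x : X} : fourier χ x = 1 ↔ χ x = 0 := by
  rw [← ContinuousMap.one_apply x, ← fourier_zero]
  exact fourier_eq_iff

lemma dense_span_fourier [CompactSpace X] {H : AddSubgroup (CharGroup X)}
    (hH : ∀ x : X, (∀ χ ∈ H, χ x = 0) → x = 0) :
    Dense (Submodule.span ℂ (fourier '' (H : Set (CharGroup X))) : Set C(X, ℂ)) := by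
  let s : Set C(X, ℂ) := fourier '' (H : Set (CharGroup X))
  let A : StarSubalgebra ℂ C(X, ℂ) :=
    { toSubalgebra := Algebra.adjoin ℂ s
      star_mem' := by
        suffices Algebra.adjoin ℂ s ≤ star (Algebra.adjoin ℂ s) from @this
        refine Algebra.adjoin_le ?_
        rintro _ ⟨χ, hχ, rfl⟩
        exact Algebra.subset_adjoin ⟨-χ, H.neg_mem hχ, fourier_neg χ⟩ }
  have hspan : Subalgebra.toSubmodule A.toSubalgebra = Submodule.span ℂ s := by
    refine Algebra.adjoin_eq_span_of_subset _
      (Set.Subset.trans (fun f hf ↦ ?_) Submodule.subset_span)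
    refine Submonoid.closure_induction (fun _ ↦ id) ⟨0, H.zero_mem, fourier_zero⟩ ?_ hf
    rintro _ _ - - ⟨χ, hχ, rfl⟩ ⟨ψ, hψ, rfl⟩
    exact ⟨χ + ψ, H.add_mem hχ hψ, fourier_add χ ψ⟩
  have hsep : A.SeparatesPoints := by
    intro x y hxy
    obtain ⟨χ, hχ, hne⟩ : ∃ χ ∈ H, χ (x - y) ≠ 0 := by
      by_contra! h
      exact hxy (sub_eq_zero.1 (hH _ h))
    refine ⟨_, ⟨fourier χ, Algebra.subset_adjoin ⟨χ, hχ, rfl⟩, rfl⟩, fun h ↦ hne ?_⟩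
    rw [map_sub, sub_eq_zero]
    exact fourier_eq_iff.1 h
  have htop : A.topologicalClosure = ⊤ :=
    ContinuousMap.starSubalgebra_topologicalClosure_eq_top_of_separatesPoints A hsep
  intro f
  rw [← hspan]
  exact (htop ▸ StarSubalgebra.mem_top : f ∈ A.topologicalClosure)

end Fourier

section Measure

lemma integral_fourier_eq_zero {X : Type*} [AddCommGroup X] [TopologicalSpace X]
    [MeasurableSpace X] [BorelSpace X] [IsTopologicalAddGroup X] {χ : CharGroup X} (hχ : χ ≠ 0)
    (μ : Measure X) [μ.IsAddLeftInvariant] : ∫ x, fourier χ x ∂μ = 0 := by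
  obtain ⟨a, ha⟩ := DFunLike.ne_iff.1 hχ
  have hinv : ∫ x, fourier χ x ∂μ = fourier χ a * ∫ x, fourier χ x ∂μ := by
    rw [← integral_const_mul, ← integral_add_left_eq_self _ a]
    simp only [fourier_map_add]
  by_contra hne
  exact ha (fourier_eq_one_iff.1 ((mul_eq_right₀ hne).1 hinv.symm))

variable {X : Type*} [AddCommGroup X] [TopologicalSpace X] [CompactSpace X] [MeasurableSpace X]
  [BorelSpace X]

lemma measure_ext [HasOuterApproxClosed X] (hX : ∀ x : X, (∀ χ : CharGroup X, χ x = 0) → x = 0)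
    {μ ν : Measure X} [IsFiniteMeasure μ] [IsFiniteMeasure ν]
    (h : ∀ χ : CharGroup X, ∫ x, fourier χ x ∂μ = ∫ x, fourier χ x ∂ν) : μ = ν := by
  have hdense := dense_span_fourier (H := ⊤) fun x hx ↦ hX x fun χ ↦ hx χ trivial
  have hL : integralFunctional μ = integralFunctional ν :=
    ContinuousLinearMap.ext_on hdense (by rintro _ ⟨χ, -, rfl⟩; exact h χ)
  refine ext_of_forall_integral_eq_of_IsFiniteMeasure fun f ↦ ?_
  have hf := DFunLike.congr_fun hL ⟨fun x ↦ (f x : ℂ), by fun_prop⟩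
  simpa only [integralFunctional_apply, ContinuousMap.coe_mk, integral_complex_ofReal,
    Complex.ofReal_inj] using hf

end Measure

lemma eq_top_of_separating {X : Type*} [AddCommGroup X] [TopologicalSpace X]
    [IsTopologicalAddGroup X] [CompactSpace X] {H : AddSubgroup (CharGroup X)}
    (hH : ∀ x : X, (∀ χ ∈ H, χ x = 0) → x = 0) : H = ⊤ := by
  borelize X
  refine (AddSubgroup.eq_top_iff' H).2 fun χ ↦ by_contra fun hχ ↦ ?_
  let μ : Measure X := Measure.addHaar
  let L : C(X, ℂ) →L[ℂ] ℂ :=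
    integralFunctional μ ∘L ContinuousLinearMap.mul ℂ C(X, ℂ) (fourier (-χ))
  have hL (ψ : CharGroup X) : L (fourier ψ) = ∫ x, fourier (-χ + ψ) x ∂μ := by
    rw [fourier_add]; rfl
  have hzero : L = 0 := by
    refine ContinuousLinearMap.ext_on (dense_span_fourier hH) ?_
    rintro _ ⟨ψ, hψ, rfl⟩
    rw [hL]
    exact integral_fourier_eq_zero (fun h ↦ hχ (by rwa [neg_add_eq_zero.1 h])) μ
  have hone : L (fourier χ) = μ.real Set.univ := by
    simp [hL, fourier_zero]
  rw [hzero, zero_apply] at hone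
  exact measureReal_univ_ne_zero (μ := μ) (by exact_mod_cast hone.symm)

/-! ### The dual action and annihilators -/

section DualRep

variable {G X : Type*} [CommGroup G] [AddCommGroup X] [TopologicalSpace X] [DistribMulAction G X]
  [ContinuousConstSMul G X]

variable (G X) in
/-- The representation of a commutative group `G` acting by automorphisms on `X` on the dual of `X`
by `χ ↦ χ ∘ (g • ·)`; commutativity makes this covariant in `g`. -/
def dualRep : G →* Module.End ℤ (CharGroup X) where
  toFun g := AddMonoidHom.toIntLinearMap
    { toFun := fun χ ↦ χ.comp ⟨DistribSMul.toAddMonoidHom X g, continuous_const_smul g⟩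
      map_zero' := rfl
      map_add' := fun _ _ ↦ rfl }
  map_one' := by
    ext χ x
    exact congrArg χ (one_smul G x)
  map_mul' g h := by
    ext χ x
    exact congrArg χ (mul_comm g h ▸ mul_smul h g x)

lemma dualRep_apply (g : G) (χ : CharGroup X) (x : X) : dualRep G X g χ x = χ (g • x) := rfl

lemma dualRep_sub_apply (g : G) (χ : CharGroup X) (x : X) :
    (dualRep G X g χ - χ) x = χ (g • x) - χ x := sub_apply _ χ x

lemma isNilpotent_dualRep_sub_one {g : G}
    (hg : IsNilpotent (DistribMulAction.toAddMonoidEnd G X g - 1)) :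
    IsNilpotent (dualRep G X g - 1) := by
  obtain ⟨k, hk⟩ := hg
  have hpow (j : ℕ) (χ : CharGroup X) (x : X) : ((dualRep G X g - 1) ^ j) χ x =
      χ (((DistribMulAction.toAddMonoidEnd G X g - 1) ^ j) x) := by
    induction j generalizing χ with
    | zero => rfl
    | succ j ih =>
      rw [pow_succ, pow_succ', Module.End.mul_apply, ih]
      exact (dualRep_sub_apply g χ _).trans (map_sub χ _ _).symm
  refine ⟨k, LinearMap.ext fun χ ↦ DFunLike.ext _ _ fun x ↦ ?_⟩
  rw [hpow, hk]
  exact map_zero χ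

end DualRep

section Annihilator

variable {X : Type*} [AddCommGroup X] [TopologicalSpace X]

/-- The common kernel of the characters in `D`. -/
def annihilator (D : Submodule ℤ (CharGroup X)) : AddSubgroup X :=
  ⨅ χ ∈ D, (χ : X →+ UnitAddCircle).ker

lemma mem_annihilator {D : Submodule ℤ (CharGroup X)} {x : X} :
    x ∈ annihilator D ↔ ∀ χ ∈ D, χ x = 0 := by
  simp [annihilator, AddSubgroup.mem_iInf, AddMonoidHom.mem_ker]

lemma isClosed_annihilator (D : Submodule ℤ (CharGroup X)) :
    IsClosed (annihilator D : Set X) := by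
  simp only [annihilator, AddSubgroup.coe_iInf]
  exact isClosed_biInter fun χ _ ↦ isClosed_singleton.preimage χ.continuous_toFun

open scoped Pointwise in
lemma mem_vadd_annihilator {D : Submodule ℤ (CharGroup X)} {b x : X} :
    x ∈ b +ᵥ (annihilator D : Set X) ↔ ∀ χ ∈ D, χ x = χ b := by
  simp only [mem_leftAddCoset_iff, SetLike.mem_coe, mem_annihilator, map_add, map_neg,
    neg_add_eq_zero]
  exact forall₂_congr fun _ _ ↦ eq_comm

open scoped Pointwise in
lemma preimage_vadd_annihilator (D : Submodule ℤ (CharGroup X)) (b : X) :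
    (fun x ↦ x +ᵥ (annihilator D : Set X)) ⁻¹' {b +ᵥ (annihilator D : Set X)} =
      b +ᵥ (annihilator D : Set X) := by
  ext x
  rw [Set.mem_preimage, Set.mem_singleton_iff, eq_comm, leftAddCoset_eq_iff,
    mem_leftAddCoset_iff, SetLike.mem_coe]

end Annihilator

section Torus

variable {ι : Type*}

/-- The `i`-th coordinate of the torus. -/
def proj (i : ι) : CharGroup (UnitAddTorus ι) :=
  ⟨Pi.evalAddMonoidHom _ i, continuous_apply i⟩

lemma closure_range_proj : AddSubgroup.closure (Set.range (proj (ι := ι))) = ⊤ :=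
  eq_top_of_separating fun _ hx ↦ funext fun i ↦
    hx (proj i) (AddSubgroup.subset_closure ⟨i, rfl⟩)

instance [Finite ι] : Module.Finite ℤ (CharGroup (UnitAddTorus ι)) :=
  Module.Finite.iff_addGroup_fg.2
    ⟨(Set.finite_range proj).toFinset, by simpa using closure_range_proj⟩

lemma isConnected_annihilator [Finite ι] (D : Submodule ℤ (CharGroup (UnitAddTorus ι)))
    [Module.IsTorsionFree ℤ (CharGroup (UnitAddTorus ι) ⧸ D)] :
    IsConnected (annihilator D : Set (UnitAddTorus ι)) := by
  obtain ⟨p, hp, hpD⟩ := exists_linearMap_eq_zero_and_sub_mem D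
  let Φ (x : UnitAddTorus ι) : UnitAddTorus ι := fun i ↦ p (proj i) x
  have hΦ (χ : CharGroup (UnitAddTorus ι)) (x : UnitAddTorus ι) : χ (Φ x) = p χ x := by
    have heq : eval (Φ x) = (eval x).comp p.toAddMonoidHom := by
      refine AddMonoidHom.eq_of_eqOn_dense closure_range_proj ?_
      rintro _ ⟨i, rfl⟩
      rfl
    exact DFunLike.congr_fun heq χ
  have hrange : (annihilator D : Set (UnitAddTorus ι)) = Set.range Φ := by
    ext x
    rw [SetLike.mem_coe, mem_annihilator]
    constructor
    · refine fun hx ↦ ⟨x, funext fun i ↦ sub_eq_zero.1 ?_⟩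
      exact hx _ (hpD (proj i))
    · rintro ⟨y, rfl⟩ χ hχ
      rw [hΦ, hp χ hχ]
      rfl
  rw [hrange]
  exact isConnected_range (continuous_pi fun i ↦ (p (proj i)).continuous_toFun)

end Torus

end CharGroup

/-! ### Vanishing of Fourier coefficients -/

lemma eq_zero_of_orthonormal_of_inner_eq {𝕜 V ι : Type*} [RCLike 𝕜] [NormedAddCommGroup V]
    [InnerProductSpace 𝕜 V] [Infinite ι] {f : ι → V} (hf : Orthonormal 𝕜 f) {v : V} {c : 𝕜}
    (hc : ∀ i, inner 𝕜 (f i) v = c) : c = 0 := by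
  have hsum : Summable fun _ : ι ↦ ‖c‖ ^ 2 := by
    simpa only [hc] using hf.inner_products_summable (x := v)
  simpa using (summable_const_iff _).1 hsum

lemma setIntegral_comp_smul {G X E : Type*} [Group G] [MulAction G X] [MeasurableSpace X]
    [MeasurableConstSMul G X] [NormedAddCommGroup E] [NormedSpace ℝ E] {μ : Measure X}
    [SMulInvariantMeasure G X μ] {g : G} {s : Set X} (hs : (g • ·) ⁻¹' s =ᵐ[μ] s) (f : X → E) :
    ∫ x in s, f (g • x) ∂μ = ∫ x in s, f x ∂μ := by
  rw [← setIntegral_congr_set hs]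
  exact (measurePreserving_smul g μ).setIntegral_preimage_emb (measurableEmbedding_const_smul g) f s

namespace CharGroup

section Vanishing

variable {G X : Type*} [CommGroup G] [AddCommGroup X] [TopologicalSpace X] [MeasurableSpace X]
  [BorelSpace X] [DistribMulAction G X] [ContinuousConstSMul G X] {μ : Measure X}

lemma setIntegral_fourier_dualRep [SMulInvariantMeasure G X μ] {g : G} {s : Set X}
    (hs : (g • ·) ⁻¹' s =ᵐ[μ] s) (χ : CharGroup X) :
    ∫ x in s, fourier (dualRep G X g χ) x ∂μ = ∫ x in s, fourier χ x ∂μ :=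
  setIntegral_comp_smul hs (fourier χ)

variable [CompactSpace X]

lemma inner_toLp_fourier [IsFiniteMeasure μ] (χ ψ : CharGroup X) :
    inner ℂ (ContinuousMap.toLp 2 μ ℂ (fourier χ)) (ContinuousMap.toLp 2 μ ℂ (fourier ψ)) =
      ∫ x, fourier (ψ - χ) x ∂μ := by
  rw [ContinuousMap.inner_toLp, sub_eq_add_neg, fourier_add, fourier_neg]
  rfl

variable [SMulInvariantMeasure G X μ] [IsProbabilityMeasure μ]

lemma orthonormal_toLp_fourier {χ : CharGroup X} {g : G}
    (hχ : ∀ n : ℕ, n ≠ 0 → ∫ x, fourier (dualRep G X (g ^ n) χ - χ) x ∂μ = 0) :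
    Orthonormal ℂ fun n : ℕ ↦ ContinuousMap.toLp 2 μ ℂ (fourier (dualRep G X (g ^ n) χ)) := by
  have hlt {m n : ℕ} (hmn : m < n) : inner ℂ
      (ContinuousMap.toLp 2 μ ℂ (fourier (dualRep G X (g ^ m) χ)))
      (ContinuousMap.toLp 2 μ ℂ (fourier (dualRep G X (g ^ n) χ))) = 0 := by
    obtain ⟨k, rfl⟩ := Nat.exists_eq_add_of_lt hmn
    have hsub : dualRep G X (g ^ (m + k + 1)) χ - dualRep G X (g ^ m) χ =
        dualRep G X (g ^ m) (dualRep G X (g ^ (k + 1)) χ - χ) := by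
      rw [map_sub, add_assoc, pow_add, map_mul, Module.End.mul_apply]
    rw [inner_toLp_fourier, hsub, ← hχ (k + 1) k.succ_ne_zero, ← setIntegral_univ,
      setIntegral_fourier_dualRep Filter.EventuallyEq.rfl, setIntegral_univ]
  refine orthonormal_iff_ite.2 fun m n ↦ ?_
  rcases lt_trichotomy m n with hmn | rfl | hmn
  · rw [hlt hmn, if_neg hmn.ne]
  · rw [inner_toLp_fourier, sub_self, fourier_zero, if_pos rfl]
    simp
  · rw [inner_eq_zero_symm.1 (hlt hmn), if_neg hmn.ne']

-- van der Corput's trick: the orthonormal functions `fourier (g ^ n • χ)` all have the same inner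
-- product with the indicator of a `g`-invariant set.
lemma setIntegral_fourier_eq_zero_of_orthogonal {χ : CharGroup X} {g : G}
    (hχ : ∀ n : ℕ, n ≠ 0 → ∫ x, fourier (dualRep G X (g ^ n) χ - χ) x ∂μ = 0) {s : Set X}
    (hs : MeasurableSet s) (hgs : (g • ·) ⁻¹' s =ᵐ[μ] s) : ∫ x in s, fourier χ x ∂μ = 0 := by
  have hpow (n : ℕ) :
      ∫ x in s, fourier (dualRep G X (g ^ n) χ) x ∂μ = ∫ x in s, fourier χ x ∂μ := by
    induction n with
    | zero => simp
    | succ n ih =>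
      rw [pow_succ', map_mul, Module.End.mul_apply, setIntegral_fourier_dualRep hgs, ih]
  let v : Lp ℂ 2 μ := indicatorConstLp 2 hs (measure_ne_top μ s) 1
  refine (map_eq_zero (starRingEnd ℂ)).1 <|
    eq_zero_of_orthonormal_of_inner_eq (orthonormal_toLp_fourier hχ) (v := v) fun n ↦ ?_
  rw [← inner_conj_symm, L2.inner_indicatorConstLp_one, ← hpow n]
  congr 1
  exact integral_congr_ae (ae_restrict_of_ae (ContinuousMap.coeFn_toLp μ _))

theorem setIntegral_fourier_eq_zero [Module.Finite ℤ (CharGroup X)]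
    (hG : ∀ g, IsNilpotent (dualRep G X g - 1)) {D : Submodule ℤ (CharGroup X)}
    [Module.IsTorsionFree ℤ (CharGroup X ⧸ D)] (hD : ∀ g, D ≤ D.comap (dualRep G X g))
    (hconst : ∀ χ ∈ D, ∃ c, χ =ᵐ[μ] fun _ ↦ c)
    (hmem : ∀ χ, (∀ g, dualRep G X g χ - χ ∈ D) → (∀ g, dualRep G X g χ =ᵐ[μ] χ) → χ ∈ D)
    (χ : CharGroup X) (hχ : χ ∉ D) {s : Set X} (hs : MeasurableSet s)
    (hGs : ∀ g : G, (g • ·) ⁻¹' s =ᵐ[μ] s) : ∫ x in s, fourier χ x ∂μ = 0 := by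
  induction χ using induction_of_commuting_unipotent hG generalizing s with
  | step χ ih =>
  by_cases hinv : ∀ g, dualRep G X g χ - χ ∈ D
  · obtain ⟨g, hg⟩ : ∃ g, ¬ dualRep G X g χ =ᵐ[μ] χ := by
      by_contra! h
      exact hχ (hmem χ hinv h)
    obtain ⟨c, hc⟩ := hconst _ (hinv g)
    have hphase : ∫ x in s, fourier χ x ∂μ = c.toCircle * ∫ x in s, fourier χ x ∂μ := by
      rw [← integral_const_mul, ← setIntegral_fourier_dualRep (hGs g)]
      refine integral_congr_ae (ae_restrict_of_ae (hc.mono fun x hx ↦ ?_))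
      calc fourier (dualRep G X g χ) x
        _ = fourier (dualRep G X g χ - χ) x * fourier χ x := by
          rw [← ContinuousMap.mul_apply, ← fourier_add, sub_add_cancel]
        _ = c.toCircle * fourier χ x := by rw [fourier_apply (dualRep G X g χ - χ), hx]
    by_contra hne
    have hc0 : c = 0 := by
      refine AddCircle.injective_toCircle one_ne_zero (Circle.coe_inj.1 ?_)
      rw [AddCircle.toCircle_zero, Circle.coe_one]
      exact (mul_eq_right₀ hne).1 hphase.symm
    exact hg (hc.mono fun x hx ↦ sub_eq_zero.1 (hx.trans hc0))
  · push Not at hinv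
    obtain ⟨g, hg⟩ := hinv
    refine setIntegral_fourier_eq_zero_of_orthogonal (fun n hn ↦ ?_) hs (hGs g)
    have hgn : dualRep G X (g ^ n) χ - χ ∉ D := fun h ↦ hg <|
      apply_sub_mem_of_pow_apply_sub_mem (hG g) (hD g) hn (by rwa [← map_pow])
    rw [← setIntegral_univ]
    exact ih (g ^ n) (fun h ↦ hgn (by rw [h, sub_self]; exact D.zero_mem)) hgn .univ
      fun _ ↦ Filter.EventuallyEq.rfl

end Vanishing

/-! ### The finite-valued characters and the ergodic components -/

open scoped Pointwise ProbabilityTheory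

open scoped Pointwise ProbabilityTheory

section FiniteValued

variable {X : Type*} [AddCommGroup X] [TopologicalSpace X] [MeasurableSpace X]

/-- The characters that take, `ν`-almost everywhere, only finitely many values. -/
def finiteValued (ν : Measure X) : Submodule ℤ (CharGroup X) where
  carrier := {χ | AEFiniteRange χ ν}
  zero_mem' := .const 0
  add_mem' hχ hψ := hχ.map₂ hψ (· + ·)
  smul_mem' n χ hχ := by
    simpa only [Set.mem_ofPred_eq, funext (zsmul_apply n χ)] using hχ.map (n • ·)

lemma mem_finiteValued {ν : Measure X} {χ : CharGroup X} :
    χ ∈ finiteValued ν ↔ AEFiniteRange χ ν := Iff.rfl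

lemma finite_zsmul_fiber {n : ℤ} (hn : n ≠ 0) (c : UnitAddCircle) :
    ((n • ·) ⁻¹' {c}).Finite := by
  rcases ((n • ·) ⁻¹' {c}).eq_empty_or_nonempty with hempty | ⟨u₀, hu₀⟩
  · exact hempty ▸ Set.finite_empty
  have htorsion : {u : UnitAddCircle | n • u = 0}.Finite :=
    AddCircle.finite_torsion_of_isSMulRegular_int 1 n <|
      .of_right_eq_zero_of_smul fun _ ↦ by simp [hn]
  refine (htorsion.image (u₀ + ·)).subset fun u hu ↦ ⟨u - u₀, ?_, add_sub_cancel u₀ u⟩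
  rw [Set.mem_ofPred_eq, zsmul_sub, show n • u = n • u₀ from hu.trans hu₀.symm, sub_self]

instance (ν : Measure X) : Module.IsTorsionFree ℤ (CharGroup X ⧸ finiteValued ν) := by
  refine .of_smul_eq_zero fun n χ h ↦ or_iff_not_imp_left.2 fun hn ↦ ?_
  induction χ using Submodule.Quotient.induction_on with
  | H χ =>
    rw [← Submodule.Quotient.mk_smul, Submodule.Quotient.mk_eq_zero] at h
    rw [Submodule.Quotient.mk_eq_zero]
    rw [mem_finiteValued, funext (zsmul_apply n χ)] at h
    exact h.of_map (φ := (n • ·)) (finite_zsmul_fiber hn)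

variable {G : Type*} [CommGroup G] [DistribMulAction G X] [ContinuousConstSMul G X] [BorelSpace X]

lemma finiteValued_le_comap_dualRep (ν : Measure X) [SMulInvariantMeasure G X ν] (g : G) :
    finiteValued ν ≤ (finiteValued ν).comap (dualRep G X g) := fun _ hχ ↦
  hχ.comp_quasiMeasurePreserving (measurePreserving_smul g ν).quasiMeasurePreserving

lemma mem_finiteValued_of_dualRep_sub_mem {ν : Measure X} [IsFiniteMeasure ν] [ErgodicSMul G X ν]
    {Λ : Subgroup G} [Λ.FiniteIndex] {A : Set X} (hA : MeasurableSet A) (hA0 : ν A ≠ 0)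
    (hΛ : ∀ g ∈ Λ, (g • ·) ⁻¹' A =ᵐ[ν] A) {χ : CharGroup X}
    (hχΛ : ∀ g ∈ Λ, ∀ᵐ x ∂ν, x ∈ A → χ (g • x) = χ x)
    (hχ : ∀ g : G, dualRep G X g χ - χ ∈ finiteValued ν) : χ ∈ finiteValued ν :=
  .of_smul_sub hA hA0 hΛ χ.continuous_toFun.measurable hχΛ fun g ↦ by
    simpa only [mem_finiteValued, funext (dualRep_sub_apply g χ)] using hχ g

end FiniteValued

section Measure

variable {X : Type*} [AddCommGroup X] [TopologicalSpace X] [CompactSpace X] [MeasurableSpace X]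
  [BorelSpace X] [HasOuterApproxClosed X] {μ : Measure X} [IsProbabilityMeasure μ]

lemma measure_eq_zero_or_measure_compl_eq_zero
    (hX : ∀ x : X, (∀ χ : CharGroup X, χ x = 0) → x = 0) {s : Set X} (hs : MeasurableSet s)
    (h : ∀ χ : CharGroup X, (∃ c, χ =ᵐ[μ] fun _ ↦ c) ∨
      ∫ x, fourier χ x ∂μ = 0 ∧ ∫ x in s, fourier χ x ∂μ = 0) : μ s = 0 ∨ μ sᶜ = 0 := by
  have : IsFiniteMeasure (μ s • μ) := ⟨by simp [measure_lt_top]⟩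
  have hrestrict : μ.restrict s = μ s • μ := by
    refine measure_ext hX fun χ ↦ ?_
    rcases h χ with ⟨c, hc⟩ | ⟨h1, h2⟩
    · have hc' : fourier χ =ᵐ[μ] fun _ ↦ (c.toCircle : ℂ) :=
        hc.mono fun x hx ↦ by rw [fourier_apply, hx]
      rw [integral_smul_measure, integral_congr_ae hc', integral_congr_ae (ae_restrict_of_ae hc')]
      simp [Measure.real]
    · rw [h2, integral_smul_measure, h1, smul_zero]
  have hcompl : μ s * μ sᶜ = 0 := by
    simpa [Measure.restrict_apply hs.compl] using (congrArg (· sᶜ) hrestrict).symm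
  exact mul_eq_zero.1 hcompl

lemma map_add_left_eq_self [IsTopologicalAddGroup X]
    (hX : ∀ x : X, (∀ χ : CharGroup X, χ x = 0) → x = 0) {t : X}
    (h : ∀ χ : CharGroup X, χ t = 0 ∨ ∫ x, fourier χ x ∂μ = 0) : μ.map (t + ·) = μ := by
  have hmeas : AEMeasurable (t + ·) μ := (continuous_const_add t).aemeasurable
  have := Measure.isProbabilityMeasure_map hmeas
  refine measure_ext hX fun χ ↦ ?_
  rw [integral_map hmeas (fourier χ).continuous.aestronglyMeasurable]
  simp only [fourier_map_add, integral_const_mul]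
  rcases h χ with h | h
  · rw [fourier_eq_one_iff.2 h, one_mul]
  · rw [h, mul_zero]

end Measure

section Atoms

variable {G X : Type*} [CommGroup G] [AddCommGroup X] [TopologicalSpace X] [DistribMulAction G X]
  [ContinuousConstSMul G X]

lemma smul_vadd_annihilator {D : Submodule ℤ (CharGroup X)}
    (hD : ∀ g : G, D ≤ D.comap (dualRep G X g)) (g : G) (b : X) :
    g • (b +ᵥ (annihilator D : Set X)) = (g • b) +ᵥ (annihilator D : Set X) := by
  ext x
  rw [Set.mem_smul_set_iff_inv_smul_mem, mem_vadd_annihilator, mem_vadd_annihilator]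
  refine ⟨fun h χ hχ ↦ ?_, fun h χ hχ ↦ ?_⟩
  · simpa [dualRep_apply] using h _ (hD g hχ)
  · simpa [dualRep_apply] using h _ (hD g⁻¹ hχ)

variable [MeasurableSpace X]

lemma aeFiniteRange_vadd_annihilator [Module.Finite ℤ (CharGroup X)] (ν : Measure X) :
    AEFiniteRange (fun x ↦ x +ᵥ (annihilator (finiteValued ν) : Set X)) ν := by
  obtain ⟨t, ht⟩ := IsNoetherian.noetherian (finiteValued ν)
  have hpi : AEFiniteRange (fun x (χ : t) ↦ χ.1 x) ν :=
    .pi fun χ ↦ mem_finiteValued.1 (ht ▸ Submodule.subset_span χ.2)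
  refine hpi.of_factorsThrough fun x y hxy ↦ (leftAddCoset_eq_iff _).2 ?_
  have hle : Submodule.span ℤ t ≤ LinearMap.ker (eval (-x + y)).toIntLinearMap := by
    refine Submodule.span_le.2 fun χ hχ ↦ ?_
    have hxyχ : χ x = χ y := congrFun hxy ⟨χ, hχ⟩
    change χ (-x + y) = 0
    rw [map_add, map_neg, hxyχ, neg_add_cancel]
  exact mem_annihilator.2 fun χ hχ ↦ hle (ht ▸ hχ)

variable [BorelSpace X]

variable (G) in
/-- The cosets of positive measure of the common kernel of the finite-valued characters, as an
invariant collection of subsets of `X`. -/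
def atoms (ν : Measure X) [SMulInvariantMeasure G X ν] : SubMulAction G (Set X) where
  carrier := {A | 0 < ν A ∧ ∃ b : X, A = b +ᵥ (annihilator (finiteValued ν) : Set X)}
  smul_mem' g := by
    rintro _ ⟨hpos, b, rfl⟩
    exact ⟨by rwa [measure_smul], g • b,
      smul_vadd_annihilator (finiteValued_le_comap_dualRep ν) g b⟩

variable {ν : Measure X} [SMulInvariantMeasure G X ν]

instance [Module.Finite ℤ (CharGroup X)] : Finite (atoms G ν) := by
  refine ((aeFiniteRange_vadd_annihilator ν).finite_setOf_measure_fiber_pos.subset ?_).to_subtype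
  rintro _ ⟨hpos, b, rfl⟩
  rwa [Set.mem_ofPred_eq, preimage_vadd_annihilator]

variable (G ν) in
lemma ae_exists_mem_atoms [Module.Finite ℤ (CharGroup X)] : ∀ᵐ x ∂ν, ∃ A ∈ atoms G ν, x ∈ A := by
  filter_upwards [(aeFiniteRange_vadd_annihilator ν).ae_measure_fiber_pos] with x hx
  rw [preimage_vadd_annihilator] at hx
  exact ⟨_, ⟨hx, x, rfl⟩, mem_own_leftAddCoset (annihilator _).toAddSubmonoid x⟩

lemma disjoint_of_mem_atoms {A B : Set X} (hA : A ∈ atoms G ν) (hB : B ∈ atoms G ν) (hAB : A ≠ B) :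
    Disjoint A B := by
  obtain ⟨-, a, rfl⟩ := hA
  obtain ⟨-, b, rfl⟩ := hB
  refine Set.disjoint_left.2 fun x hxa hxb ↦ hAB ?_
  rw [← preimage_vadd_annihilator] at hxa hxb
  exact hxa.symm.trans hxb

lemma measurableSet_of_mem_atoms [IsTopologicalAddGroup X] {A : Set X} (hA : A ∈ atoms G ν) :
    MeasurableSet A := by
  obtain ⟨-, b, rfl⟩ := hA
  exact ((isClosed_annihilator _).vadd b).measurableSet

end Atoms

section Components

variable {G X : Type*} [CommGroup G] [AddCommGroup X] [TopologicalSpace X] [MeasurableSpace X]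
  [BorelSpace X] [DistribMulAction G X] [ContinuousConstSMul G X] {ν : Measure X} {A : Set X}

lemma toPermHom_ker_le_stabilizer [SMulInvariantMeasure G X ν] (hA : A ∈ atoms G ν) :
    (MulAction.toPermHom G (atoms G ν)).ker ≤ MulAction.stabilizer G A := fun g hg ↦ by
  have hgA : g • (⟨A, hA⟩ : atoms G ν) = ⟨A, hA⟩ := DFunLike.congr_fun (MonoidHom.mem_ker.1 hg) _
  exact congrArg Subtype.val hgA

variable [IsTopologicalAddGroup X]

lemma exists_ae_cond_eq_const [SMulInvariantMeasure G X ν] (hA : A ∈ atoms G ν)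
    {χ : CharGroup X} (hχ : χ ∈ finiteValued ν) : ∃ c, χ =ᵐ[ν[|A]] fun _ ↦ c := by
  have hAm := measurableSet_of_mem_atoms hA
  obtain ⟨-, b, rfl⟩ := hA
  exact ⟨χ b, (ProbabilityTheory.ae_cond_mem hAm).mono fun x hx ↦ mem_vadd_annihilator.1 hx χ hχ⟩

variable [CompactSpace X] [Module.Finite ℤ (CharGroup X)] [IsFiniteMeasure ν] [ErgodicSMul G X ν]

theorem setIntegral_cond_fourier_eq_zero (hG : ∀ g, IsNilpotent (dualRep G X g - 1))
    (hA : A ∈ atoms G ν) {Λ : Subgroup G} [Λ.FiniteIndex] (hΛA : Λ ≤ MulAction.stabilizer G A)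
    {χ : CharGroup X} (hχ : χ ∉ finiteValued ν) {s : Set X} (hs : MeasurableSet s)
    (hΛs : ∀ g : Λ, (g • ·) ⁻¹' s =ᵐ[ν] s) : ∫ x in s, fourier χ x ∂ν[|A] = 0 := by
  have hAm := measurableSet_of_mem_atoms hA
  have hpre (g : Λ) : (g • ·) ⁻¹' A = A := preimage_smul_eq_self (hΛA g.2)
  have : ContinuousConstSMul Λ X := ⟨fun g ↦ continuous_const_smul g.1⟩
  have := ProbabilityTheory.cond_isProbabilityMeasure hA.1.ne'
  have := smulInvariantMeasure_cond (ν := ν) hAm hpre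
  refine setIntegral_fourier_eq_zero (G := Λ) (fun g ↦ hG g)
    (fun g ↦ finiteValued_le_comap_dualRep ν g.1)
    (fun χ ↦ exists_ae_cond_eq_const hA) (fun χ hχD hχΛ ↦ ?_) χ hχ hs
    fun g ↦ ProbabilityTheory.cond_absolutelyContinuous.ae_eq (hΛs g)
  refine mem_finiteValued_of_dualRep_sub_mem (Λ := Λ) hAm hA.1.ne'
    (fun g hg ↦ .of_eq (hpre ⟨g, hg⟩)) (fun g hg ↦ (ae_cond_iff hAm).1 (hχΛ ⟨g, hg⟩)) fun g ↦ ?_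
  refine apply_sub_mem_of_pow_apply_sub_mem (hG g) (finiteValued_le_comap_dualRep ν g)
    Λ.index_ne_zero_of_finite ?_
  rw [← map_pow]
  exact hχD ⟨g ^ Λ.index, Λ.pow_index_mem g⟩

variable [HasOuterApproxClosed X]

lemma measure_inter_eq_zero_or_measure_diff_eq_zero
    (hX : ∀ x : X, (∀ χ : CharGroup X, χ x = 0) → x = 0)
    (hG : ∀ g, IsNilpotent (dualRep G X g - 1)) (hA : A ∈ atoms G ν) {Λ : Subgroup G}
    [Λ.FiniteIndex] (hΛA : Λ ≤ MulAction.stabilizer G A) {s : Set X} (hs : MeasurableSet s)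
    (hΛs : ∀ g : Λ, (g • ·) ⁻¹' s =ᵐ[ν] s) : ν (A ∩ s) = 0 ∨ ν (A \ s) = 0 := by
  have hAm := measurableSet_of_mem_atoms hA
  have := ProbabilityTheory.cond_isProbabilityMeasure hA.1.ne'
  have hcond (t : Set X) : ν[|A] t = 0 → ν (A ∩ t) = 0 := by
    simp [ProbabilityTheory.cond_apply hAm]
  refine (measure_eq_zero_or_measure_compl_eq_zero hX hs fun χ ↦ ?_).imp (hcond s) (hcond sᶜ)
  by_cases hχ : χ ∈ finiteValued ν
  · exact .inl (exists_ae_cond_eq_const hA hχ)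
  · refine .inr ⟨?_, setIntegral_cond_fourier_eq_zero hG hA hΛA hχ hs hΛs⟩
    rw [← setIntegral_univ]
    exact setIntegral_cond_fourier_eq_zero hG hA hΛA hχ .univ fun _ ↦ .rfl

lemma map_add_left_cond_eq_self (hX : ∀ x : X, (∀ χ : CharGroup X, χ x = 0) → x = 0)
    (hG : ∀ g, IsNilpotent (dualRep G X g - 1)) (hA : A ∈ atoms G ν) {t : X}
    (ht : t ∈ annihilator (finiteValued ν)) : (ν[|A]).map (t + ·) = ν[|A] := by
  have := ProbabilityTheory.cond_isProbabilityMeasure hA.1.ne'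
  refine map_add_left_eq_self hX fun χ ↦ or_iff_not_imp_left.2 fun hχt ↦ ?_
  have hχ : χ ∉ finiteValued ν := fun hχ ↦ hχt (mem_annihilator.1 ht χ hχ)
  rw [← setIntegral_univ]
  exact setIntegral_cond_fourier_eq_zero hG hA (toPermHom_ker_le_stabilizer hA) hχ .univ
    fun _ ↦ .rfl

theorem isErgodicDecomposition_atoms (hX : ∀ x : X, (∀ χ : CharGroup X, χ x = 0) → x = 0)
    (hG : ∀ g, IsNilpotent (dualRep G X g - 1)) :
    IsErgodicDecomposition (MulAction.toPermHom G (atoms G ν)).ker ν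
      (Subtype.val : atoms G ν → Set X) where
  measurableSet A := measurableSet_of_mem_atoms A.2
  measure_pos A := A.2.1
  pairwise_aedisjoint A B hAB :=
    (disjoint_of_mem_atoms A.2 B.2 (Subtype.coe_ne_coe.2 hAB)).aedisjoint
  ae_exists_mem := by simpa using ae_exists_mem_atoms G ν
  preimage_smul_ae_eq A g := .of_eq (preimage_smul_eq_self (toPermHom_ker_le_stabilizer A.2 g.2))
  measure_eq_zero_or A _ hs hΓs := measure_inter_eq_zero_or_measure_diff_eq_zero hX hG A.2
    (toPermHom_ker_le_stabilizer A.2) hs hΓs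

end Components

end CharGroup

open scoped Pointwise ProbabilityTheory in
theorem ergodic_components_of_unipotent_toral_action_general {G ι : Type*} [CommGroup G] [Finite ι]
    [DistribMulAction G (UnitAddTorus ι)] [ContinuousConstSMul G (UnitAddTorus ι)]
    (hG : ∀ g : G, IsNilpotent (DistribMulAction.toAddMonoidEnd G (UnitAddTorus ι) g - 1))
    (ν : Measure (UnitAddTorus ι)) [IsFiniteMeasure ν] [ErgodicSMul G (UnitAddTorus ι) ν] :
    ∃ Λ : Subgroup G, Λ.FiniteIndex ∧ ∃ (n : ℕ) (Xs : Fin n → Set (UnitAddTorus ι)),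
      IsErgodicDecomposition Λ ν Xs ∧ ∀ i, ∃ (x : UnitAddTorus ι)
        (S : AddSubgroup (UnitAddTorus ι)), IsClosed (S : Set (UnitAddTorus ι)) ∧
          IsConnected (S : Set (UnitAddTorus ι)) ∧ ν[|Xs i] (x +ᵥ (S : Set (UnitAddTorus ι))) = 1 ∧
          ∀ t ∈ S, (ν[|Xs i]).map (t + ·) = ν[|Xs i] := by
  have := Fintype.ofFinite ι
  have hsep (x : UnitAddTorus ι) (hx : ∀ χ : CharGroup (UnitAddTorus ι), χ x = 0) : x = 0 :=
    funext fun i ↦ hx (.proj i)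
  have hdual (g : G) := CharGroup.isNilpotent_dualRep_sub_one (hG g)
  obtain ⟨n, ⟨e⟩⟩ := Finite.exists_equiv_fin (CharGroup.atoms G ν)
  refine ⟨(MulAction.toPermHom G (CharGroup.atoms G ν)).ker, Subgroup.finiteIndex_ker _, n, _,
    (CharGroup.isErgodicDecomposition_atoms hsep hdual).comp_equiv e.symm, fun i ↦ ?_⟩
  obtain ⟨hpos, x, hx⟩ := (e.symm i).2
  refine ⟨x, CharGroup.annihilator (CharGroup.finiteValued ν), CharGroup.isClosed_annihilator _,
    CharGroup.isConnected_annihilator _, ?_,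
    fun t ht ↦ CharGroup.map_add_left_cond_eq_self hsep hdual (e.symm i).2 ht⟩
  exact hx ▸ ProbabilityTheory.cond_apply_self hpos.ne' (measure_ne_top ν _)

/-- **Proposition 4.1.** Let `α` be a unipotent action of `ℤ²` by continuous
automorphisms on a finite-dimensional torus `T = (ℝ/ℤ)^d`, and let `ν` be an ergodic
`α`-invariant Borel probability measure. Then there is a finite index subgroup
`Λ ⊆ ℤ²` such that each `Λ`-ergodic component of `ν` is the (normalized) Haar measure
on a translate `x + S` of a subtorus `S` (a closed connected subgroup); here the Haar
measure on `x + S` is characterized as the probability measure giving full mass to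
`x + S` and invariant under translation by every element of `S`. -/
theorem ergodic_components_of_unipotent_toral_action
    (d : ℕ)
    (α : ℤ × ℤ → ((Fin d → AddCircle (1 : ℝ)) ≃+ (Fin d → AddCircle (1 : ℝ))))
    (hα0 : α 0 = AddEquiv.refl _)
    (hαadd : ∀ g h : ℤ × ℤ, α (g + h) = (α h).trans (α g))
    (hcont : ∀ g, Continuous (α g))
    (huni : ∀ g : ℤ × ℤ, ∃ k : ℕ, 1 ≤ k ∧
      ((show AddMonoid.End (Fin d → AddCircle (1 : ℝ)) from (α g).toAddMonoidHom)
        - 1) ^ k = 0)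
    (ν : Measure (Fin d → AddCircle (1 : ℝ))) [IsProbabilityMeasure ν]
    (hinv : ∀ g, MeasurePreserving (α g) ν ν)
    (herg : ∀ S : Set (Fin d → AddCircle (1 : ℝ)), MeasurableSet S →
      (∀ g : ℤ × ℤ, (α g) ⁻¹' S =ᵐ[ν] S) → ν S = 0 ∨ ν S = 1) :
    ∃ Λ : AddSubgroup (ℤ × ℤ), Λ.FiniteIndex ∧
      ∃ (n : ℕ) (Xs : Fin n → Set (Fin d → AddCircle (1 : ℝ))),
        IsErgodicComponents ν (fun g => ⇑(α g)) Λ Xs ∧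
        ∀ i, ∃ (x : Fin d → AddCircle (1 : ℝ))
            (S : AddSubgroup (Fin d → AddCircle (1 : ℝ))),
          IsClosed (S : Set (Fin d → AddCircle (1 : ℝ))) ∧
          IsConnected (S : Set (Fin d → AddCircle (1 : ℝ))) ∧
          (((ν (Xs i))⁻¹ • ν.restrict (Xs i))
              ((fun y => x + y) '' (S : Set (Fin d → AddCircle (1 : ℝ)))) = 1) ∧
          ∀ s ∈ S, Measure.map (fun y => s + y) ((ν (Xs i))⁻¹ • ν.restrict (Xs i))
            = (ν (Xs i))⁻¹ • ν.restrict (Xs i) := by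
  let ρ : Multiplicative (ℤ × ℤ) →* AddMonoid.End (UnitAddTorus (Fin d)) :=
    { toFun := fun g ↦ (α g.toAdd).toAddMonoidHom
      map_one' := congrArg AddEquiv.toAddMonoidHom hα0
      map_mul' := fun g h ↦ congrArg AddEquiv.toAddMonoidHom (hαadd g.toAdd h.toAdd) }
  let : DistribMulAction (Multiplicative (ℤ × ℤ)) (UnitAddTorus (Fin d)) :=
    DistribMulAction.compHom _ ρ
  have : ContinuousConstSMul (Multiplicative (ℤ × ℤ)) (UnitAddTorus (Fin d)) :=
    ⟨fun g ↦ hcont g.toAdd⟩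
  have : SMulInvariantMeasure (Multiplicative (ℤ × ℤ)) (UnitAddTorus (Fin d)) ν :=
    ⟨fun g _ hs ↦ (hinv g.toAdd).measure_preimage hs.nullMeasurableSet⟩
  have : ErgodicSMul (Multiplicative (ℤ × ℤ)) (UnitAddTorus (Fin d)) ν :=
    ergodicSMul_of_measure_eq_zero_or_one herg
  obtain ⟨Λ, hΛ, n, Xs, hXs, hHaar⟩ := ergodic_components_of_unipotent_toral_action_general
    (fun g : Multiplicative (ℤ × ℤ) ↦ (huni g.toAdd).imp fun _ ↦ And.right) ν
  exact ⟨Λ.toAddSubgroup', ⟨hΛ.index_ne_zero⟩, n, Xs, hXs.isErgodicComponents, hHaar⟩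
end

section
/- Let (X, μ) be a probability space equipped with an ergodic measure-preserving ℤ²-action, and let A ⊆ X be a measurable subset such that Ann(1_A) ≠ {0}. Then there exists a finite index subgroup Λ ⊆ ℤ² such that for each Λ-ergodic component X_s ⊆ X, either X_s ∩ A is 1-periodic or μ(X_s ∩ A) = μ(X_s)/2. -/
open MeasureTheory

/-- The action of a Laurent polynomial `p = Σ c_g u^g ∈ ℤ[u₁^±, u₂^±]` on a function
`f : X → ℝ`, relative to a `ℤ²`-action `T` on `X` : `(p · f)(x) = Σ c_g f(g⁻¹ · x)`. -/
noncomputable def polyAct {X : Type*} (T : ℤ × ℤ → X → X)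
    (p : AddMonoidAlgebra ℤ (ℤ × ℤ)) (f : X → ℝ) : X → ℝ :=
  fun x => Finsupp.sum p.coeff fun g c => (c : ℝ) * f (T (-g) x)

/-!
Let `p` annihilate `1_A`. Modulo a prime `ℓ`, the power `p ^ ℓ` is the dilate of `p` by `ℓ`. As the
values involved are bounded, it follows that every dilate of `p` by an integer `≡ 1` modulo some
`N` annihilates `1_A` as well. Averaging these relations with the mean ergodic theorem writes `1_A`
as a finite sum of functions `F s`, where `F s` is invariant under a translation `v s` and the
`v s` are pairwise linearly independent.

Since `1_A` takes integer values, modulo `1` each `F s` is minus the sum of the others, hence a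
polynomial sequence along suitable orbits. By Weyl's theorem such a sequence is either periodic or
equidistributed in `ℝ / ℤ`. On an ergodic component of a small enough `Λ`, the same alternative
holds almost everywhere for each `s`. Let `Q s` be the conditional expectation of `1_A` with respect
to the `v s`-invariant sets. Along the sampled orbits `Q s - F s` is constant, so that if `F s` is
equidistributed, then so is `Q s`; a function with values in `[0, 1]` which is equidistributed
modulo `1` has mean `1 / 2`, and `Q s` has the same mean as `1_A`. If every `F s` is periodic, then
each `Q s` is constant modulo `1` on the component. Should one of them take only the values `0` and
`1`, it agrees with `1_A` there, which is therefore `v s`-invariant; otherwise all `Q s` are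
constant, and so is `1_A`.
-/

section Sequences

open Function AddSubgroup

open scoped fwdDiff

variable {G : Type*} [AddCommGroup G]

/-- `IsPolySeq m a` says that the sequence `a` is polynomial of degree less than `m`: any `m`
successive difference operators, with arbitrary steps, annihilate it. -/
def IsPolySeq : ℕ → (ℤ → G) → Prop
  | 0, a => a = 0
  | m + 1, a => ∀ h : ℤ, IsPolySeq m (Δ_[h] a)

/-- Sequences which are periodic with some nonzero period. -/
def IsPeriodicSeq {β : Type*} (a : ℤ → β) : Prop :=
  ∃ k : ℤ, k ≠ 0 ∧ Periodic a k

lemma apply_add_eq_add_fwdDiff {M : Type*} [AddCommMonoid M] (h : M) (a : M → G) (n : M) :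
    a (n + h) = a n + (Δ_[h] a) n :=
  (add_sub_cancel _ _).symm

lemma fwdDiff_comm {M : Type*} [AddCommMonoid M] (h k : M) (a : M → G) :
    Δ_[h] (Δ_[k] a) = Δ_[k] (Δ_[h] a) := by
  funext n
  simp only [fwdDiff, add_right_comm n h k]
  abel

lemma fwdDiff_eq_zero_iff_periodic {M : Type*} [AddCommMonoid M] {h : M} {a : M → G} :
    Δ_[h] a = 0 ↔ Periodic a h := by
  simp only [funext_iff, fwdDiff, Pi.zero_apply, sub_eq_zero, Periodic]

lemma periodic_fwdDiff {M : Type*} [AddCommMonoid M] {a : M → G} {k : M}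
    (ha : Periodic a k) (h : M) : Periodic (Δ_[h] a) k := by
  rw [← fwdDiff_eq_zero_iff_periodic] at ha ⊢
  rw [fwdDiff_comm, ha]
  exact fwdDiff_const h 0

lemma fwdDiff_zsmul_comp_mul (a : ℤ → G) (k t h : ℤ) :
    Δ_[h] (fun n ↦ k • a (t * n)) = fun n ↦ k • (Δ_[t * h] a) (t * n) := by
  funext n
  simp only [fwdDiff, smul_sub, mul_add]

lemma map_add_mul_of_map_add_eq {a : ℤ → G} {p : ℤ} {d : G} (h : ∀ n, a (n + p) = a n + d)
    (n j : ℤ) : a (n + j * p) = a n + j • d :=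
  AddConstMapClass.map_add_zsmul (⟨a, h⟩ : AddConstMap ℤ G p d) n j

namespace IsPeriodicSeq

lemma of_torsion_step {a : ℤ → G} {p N : ℤ} {d : G} (hp : p ≠ 0)
    (h : ∀ n, a (n + p) = a n + d) (hN : N ≠ 0) (hd : N • d = 0) : IsPeriodicSeq a :=
  ⟨N * p, mul_ne_zero hN hp, fun n ↦ by rw [map_add_mul_of_map_add_eq h, hd, add_zero]⟩

protected lemma fwdDiff {a : ℤ → G} (ha : IsPeriodicSeq a) (h : ℤ) : IsPeriodicSeq (Δ_[h] a) :=
  let ⟨k, hk, hak⟩ := ha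
  ⟨k, hk, periodic_fwdDiff hak h⟩

lemma exists_pos_nat {β : Type*} {a : ℤ → β} (ha : IsPeriodicSeq a) :
    ∃ k : ℕ, 0 < k ∧ Periodic a k := by
  obtain ⟨k, hk, hak⟩ := ha
  refine ⟨k.natAbs, Int.natAbs_pos.2 hk, ?_⟩
  rcases Int.natAbs_eq k with h | h
  · rwa [← h]
  · rw [← neg_eq_iff_eq_neg.2 h]
    exact hak.neg

lemma exists_map_add_eq {a : ℤ → G} (ha : IsPeriodicSeq (Δ_[1] a)) :
    ∃ p : ℕ, 0 < p ∧ ∃ d, ∀ n : ℤ, a (n + p) = a n + d := by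
  obtain ⟨p, hp, hap⟩ := ha.exists_pos_nat
  have hconst : Periodic (Δ_[(p : ℤ)] a) 1 := by
    rwa [← fwdDiff_eq_zero_iff_periodic, fwdDiff_comm, fwdDiff_eq_zero_iff_periodic]
  refine ⟨p, hp, Δ_[(p : ℤ)] a 0, fun n ↦ ?_⟩
  have hn : Δ_[(p : ℤ)] a n = Δ_[(p : ℤ)] a 0 := by simpa using hconst.int_mul_eq n
  rw [← hn, ← apply_add_eq_add_fwdDiff]

end IsPeriodicSeq

namespace IsPolySeq

lemma comp_add_right {m : ℕ} {a : ℤ → G} (ha : IsPolySeq m a) (s : ℤ) :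
    IsPolySeq m fun n ↦ a (n + s) := by
  induction m generalizing a with
  | zero => funext n; exact congrFun ha _
  | succ m ih =>
    intro h
    have hshift : Δ_[h] (fun n ↦ a (n + s)) = fun n ↦ (Δ_[h] a) (n + s) := by
      funext n
      simp only [fwdDiff, add_right_comm]
    exact hshift ▸ ih (ha h)

lemma zsmul_comp_mul {m : ℕ} {a : ℤ → G} (ha : IsPolySeq m a) (k t : ℤ) :
    IsPolySeq m fun n ↦ k • a (t * n) := by
  induction m generalizing a with
  | zero => funext n; simp [show a = 0 from ha]
  | succ m ih =>
    intro h
    rw [fwdDiff_zsmul_comp_mul]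
    exact ih (ha (t * h))

lemma isPeriodicSeq_of_zero {a : ℤ → G} (ha : IsPolySeq 0 a) : IsPeriodicSeq a :=
  ⟨1, one_ne_zero, fun n ↦ by simp [show a = 0 from ha]⟩

lemma isPeriodicSeq_fwdDiff_one {m : ℕ} {a : ℤ → G} (ha : IsPolySeq m a) {h : ℤ} (hh : h ≠ 0)
    (hper : IsPeriodicSeq (Δ_[h] a)) : IsPeriodicSeq (Δ_[1] a) := by
  induction m generalizing a with
  | zero => exact ha.isPeriodicSeq_of_zero.fwdDiff 1
  | succ m ih =>
    obtain ⟨p, hp, d, hd⟩ : ∃ p : ℕ, 0 < p ∧ ∃ d, ∀ n : ℤ, (Δ_[1] a) (n + p) = (Δ_[1] a) n + d := by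
      refine (ih (ha 1) ?_).exists_map_add_eq
      rw [fwdDiff_comm]
      exact hper.fwdDiff 1
    obtain ⟨q, hq, hqper⟩ := hper
    have hstep_one (n : ℤ) : (Δ_[(p : ℤ)] a) (n + 1) = (Δ_[(p : ℤ)] a) n + d := by
      have hpn : Δ_[(p : ℤ)] (Δ_[1] a) n = d := by rw [fwdDiff, hd, add_sub_cancel_left]
      rw [← hpn, fwdDiff_comm (p : ℤ), ← apply_add_eq_add_fwdDiff]
    have hstep (n : ℤ) : (Δ_[h] a) (n + p) = (Δ_[h] a) n + h • d := by
      have hpn : Δ_[h] (Δ_[(p : ℤ)] a) n = h • d := by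
        have := map_add_mul_of_map_add_eq hstep_one n h
        rw [fwdDiff, sub_eq_iff_eq_add', ← this, mul_one]
      rw [← hpn, fwdDiff_comm h, ← apply_add_eq_add_fwdDiff]
    refine IsPeriodicSeq.of_torsion_step (Nat.cast_ne_zero.2 hp.ne') hd (mul_ne_zero hq hh) ?_
    have hqp := map_add_mul_of_map_add_eq hstep 0 q
    rwa [mul_comm, ← Int.cast_id (n := p), hqper.int_mul p 0, left_eq_add, smul_smul] at hqp

lemma isPeriodicSeq_of_zsmul_comp_mul {m : ℕ} {a : ℤ → G} (ha : IsPolySeq m a) {k t : ℤ}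
    (hk : k ≠ 0) (ht : t ≠ 0) (hper : IsPeriodicSeq fun n ↦ k • a (t * n)) :
    IsPeriodicSeq a := by
  induction m generalizing a with
  | zero => exact ha.isPeriodicSeq_of_zero
  | succ m ih =>
    obtain ⟨p, hp, d, hd⟩ : ∃ p : ℕ, 0 < p ∧ ∃ d, ∀ n : ℤ, a (n + p) = a n + d := by
      refine (ha.isPeriodicSeq_fwdDiff_one ht (ih (ha t) ?_)).exists_map_add_eq
      simpa only [fwdDiff_zsmul_comp_mul, mul_one] using hper.fwdDiff 1
    obtain ⟨q, hq, hqper⟩ := hper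
    refine IsPeriodicSeq.of_torsion_step (Nat.cast_ne_zero.2 hp.ne') hd
      (mul_ne_zero hk (mul_ne_zero ht hq)) ?_
    have hprog : a (t * (p * q)) = a 0 + (t * q) • d := by
      rw [← map_add_mul_of_map_add_eq hd 0 (t * q)]
      congr 1
      ring
    have hqp : k • a (t * (p * q)) = k • a 0 := by simpa using hqper.int_mul p 0
    rwa [hprog, smul_add, add_eq_left, smul_smul] at hqp

lemma of_eq_sum {M ι : Type*} [AddCommGroup M] {V : Finset ι} {α : M → G} {αs : ι → M → G}
    {v w : M} {vs : ι → M} (hα : Periodic α v) (hαs : ∀ t ∈ V, Periodic (αs t) (vs t))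
    (hw : ∀ t ∈ V, w ∈ zmultiples v ⊔ zmultiples (vs t)) (hsum : α = ∑ t ∈ V, αs t) (g₀ : M) :
    IsPolySeq V.card fun n ↦ α (g₀ + n • w) := by
  classical
  induction V using Finset.induction_on generalizing α αs with
  | empty => funext n; simp [hsum]
  | insert t V ht ih =>
    rw [Finset.card_insert_of_notMem ht]
    intro h
    simp only [Finset.forall_mem_insert] at hαs hw
    obtain ⟨_, ⟨a, rfl⟩, _, ⟨b, rfl⟩, hab⟩ := mem_sup.1 hw.1
    have hdiff : Δ_[h • w] α = Δ_[(h * b) • vs t] α := by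
      funext g
      simp only [fwdDiff, ← hab, smul_add, smul_smul]
      rw [add_comm ((h * a) • v), ← add_assoc, hα.zsmul]
    have hdrop : Δ_[(h * b) • vs t] (αs t) = 0 :=
      fwdDiff_eq_zero_iff_periodic.2 (hαs.1.zsmul _)
    have hpoly := ih (periodic_fwdDiff hα (h • w))
      (fun s hs ↦ periodic_fwdDiff (hαs.2 s hs) ((h * b) • vs t)) hw.2
      (by rw [hdiff, hsum, fwdDiff_finsetSum, Finset.sum_insert ht, hdrop, zero_add])
    have hline : Δ_[h] (fun n : ℤ ↦ α (g₀ + n • w)) =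
        fun n : ℤ ↦ (Δ_[h • w] α) (g₀ + n • w) := by
      funext n
      simp only [fwdDiff, add_smul, add_assoc]
    exact hline ▸ hpoly

end IsPolySeq

end Sequences

section CesaroMeans

open Filter Finset Topology

open scoped fwdDiff RealInnerProductSpace

variable {E : Type*}

/-- The average of the first `N` terms of a sequence, with value `0` at `N = 0`. -/
noncomputable def cesaroMean [AddCommGroup E] [Module ℝ E] (z : ℕ → E) (N : ℕ) : E :=
  (N : ℝ)⁻¹ • ∑ n ∈ range N, z n

lemma cesaroMean_sum [AddCommGroup E] [Module ℝ E] {ι : Type*} (s : Finset ι) (z : ι → ℕ → E)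
    (N : ℕ) : cesaroMean (fun n ↦ ∑ i ∈ s, z i n) N = ∑ i ∈ s, cesaroMean (z i) N := by
  simp only [cesaroMean, smul_sum]
  exact sum_comm

lemma map_cesaroMean {F L : Type*} [AddCommGroup E] [Module ℝ E] [AddCommGroup F] [Module ℝ F]
    [FunLike L E F] [LinearMapClass L ℝ E F] (φ : L) (z : ℕ → E) (N : ℕ) :
    φ (cesaroMean z N) = cesaroMean (fun n ↦ φ (z n)) N := by
  simp only [cesaroMean, map_smul, map_sum]

lemma cesaroMean_le_of_le {z : ℕ → ℝ} {C : ℝ} (hC : 0 ≤ C) (hz : ∀ n, z n ≤ C) (N : ℕ) :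
    cesaroMean z N ≤ C := by
  rw [cesaroMean, smul_eq_mul]
  refine inv_mul_le_of_le_mul₀ N.cast_nonneg hC ?_
  simpa [mul_comm] using sum_le_card_nsmul (range N) z C fun n _ ↦ hz n

lemma norm_cesaroMean_le [SeminormedAddCommGroup E] [NormedSpace ℝ E] (z : ℕ → E) (N : ℕ) :
    ‖cesaroMean z N‖ ≤ cesaroMean (fun n ↦ ‖z n‖) N := by
  rw [cesaroMean, cesaroMean, norm_smul, norm_inv, Real.norm_natCast, smul_eq_mul]
  gcongr
  exact norm_sum_le _ _

lemma norm_sq_cesaroMean_le [SeminormedAddCommGroup E] [NormedSpace ℝ E] (z : ℕ → E) (N : ℕ) :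
    ‖cesaroMean z N‖ ^ 2 ≤ cesaroMean (fun n ↦ ‖z n‖ ^ 2) N := by
  refine (pow_le_pow_left₀ (norm_nonneg _) (norm_cesaroMean_le z N) 2).trans ?_
  rcases N.eq_zero_or_pos with rfl | hN
  · simp [cesaroMean]
  have hcs := sq_sum_le_card_mul_sum_sq (s := range N) (f := fun n ↦ ‖z n‖)
  rw [card_range] at hcs
  have hN' : (N : ℝ) ≠ 0 := Nat.cast_ne_zero.2 hN.ne'
  calc cesaroMean (fun n ↦ ‖z n‖) N ^ 2
      = ((N : ℝ)⁻¹) ^ 2 * (∑ n ∈ range N, ‖z n‖) ^ 2 := by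
        rw [cesaroMean, smul_eq_mul, mul_pow]
    _ ≤ ((N : ℝ)⁻¹) ^ 2 * (N * ∑ n ∈ range N, ‖z n‖ ^ 2) := by gcongr
    _ = cesaroMean (fun n ↦ ‖z n‖ ^ 2) N := by
        rw [cesaroMean, smul_eq_mul]
        field_simp

lemma tendsto_cesaroMean_comp_add_sub [SeminormedAddCommGroup E] [NormedSpace ℝ E] {z : ℕ → E}
    {C : ℝ} (hz : ∀ n, ‖z n‖ ≤ C) (h : ℕ) :
    Tendsto (fun N ↦ cesaroMean (fun n ↦ z (n + h)) N - cesaroMean z N) atTop (𝓝 0) := by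
  have htelescope (N : ℕ) : ∑ n ∈ range N, z (n + h) - ∑ n ∈ range N, z n =
      ∑ n ∈ range h, z (N + n) - ∑ n ∈ range h, z n := by
    have hNh := sum_range_add z N h
    have hhN := sum_range_add z h N
    rw [add_comm h N, hNh] at hhN
    simp only [add_comm _ h]
    rw [sub_eq_sub_iff_add_eq_add, add_comm, ← hhN, add_comm]
  have hbound (N : ℕ) : ‖cesaroMean (fun n ↦ z (n + h)) N - cesaroMean z N‖ ≤
      (N : ℝ)⁻¹ * (h * C + h * C) := by
    rw [cesaroMean, cesaroMean, ← smul_sub, htelescope, norm_smul, norm_inv, Real.norm_natCast]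
    gcongr
    refine (norm_sub_le _ _).trans (add_le_add ?_ ?_)
    · simpa using norm_sum_le_of_le (range h) fun n _ ↦ hz (N + n)
    · simpa using norm_sum_le_of_le (range h) fun n _ ↦ hz n
  refine squeeze_zero_norm hbound ?_
  simpa using (tendsto_inv_atTop_nhds_zero_nat (𝕜 := ℝ)).mul_const (h * C + h * C)

section VanDerCorput

variable [SeminormedAddCommGroup E] [InnerProductSpace ℝ E] {z : ℕ → E} {C : ℝ}

lemma eventually_norm_sq_cesaroMean_window_le (hz : ∀ n, ‖z n‖ ≤ C)
    (hcorr : ∀ h h' : ℕ, h ≠ h' →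
      Tendsto (cesaroMean fun n ↦ ⟪z (n + h), z (n + h')⟫) atTop (𝓝 0))
    {H : ℕ} (hH : 0 < H) :
    ∀ᶠ N in atTop,
      ‖cesaroMean (fun n ↦ ∑ h ∈ range H, z (n + h)) N‖ ^ 2 ≤ H * (C ^ 2 + 1) := by
  have hexpand (N : ℕ) : cesaroMean (fun n ↦ ‖∑ h ∈ range H, z (n + h)‖ ^ 2) N =
      ∑ h ∈ range H, cesaroMean (fun n ↦ ‖z (n + h)‖ ^ 2) N +
        ∑ h ∈ range H, ∑ h' ∈ (range H).erase h,
          cesaroMean (fun n ↦ ⟪z (n + h), z (n + h')⟫) N := by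
    simp_rw [← real_inner_self_eq_norm_sq, sum_inner, inner_sum, cesaroMean_sum,
      ← sum_add_distrib]
    exact sum_congr rfl fun h hh ↦ (add_sum_erase _ _ hh).symm
  have hdiag (N : ℕ) : ∑ h ∈ range H, cesaroMean (fun n ↦ ‖z (n + h)‖ ^ 2) N ≤ H * C ^ 2 := by
    simpa using sum_le_card_nsmul (range H) _ (C ^ 2) fun h _ ↦
      cesaroMean_le_of_le (sq_nonneg C) (fun n ↦ pow_le_pow_left₀ (norm_nonneg _) (hz (n + h)) 2) N
  have hoff : Tendsto (fun N ↦ ∑ h ∈ range H, ∑ h' ∈ (range H).erase h,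
      cesaroMean (fun n ↦ ⟪z (n + h), z (n + h')⟫) N) atTop (𝓝 0) := by
    rw [← sum_const_zero (s := range H)]
    refine tendsto_finsetSum _ fun h _ ↦ ?_
    rw [← sum_const_zero (s := (range H).erase h)]
    exact tendsto_finsetSum _ fun h' hh' ↦ hcorr h h' (ne_of_mem_erase hh').symm
  filter_upwards [hoff.eventually_le_const (Nat.cast_pos (α := ℝ).2 hH)] with N hN
  refine (norm_sq_cesaroMean_le _ N).trans ?_
  rw [hexpand, mul_add, mul_one]
  exact add_le_add (hdiag N) hN

lemma tendsto_cesaroMean_window_sub (hz : ∀ n, ‖z n‖ ≤ C) (H : ℕ) :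
    Tendsto (fun N ↦ cesaroMean (fun n ↦ ∑ h ∈ range H, z (n + h)) N - (H : ℝ) • cesaroMean z N)
      atTop (𝓝 0) := by
  have hsum := tendsto_finsetSum (range H) fun h _ ↦ tendsto_cesaroMean_comp_add_sub hz h
  simpa [cesaroMean_sum, Nat.cast_smul_eq_nsmul] using hsum

theorem tendsto_cesaroMean_of_tendsto_correlations (hz : ∀ n, ‖z n‖ ≤ C)
    (hcorr : ∀ h h' : ℕ, h ≠ h' →
      Tendsto (cesaroMean fun n ↦ ⟪z (n + h), z (n + h')⟫) atTop (𝓝 0)) :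
    Tendsto (cesaroMean z) atTop (𝓝 0) := by
  refine tendsto_zero_iff_norm_tendsto_zero.2 (Metric.tendsto_nhds.2 fun ε hε ↦ ?_)
  obtain ⟨H, hH⟩ := exists_nat_gt ((C ^ 2 + 1) / (ε / 2) ^ 2)
  have hHpos : (0 : ℝ) < H := lt_of_le_of_lt (by positivity) hH
  have hshift := (tendsto_cesaroMean_window_sub hz H).norm.eventually_lt_const
    (show ‖(0 : E)‖ < H * (ε / 2) by rw [norm_zero]; positivity)
  filter_upwards [hshift, eventually_norm_sq_cesaroMean_window_le hz hcorr
    (Nat.cast_pos.1 hHpos)] with N hN hwindow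
  rw [Real.dist_0_eq_abs, abs_norm]
  set S := cesaroMean (fun n ↦ ∑ h ∈ range H, z (n + h)) N
  have hS : ‖S‖ < H * (ε / 2) := by
    refine lt_of_pow_lt_pow_left₀ 2 (by positivity) (hwindow.trans_lt ?_)
    rw [div_lt_iff₀ (by positivity)] at hH
    calc H * (C ^ 2 + 1) < H * (H * (ε / 2) ^ 2) := by gcongr
      _ = (H * (ε / 2)) ^ 2 := by ring
  have htriangle : H * ‖cesaroMean z N‖ ≤ ‖S‖ + ‖S - (H : ℝ) • cesaroMean z N‖ := by
    rw [← Real.norm_natCast H, ← norm_smul, norm_sub_rev, Real.norm_natCast]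
    exact norm_le_norm_add_norm_sub' _ _
  nlinarith

end VanDerCorput

section Weyl

open AddCircle

lemma inner_toCircle_toCircle (x y : UnitAddCircle) :
    ⟪(toCircle x : ℂ), (toCircle y : ℂ)⟫ = (toCircle (y - x) : ℂ).re := by
  rw [Complex.inner, sub_eq_add_neg, toCircle_add, toCircle_neg, Circle.coe_mul,
    Circle.coe_inv_eq_conj, mul_comm]

lemma tendsto_cesaroMean_toCircle_of_map_add_eq {a : ℤ → UnitAddCircle} {p : ℕ}
    {d : UnitAddCircle} (hd : d ≠ 0) (ha : ∀ n : ℤ, a (n + p) = a n + d) :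
    Tendsto (cesaroMean fun n ↦ (toCircle (a n) : ℂ)) atTop (𝓝 0) := by
  have hne : (toCircle d : ℂ) - 1 ≠ 0 := by
    rw [sub_ne_zero, Ne, Circle.coe_eq_one, ← toCircle_zero]
    exact (injective_toCircle one_ne_zero).ne hd
  have hshift := tendsto_cesaroMean_comp_add_sub
    (fun n : ℕ ↦ (Circle.norm_coe (toCircle (a n))).le) p
  have hmul (N : ℕ) : cesaroMean (fun n ↦ (toCircle (a (n + p : ℕ)) : ℂ)) N -
      cesaroMean (fun n ↦ (toCircle (a n) : ℂ)) N =
        ((toCircle d : ℂ) - 1) * cesaroMean (fun n ↦ (toCircle (a n) : ℂ)) N := by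
    have hpush := map_cesaroMean (LinearMap.mulLeft ℝ (toCircle d : ℂ))
      (fun n ↦ (toCircle (a n) : ℂ)) N
    simp only [LinearMap.mulLeft_apply] at hpush
    simp only [Nat.cast_add, ha, toCircle_add, Circle.coe_mul, mul_comm _ (toCircle d : ℂ)]
    rw [sub_mul, one_mul, hpush]
  simp only [hmul] at hshift
  simpa only [inv_mul_cancel_left₀ hne, mul_zero] using hshift.const_mul ((toCircle d : ℂ) - 1)⁻¹

theorem IsPolySeq.tendsto_cesaroMean_toCircle {m : ℕ} {a : ℤ → UnitAddCircle}
    (ha : IsPolySeq m a) (hper : ¬ IsPeriodicSeq a) :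
    Tendsto (cesaroMean fun n ↦ (toCircle (a n) : ℂ)) atTop (𝓝 0) := by
  induction m generalizing a with
  | zero => exact absurd ha.isPeriodicSeq_of_zero hper
  | succ m ih =>
    by_cases hdiff : IsPeriodicSeq (Δ_[1] a)
    · obtain ⟨p, hp, d, hd⟩ := hdiff.exists_map_add_eq
      refine tendsto_cesaroMean_toCircle_of_map_add_eq (fun hd0 ↦ hper ?_) hd
      exact .of_torsion_step (Nat.cast_ne_zero.2 hp.ne') hd one_ne_zero (by rw [hd0, smul_zero])
    refine tendsto_cesaroMean_of_tendsto_correlations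
      (fun n ↦ (Circle.norm_coe (toCircle (a n))).le) fun h h' hne ↦ ?_
    have hcorr (n : ℕ) : ⟪(toCircle (a (n + h : ℕ)) : ℂ), (toCircle (a (n + h' : ℕ)) : ℂ)⟫ =
        Complex.reLm (toCircle ((Δ_[(h' - h : ℤ)] a) (n + h)) : ℂ) := by
      rw [inner_toCircle_toCircle, fwdDiff]
      push_cast
      rw [show (n + h + (h' - h) : ℤ) = n + h' by ring]
      rfl
    have hnper : ¬ IsPeriodicSeq fun n ↦ (Δ_[(h' - h : ℤ)] a) (n + h) := by
      rintro ⟨k, hk, hkper⟩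
      have hstep : (h' - h : ℤ) ≠ 0 := sub_ne_zero.2 (Nat.cast_injective.ne hne.symm)
      refine hdiff (ha.isPeriodicSeq_fwdDiff_one hstep ?_)
      refine ⟨k, hk, fun n ↦ ?_⟩
      simpa [sub_add_eq_add_sub] using hkper (n - h)
    have hlim := ih ((ha (h' - h)).comp_add_right h) hnper
    refine ((Complex.continuous_re.tendsto 0).comp hlim).congr fun N ↦ ?_
    simp only [hcorr]
    exact map_cesaroMean Complex.reLm _ N

end Weyl

end CesaroMeans

section Dilation

open AddMonoidAlgebra

open scoped AddMonoidAlgebra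

variable {G : Type*} [AddCommGroup G]

/-- The action of the group ring `ℤ[G]` on functions `α : G → ℤ` by translations, i.e. by
`(u^g ⋆ α)(h) = α (h - g)`. -/
noncomputable def groupRingAction : ℤ[G] →ₐ[ℤ] Module.End ℤ (G → ℤ) :=
  AddMonoidAlgebra.lift ℤ _ G
    { toFun g := LinearMap.funLeft ℤ ℤ fun h ↦ h - g.toAdd
      map_one' := by ext; simp [LinearMap.funLeft]
      map_mul' a b := by ext; simp [LinearMap.funLeft, sub_sub] }

/-- The ring endomorphism `u^g ↦ u^(q • g)` of `ℤ[G]`. -/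
noncomputable def dilate (q : ℕ) : ℤ[G] →+* ℤ[G] :=
  mapDomainRingHom ℤ (nsmulAddMonoidHom q)

lemma dilate_mul (q r : ℕ) (p : ℤ[G]) : dilate (q * r) p = dilate q (dilate r p) := by
  have hmul : nsmulAddMonoidHom (α := G) (q * r) =
      (nsmulAddMonoidHom q).comp (nsmulAddMonoidHom r) := by
    ext g
    simp [mul_nsmul']
  rw [dilate, hmul, mapDomainRingHom_comp]
  rfl

lemma dilate_one (p : ℤ[G]) : dilate 1 p = p := by
  have hone : nsmulAddMonoidHom (α := G) 1 = .id G := by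
    ext g
    simp
  rw [dilate, hone, mapDomainRingHom_id, RingHom.id_apply]

lemma groupRingAction_dilate_apply (q : ℕ) (p : ℤ[G]) (α : G → ℤ) (h : G) :
    groupRingAction (dilate q p) α h = p.coeff.sum fun g c ↦ c * α (h - q • g) := by
  induction p using AddMonoidAlgebra.induction_linear with
  | zero => simp
  | add p₁ p₂ h₁ h₂ =>
    rw [map_add, map_add, LinearMap.add_apply, Pi.add_apply, h₁, h₂, coeff_add,
      Finsupp.sum_add_index' (by simp) (by simp [add_mul])]
  | single g c => simp [dilate, groupRingAction, LinearMap.funLeft]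

lemma groupRingAction_apply (p : ℤ[G]) (α : G → ℤ) (h : G) :
    groupRingAction p α h = p.coeff.sum fun g c ↦ c * α (h - g) := by
  simpa [dilate_one] using groupRingAction_dilate_apply 1 p α h

lemma natCast_dvd_pow_sub_dilate {ℓ : ℕ} (hℓ : ℓ.Prime) (p : ℤ[G]) :
    (ℓ : ℤ[G]) ∣ p ^ ℓ - dilate ℓ p := by
  induction p using AddMonoidAlgebra.induction_linear with
  | zero => simp [hℓ.ne_zero]
  | add p₁ p₂ h₁ h₂ =>
    obtain ⟨r, hr⟩ := exists_add_pow_prime_eq hℓ p₁ p₂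
    rw [hr, map_add, mul_assoc, mul_assoc, add_sub_right_comm, add_sub_add_comm]
    exact dvd_add (dvd_add h₁ h₂) (dvd_mul_right _ _)
  | single g c =>
    obtain ⟨k, hk⟩ := Int.prime_dvd_pow_self_sub hℓ c
    refine ⟨single (ℓ • g) k, ?_⟩
    rw [dilate, mapDomainRingHom_apply, mapDomain_single, nsmulAddMonoidHom_apply, single_pow,
      ← single_sub, hk, ← nsmul_eq_mul, ← nsmul_eq_mul, smul_single]

lemma abs_groupRingAction_le {α : G → ℤ} (hα : ∀ h, |α h| ≤ 1) (q : ℕ) (p : ℤ[G]) (h : G) :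
    |groupRingAction (dilate q p) α h| ≤ ∑ g ∈ p.coeff.support, |p.coeff g| := by
  rw [groupRingAction_dilate_apply]
  refine (Finset.abs_sum_le_sum_abs _ _).trans (Finset.sum_le_sum fun g _ ↦ ?_)
  rw [abs_mul]
  exact mul_le_of_le_one_right (abs_nonneg _) (hα _)

/-- Modulo a prime `ℓ`, the `ℓ`-th power of `dilate q p` is `dilate (ℓ * q) p`, so the latter maps
`α` to a function divisible by `ℓ`; if `ℓ` exceeds the a priori bound, that function is zero. -/
lemma groupRingAction_dilate_eq_zero {p : ℤ[G]} {α : G → ℤ} (hα : ∀ h, |α h| ≤ 1)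
    (hp : groupRingAction p α = 0) {q : ℕ} (hq : q ≠ 0)
    (hprime : ∀ ℓ : ℕ, ℓ.Prime → ℓ ∣ q → ∑ g ∈ p.coeff.support, |p.coeff g| < ℓ) :
    groupRingAction (dilate q p) α = 0 := by
  induction q using induction_on_primes with
  | zero => exact absurd rfl hq
  | one => rwa [dilate_one]
  | prime_mul ℓ q hℓ ih =>
    have hqα : groupRingAction (dilate q p) α = 0 := ih (right_ne_zero_of_mul hq)
      fun ℓ' hℓ' hdvd ↦ hprime ℓ' hℓ' (hdvd.mul_left _)
    have hpow : groupRingAction (dilate q p ^ ℓ) α = 0 := by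
      rw [← Nat.sub_add_cancel hℓ.one_le, pow_succ, map_mul, Module.End.mul_apply, hqα, map_zero]
    obtain ⟨r, hr⟩ := natCast_dvd_pow_sub_dilate hℓ (dilate q p)
    funext h
    refine Int.eq_zero_of_abs_lt_dvd (m := ℓ) ⟨-groupRingAction r α h, ?_⟩
      ((abs_groupRingAction_le hα _ p h).trans_lt (hprime ℓ hℓ (dvd_mul_right _ _)))
    rw [dilate_mul, ← sub_sub_cancel (dilate q p ^ ℓ) (dilate ℓ (dilate q p)), hr, map_sub,
      LinearMap.sub_apply, hpow, map_mul, map_natCast]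
    simp

theorem exists_forall_groupRingAction_dilate_eq_zero (p : ℤ[G]) :
    ∃ N : ℕ, 0 < N ∧ ∀ α : G → ℤ, (∀ h, |α h| ≤ 1) → groupRingAction p α = 0 →
      ∀ k : ℕ, groupRingAction (dilate (1 + k * N) p) α = 0 := by
  set C := ∑ g ∈ p.coeff.support, |p.coeff g|
  refine ⟨C.toNat.factorial, Nat.factorial_pos _, fun α hα hp k ↦
    groupRingAction_dilate_eq_zero hα hp (by positivity) fun ℓ hℓ hdvd ↦ ?_⟩
  by_contra! hle
  have hfact : ℓ ∣ C.toNat.factorial := Nat.dvd_factorial hℓ.pos (by lia)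
  exact hℓ.one_lt.ne' (Nat.dvd_one.1 ((Nat.dvd_add_left (hfact.mul_left k)).1 hdvd))

end Dilation

section FixedProjection

open Filter Topology

variable {E : Type*} [NormedAddCommGroup E] [InnerProductSpace ℝ E] [CompleteSpace E]

/-- The orthogonal projection onto the fixed vectors of `U`, as an endomorphism of the whole
space. By the mean ergodic theorem it is the limit of the averages of the powers of `U`. -/
noncomputable def fixedProj (U : E →L[ℝ] E) : E →L[ℝ] E :=
  (U.eqLocus (1 : E →L[ℝ] E)).starProjection

lemma apply_fixedProj (U : E →L[ℝ] E) (x : E) : U (fixedProj U x) = fixedProj U x :=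
  (U.eqLocus (1 : E →L[ℝ] E)).starProjection_apply_mem x

lemma fixedProj_eq_self {U : E →L[ℝ] E} {x : E} (hx : U x = x) : fixedProj U x = x :=
  Submodule.starProjection_eq_self_iff.2 hx

lemma inner_fixedProj_of_apply_eq {U : E →L[ℝ] E} {y : E} (hy : U y = y) (x : E) :
    inner ℝ y (fixedProj U x) = inner ℝ y x := by
  rw [fixedProj, ← Submodule.inner_starProjection_left_eq_right]
  exact congrArg (inner ℝ · x) (fixedProj_eq_self hy)

lemma tendsto_cesaroMean_pow_fixedProj {U : E →L[ℝ] E} (hU : ‖U‖ ≤ 1) (x : E) :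
    Tendsto (cesaroMean fun n ↦ (U ^ n) x) atTop (𝓝 (fixedProj U x)) := by
  refine (U.tendsto_birkhoffAverage_orthogonalProjection hU x).congr fun N ↦ ?_
  simp only [cesaroMean, birkhoffAverage, birkhoffSum, id, pow_apply_eq_iterate]

lemma apply_fixedProj_of_commute {U V : E →L[ℝ] E} (hU : ‖U‖ ≤ 1) (hUV : Commute V U) {x : E}
    (hx : V x = x) : V (fixedProj U x) = fixedProj U x := by
  have hpow (n : ℕ) : V ((U ^ n) x) = (U ^ n) x := by
    rw [← mul_apply_eq_comp, (hUV.pow_right n).eq, mul_apply_eq_comp, hx]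
  refine tendsto_nhds_unique ?_ (tendsto_cesaroMean_pow_fixedProj hU x)
  simpa only [Function.comp_def, map_cesaroMean, hpow] using
    (V.continuous.tendsto _).comp (tendsto_cesaroMean_pow_fixedProj hU x)

lemma sum_fixedProj_eq_of_forall_sum_pow_eq {ι : Type*} {s : Finset ι} {U : ι → E →L[ℝ] E}
    (hU : ∀ i ∈ s, ‖U i‖ ≤ 1) {x : ι → E} {b : E} (h : ∀ n, ∑ i ∈ s, (U i ^ n) (x i) = b) :
    ∑ i ∈ s, fixedProj (U i) (x i) = b := by
  have hlim := tendsto_finsetSum s fun i hi ↦ tendsto_cesaroMean_pow_fixedProj (hU i hi) (x i)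
  refine tendsto_nhds_unique hlim (tendsto_const_nhds.congr' ?_)
  filter_upwards [eventually_ne_atTop 0] with N hN
  rw [← cesaroMean_sum, funext h, cesaroMean, Finset.sum_const, Finset.card_range,
    ← Nat.cast_smul_eq_nsmul ℝ, inv_smul_smul₀ (Nat.cast_ne_zero.2 hN)]

end FixedProjection

section Koopman

variable {G X : Type*} [AddCommGroup G] [AddAction G X] [MeasurableSpace X]

/-- The translations under which `f` is invariant almost everywhere. For a set, viewed as a
function to `Prop`, these are its almost everywhere periods. -/
def aeStabilizer {β : Type*} [MeasurableConstVAdd G X] (μ : Measure X)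
    [VAddInvariantMeasure G X μ] (f : X → β) : AddSubgroup G where
  carrier := {g | (fun x ↦ f (g +ᵥ x)) =ᵐ[μ] f}
  zero_mem' := by simp
  add_mem' {g h} hg hh := by
    change (fun x ↦ f ((g + h) +ᵥ x)) =ᵐ[μ] f
    filter_upwards [(measurePreserving_vadd h μ).quasiMeasurePreserving.ae hg, hh] with x hgx hhx
    rw [add_vadd, hgx, hhx]
  neg_mem' {g} hg := by
    change (fun x ↦ f (-g +ᵥ x)) =ᵐ[μ] f
    filter_upwards [(measurePreserving_vadd (-g) μ).quasiMeasurePreserving.ae hg] with x hx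
    rw [← hx, vadd_vadd, add_neg_cancel, zero_vadd]

variable [MeasurableConstVAdd G X] {μ : Measure X} [VAddInvariantMeasure G X μ]

section AEStabilizer

variable {β γ : Type*} {f f' : X → β} {g : G}

lemma mem_aeStabilizer : g ∈ aeStabilizer μ f ↔ (fun x ↦ f (g +ᵥ x)) =ᵐ[μ] f := .rfl

lemma aeStabilizer_le_comp (f : X → β) (φ : β → γ) :
    (aeStabilizer μ f : AddSubgroup G) ≤ aeStabilizer μ (φ ∘ f) := fun _ hg ↦
  (mem_aeStabilizer.1 hg).fun_comp φ

lemma aeStabilizer_inf_le_comp₂ (f : X → β) {δ : Type*} (f' : X → γ) (φ : β → γ → δ) :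
    (aeStabilizer μ f ⊓ aeStabilizer μ f' : AddSubgroup G) ≤
      aeStabilizer μ fun x ↦ φ (f x) (f' x) := by
  rintro g ⟨hf, hf'⟩
  rw [mem_aeStabilizer]
  filter_upwards [mem_aeStabilizer.1 hf, mem_aeStabilizer.1 hf'] with x hx hx'
  rw [hx, hx']

lemma aeStabilizer_congr (h : f =ᵐ[μ] f') :
    (aeStabilizer μ f : AddSubgroup G) = aeStabilizer μ f' := by
  ext g
  have hg : (fun x ↦ f (g +ᵥ x)) =ᵐ[μ] fun x ↦ f' (g +ᵥ x) :=
    (measurePreserving_vadd g μ).quasiMeasurePreserving.ae h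
  simp only [mem_aeStabilizer]
  exact ⟨fun hf ↦ (hg.symm.trans hf).trans h, fun hf' ↦ (hg.trans hf').trans h.symm⟩

end AEStabilizer

variable (μ) in
/-- The translation `F ↦ F (g +ᵥ ·)` as an operator on real `L²`. -/
noncomputable def koopman (g : G) : Lp ℝ 2 μ →L[ℝ] Lp ℝ 2 μ :=
  (Lp.compMeasurePreservingₗᵢ ℝ (g +ᵥ ·) (measurePreserving_vadd g μ)).toContinuousLinearMap

lemma coeFn_koopman (g : G) (F : Lp ℝ 2 μ) : koopman μ g F =ᵐ[μ] fun x ↦ F (g +ᵥ x) :=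
  Lp.coeFn_compMeasurePreserving F (measurePreserving_vadd g μ)

lemma koopman_eq_self_iff {g : G} {F : Lp ℝ 2 μ} : koopman μ g F = F ↔ g ∈ aeStabilizer μ F := by
  rw [Lp.ext_iff, mem_aeStabilizer]
  exact ⟨(coeFn_koopman g F).symm.trans, (coeFn_koopman g F).trans⟩

lemma norm_koopman_le (g : G) : ‖koopman μ g‖ ≤ 1 :=
  LinearIsometry.norm_toContinuousLinearMap_le _

lemma koopman_zero : koopman μ (0 : G) = 1 := by
  ext1 F
  exact koopman_eq_self_iff.2 (zero_mem _)

lemma koopman_add (g h : G) : koopman μ (g + h) = koopman μ g * koopman μ h := by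
  ext1 F
  refine Lp.ext ?_
  rw [mul_apply_eq_comp]
  filter_upwards [coeFn_koopman (g + h) F, coeFn_koopman g (koopman μ h F),
    (measurePreserving_vadd g μ).quasiMeasurePreserving.ae (coeFn_koopman h F)] with x h₁ h₂ h₃
  rw [h₁, h₂, h₃, vadd_vadd, add_comm]

lemma koopman_nsmul (n : ℕ) (g : G) : koopman μ (n • g) = koopman μ g ^ n := by
  induction n with
  | zero => rw [zero_nsmul, koopman_zero, pow_zero]
  | succ n ih => rw [succ_nsmul, koopman_add, ih, pow_succ]

lemma commute_koopman (g h : G) : Commute (koopman μ g) (koopman μ h) := by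
  rw [commute_iff_eq, ← koopman_add, ← koopman_add, add_comm]

variable (μ) in
/-- The conditional expectation with respect to the sets invariant under `v`, on real `L²`. -/
noncomputable def invariantPart (v : G) : Lp ℝ 2 μ →L[ℝ] Lp ℝ 2 μ :=
  fixedProj (koopman μ v)

lemma zmultiples_le_aeStabilizer_invariantPart (v : G) (F : Lp ℝ 2 μ) :
    AddSubgroup.zmultiples v ≤ aeStabilizer μ (invariantPart μ v F) :=
  AddSubgroup.zmultiples_le_of_mem (koopman_eq_self_iff.1 (apply_fixedProj _ F))

lemma aeStabilizer_le_invariantPart (v : G) (F : Lp ℝ 2 μ) :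
    (aeStabilizer μ F : AddSubgroup G) ≤ aeStabilizer μ (invariantPart μ v F) := fun g hg ↦
  koopman_eq_self_iff.1 <| apply_fixedProj_of_commute (norm_koopman_le v) (commute_koopman g v)
    (koopman_eq_self_iff.2 hg)

lemma invariantPart_eq_self {v : G} {F : Lp ℝ 2 μ} (h : v ∈ aeStabilizer μ F) :
    invariantPart μ v F = F := fixedProj_eq_self (koopman_eq_self_iff.2 h)

/-- `invariantPart μ v f - F s` is the sum of the invariant parts of the other `F t`. -/
lemma le_aeStabilizer_invariantPart_sub {ι : Type*} [Fintype ι] {f : Lp ℝ 2 μ}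
    {F : ι → Lp ℝ 2 μ} (hf : ∑ t, F t = f) {s : ι} {v : G} (hs : v ∈ aeStabilizer μ (F s))
    {H : AddSubgroup G}
    (hH : ∀ t ≠ s, H ≤ AddSubgroup.zmultiples v ⊔ aeStabilizer μ (F t)) :
    H ≤ aeStabilizer μ ↑(invariantPart μ v f - F s) := by
  classical
  intro g hg
  have hsub : invariantPart μ v f - F s = ∑ t ∈ Finset.univ.erase s, invariantPart μ v (F t) := by
    rw [← hf, map_sum, ← Finset.sum_erase_add _ _ (Finset.mem_univ s), invariantPart_eq_self hs,
      add_sub_cancel_right]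
  rw [← koopman_eq_self_iff, hsub, map_sum]
  refine Finset.sum_congr rfl fun t ht ↦ koopman_eq_self_iff.2 ?_
  exact sup_le (zmultiples_le_aeStabilizer_invariantPart v (F t))
    (aeStabilizer_le_invariantPart v (F t)) (hH t (Finset.ne_of_mem_erase ht) hg)

section SetIntegral

variable [IsFiniteMeasure μ] {v : G}

lemma setIntegral_invariantPart (F : Lp ℝ 2 μ) {B : Set X} (hB : MeasurableSet B)
    (hv : v ∈ aeStabilizer μ (· ∈ B)) : ∫ x in B, invariantPart μ v F x ∂μ = ∫ x in B, F x ∂μ := by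
  have hfix : koopman μ v (indicatorConstLp 2 hB (measure_ne_top μ B) (1 : ℝ)) =
      indicatorConstLp 2 hB (measure_ne_top μ B) (1 : ℝ) := by
    rw [koopman_eq_self_iff, aeStabilizer_congr indicatorConstLp_coeFn]
    classical exact aeStabilizer_le_comp (· ∈ B) (fun p : Prop ↦ if p then (1 : ℝ) else 0) hv
  rw [← L2.inner_indicatorConstLp_one hB (measure_ne_top μ B), invariantPart,
    inner_fixedProj_of_apply_eq hfix, L2.inner_indicatorConstLp_one]

/-- Integrate over the `v`-invariant set `{invariantPart μ v F ≤ 0}`. -/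
lemma ae_eq_zero_of_invariantPart_nonpos {F : Lp ℝ 2 μ} (hF : 0 ≤ᵐ[μ] F) :
    ∀ᵐ x ∂μ, invariantPart μ v F x ≤ 0 → F x = 0 ∧ invariantPart μ v F x = 0 := by
  set Q := invariantPart μ v F
  obtain ⟨B, hBdef⟩ : ∃ B : Set X, B = {x | Q x ≤ 0} := ⟨_, rfl⟩
  have hB : MeasurableSet B := hBdef ▸ measurableSet_le (Lp.stronglyMeasurable Q).measurable
    measurable_const
  have hvB : v ∈ aeStabilizer μ (· ∈ B) := hBdef ▸ aeStabilizer_le_comp Q (· ≤ 0)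
    (zmultiples_le_aeStabilizer_invariantPart v F (AddSubgroup.mem_zmultiples v))
  have hint (H : Lp ℝ 2 μ) : IntegrableOn H B μ :=
    ((Lp.memLp H).integrable one_le_two).integrableOn
  have hQB : Q ≤ᵐ[μ.restrict B] 0 := by
    filter_upwards [ae_restrict_mem hB] with x hx
    simpa [hBdef] using hx
  have hFB : 0 ≤ᵐ[μ.restrict B] F := ae_restrict_of_ae hF
  have heq := setIntegral_invariantPart F hB hvB
  have hzero : ∫ x in B, F x ∂μ = 0 :=
    le_antisymm (heq ▸ integral_nonpos_of_ae hQB) (integral_nonneg_of_ae hFB)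
  have hF0 := (integral_eq_zero_iff_of_nonneg_ae hFB (hint F)).1 hzero
  have hQ0 := (integral_eq_zero_iff_of_nonneg_ae (hQB.mono fun x hx ↦ neg_nonneg.2 hx)
    (hint Q).neg).1 (by rw [integral_neg, heq, hzero, neg_zero])
  filter_upwards [(ae_restrict_iff' hB).1 hF0, (ae_restrict_iff' hB).1 hQ0] with x hFx hQx hx
  have hxB : x ∈ B := hBdef ▸ hx
  exact ⟨hFx hxB, neg_eq_zero.1 (hQx hxB)⟩

/-- The upper bounds follow from the lower bounds for the complementary function `1 - f`. -/
lemma ae_invariantPart_mem_Icc {A : Set X} {f : Lp ℝ 2 μ} (hf : f =ᵐ[μ] A.indicator 1) (v : G) :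
    ∀ᵐ x ∂μ, invariantPart μ v f x ∈ Set.Icc 0 1 ∧
      (invariantPart μ v f x = 0 → x ∉ A) ∧ (invariantPart μ v f x = 1 → x ∈ A) := by
  set o : Lp ℝ 2 μ := Lp.const 2 μ 1
  have ho : o =ᵐ[μ] fun _ ↦ 1 := Lp.coeFn_const ..
  have hcompl : invariantPart μ v (o - f) = o - invariantPart μ v f := by
    rw [map_sub, invariantPart_eq_self]
    rw [aeStabilizer_congr ho, mem_aeStabilizer]
  have hf_nonneg : 0 ≤ᵐ[μ] f := by
    filter_upwards [hf] with x hx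
    exact hx ▸ Set.indicator_nonneg (fun _ _ ↦ zero_le_one) x
  have hof_nonneg : 0 ≤ᵐ[μ] ↑(o - f) := by
    filter_upwards [hf, ho, Lp.coeFn_sub o f] with x hx hox hsub
    rw [hsub, Pi.sub_apply, hox, hx, Pi.zero_apply, sub_nonneg]
    exact Set.indicator_le_self' (fun _ _ ↦ zero_le_one) x
  filter_upwards [hf, ho, Lp.coeFn_sub o f, Lp.coeFn_sub o (invariantPart μ v f),
    ae_eq_zero_of_invariantPart_nonpos hf_nonneg (v := v),
    ae_eq_zero_of_invariantPart_nonpos hof_nonneg (v := v)] with x hx hox hsub hsubQ hlow hupp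
  rw [hcompl, hsubQ, hsub, Pi.sub_apply, Pi.sub_apply, hox, sub_nonpos, sub_eq_zero,
    sub_eq_zero] at hupp
  rw [hx] at hlow hupp
  refine ⟨⟨le_of_not_gt fun h ↦ h.ne (hlow h.le).2, le_of_not_gt fun h ↦ h.ne (hupp h.le).2⟩,
    fun h hxA ↦ ?_, fun h ↦ ?_⟩
  · simpa [hxA] using (hlow h.le).1
  · by_contra hxA
    simpa [hxA] using (hupp h.ge).1

end SetIntegral

end Koopman

section Structure

open AddMonoidAlgebra AddSubgroup

open scoped AddMonoidAlgebra

variable {G X : Type*} [AddCommGroup G] [AddAction G X] [MeasurableSpace X]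
  [MeasurableConstVAdd G X] {μ : Measure X} [VAddInvariantMeasure G X μ]

lemma sum_smul_koopman_eq_zero [Countable G] {A : Set X} {f : Lp ℝ 2 μ}
    (hf : f =ᵐ[μ] A.indicator 1) {p : ℤ[G]} {q : ℕ}
    (hp : ∀ᵐ x ∂μ, groupRingAction (dilate q p) (fun h ↦ A.indicator 1 (h +ᵥ x)) = 0) (g₀ : G) :
    ∑ g ∈ p.coeff.support, (p.coeff g : ℝ) • koopman μ (q • (g₀ - g)) f = 0 := by
  have hfG : ∀ᵐ x ∂μ, ∀ h : G, f (h +ᵥ x) = A.indicator 1 (h +ᵥ x) :=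
    ae_all_iff.2 fun h ↦ (measurePreserving_vadd h μ).quasiMeasurePreserving.ae hf
  have hsmul : ∀ᵐ x ∂μ, ∀ g : G, ((p.coeff g : ℝ) • koopman μ (q • (g₀ - g)) f : Lp ℝ 2 μ) x =
      p.coeff g * f (q • (g₀ - g) +ᵥ x) := by
    refine ae_all_iff.2 fun g ↦ ?_
    filter_upwards [Lp.coeFn_smul (p.coeff g : ℝ) (koopman μ (q • (g₀ - g)) f),
      coeFn_koopman (q • (g₀ - g)) f] with x hx hx'
    rw [hx, Pi.smul_apply, hx', smul_eq_mul]
  refine Lp.ext ?_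
  filter_upwards [hp, hfG, hsmul, Lp.coeFn_fun_finsetSum p.coeff.support
    (fun g ↦ (p.coeff g : ℝ) • koopman μ (q • (g₀ - g)) f), Lp.coeFn_zero ℝ 2 μ]
    with x hpx hfx hsmulx hsumx h0
  have hconv := congrFun hpx (q • g₀)
  rw [groupRingAction_dilate_apply, Finsupp.sum, Pi.zero_apply] at hconv
  rw [hsumx, h0, Pi.zero_apply, ← Int.cast_zero, ← hconv, Int.cast_sum]
  refine Finset.sum_congr rfl fun g _ ↦ ?_
  rw [hsmulx, hfx, smul_sub, Int.cast_mul]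
  by_cases hxA : (q • g₀ - q • g) +ᵥ x ∈ A <;> simp [hxA]

theorem exists_sum_eq_of_groupRingAction_eq_zero [Countable G] [IsAddTorsionFree G] {A : Set X}
    {f : Lp ℝ 2 μ} (hf : f =ᵐ[μ] A.indicator 1) {p : ℤ[G]} (hp0 : p ≠ 0)
    (hp : ∀ᵐ x ∂μ, groupRingAction p (fun h ↦ A.indicator 1 (h +ᵥ x)) = 0) :
    ∃ (S : Finset G) (v : G → G) (F : G → Lp ℝ 2 μ),
      (∀ g ∈ S, v g ≠ 0) ∧ (∀ g ∈ S, v g ∈ aeStabilizer μ (F g)) ∧ ∑ g ∈ S, F g = f := by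
  classical
  obtain ⟨N, hN, hdilate⟩ := exists_forall_groupRingAction_dilate_eq_zero p
  obtain ⟨g₀, hg₀⟩ := Finsupp.support_nonempty_iff.2 (mt coeff_eq_zero.1 hp0)
  have hc₀ : (p.coeff g₀ : ℝ) ≠ 0 := Int.cast_ne_zero.2 (Finsupp.mem_support_iff.1 hg₀)
  have hzero (k : ℕ) :
      ∑ g ∈ p.coeff.support, (p.coeff g : ℝ) • koopman μ ((1 + k * N) • (g₀ - g)) f = 0 := by
    refine sum_smul_koopman_eq_zero hf ?_ g₀
    filter_upwards [hp] with x hx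
    refine hdilate _ (fun h ↦ ?_) hx k
    by_cases hxA : h +ᵥ x ∈ A <;> simp [hxA]
  set S := p.coeff.support.erase g₀
  set y : G → Lp ℝ 2 μ := fun g ↦ (-(p.coeff g₀ : ℝ)⁻¹ * p.coeff g) • koopman μ (g₀ - g) f
  have hsum (k : ℕ) : ∑ g ∈ S, (koopman μ (N • (g₀ - g)) ^ k) (y g) = f := by
    have hterm (g : G) : (koopman μ (N • (g₀ - g)) ^ k) (y g) =
        (-(p.coeff g₀ : ℝ)⁻¹) • (p.coeff g : ℝ) • koopman μ ((1 + k * N) • (g₀ - g)) f := by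
      rw [map_smul, mul_smul, ← mul_apply_eq_comp, ← koopman_nsmul, ← koopman_add, add_smul,
        one_smul, mul_smul, add_comm]
    have hsplit := hzero k
    rw [← Finset.sum_erase_add _ _ hg₀, sub_self, smul_zero, koopman_zero,
      one_apply_eq_self, add_eq_zero_iff_eq_neg] at hsplit
    simp only [hterm, ← Finset.smul_sum]
    rw [hsplit, smul_neg, neg_smul, neg_neg, inv_smul_smul₀ hc₀]
  refine ⟨S, fun g ↦ N • (g₀ - g), fun g ↦ invariantPart μ (N • (g₀ - g)) (y g),
    fun g hg ↦ ?_, fun g _ ↦ ?_, ?_⟩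
  · exact smul_ne_zero hN.ne' (sub_ne_zero.2 (Finset.ne_of_mem_erase hg).symm)
  · exact zmultiples_le_aeStabilizer_invariantPart _ _ (mem_zmultiples _)
  · exact sum_fixedProj_eq_of_forall_sum_pow_eq (fun g _ ↦ norm_koopman_le _) hsum

end Structure

section FiniteIndex

open AddSubgroup

variable {G : Type*} [AddCommGroup G] [AddGroup.FG G]

lemma finiteIndex_of_forall_zsmul_mem {H : AddSubgroup G} {m : ℤ} (hm : m ≠ 0)
    (h : ∀ g, m • g ∈ H) : H.FiniteIndex := by
  suffices Finite (G ⧸ H) from finiteIndex_of_finite_quotient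
  refine AddCommGroup.finite_of_fg_isAddTorsion _ fun q ↦ ?_
  induction q using QuotientAddGroup.induction_on with
  | H g =>
    rw [isOfFinAddOrder_iff_zsmul_eq_zero]
    exact ⟨m, hm, by rw [← QuotientAddGroup.mk_zsmul, (QuotientAddGroup.eq_zero_iff _).2 (h g)]⟩

lemma finiteIndex_sup_zmultiples_zsmul {v w : G} (h : (zmultiples v ⊔ zmultiples w).FiniteIndex)
    {k : ℤ} (hk : k ≠ 0) : (zmultiples v ⊔ zmultiples (k • w)).FiniteIndex := by
  set m := (zmultiples v ⊔ zmultiples w).index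
  refine finiteIndex_of_forall_zsmul_mem (m := k * m)
    (mul_ne_zero hk (Int.natCast_ne_zero.2 h.index_ne_zero)) fun g ↦ ?_
  obtain ⟨_, ⟨i, rfl⟩, _, ⟨j, rfl⟩, hij⟩ :=
    mem_sup.1 ((zmultiples v ⊔ zmultiples w).nsmul_index_mem g)
  rw [mul_smul, natCast_zsmul, ← hij, smul_add]
  refine add_mem (mem_sup_left ⟨k * i, mul_smul ..⟩) (mem_sup_right ⟨j, ?_⟩)
  exact smul_comm ..

end FiniteIndex

section IntProd

open AddSubgroup

lemma zmultiples_sup_zmultiples_finiteIndex_of_det_ne_zero {v w : ℤ × ℤ}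
    (h : v.1 * w.2 - v.2 * w.1 ≠ 0) : (zmultiples v ⊔ zmultiples w).FiniteIndex := by
  refine finiteIndex_of_forall_zsmul_mem h fun g ↦ ?_
  have hcramer : (v.1 * w.2 - v.2 * w.1) • g =
      (g.1 * w.2 - g.2 * w.1) • v + (v.1 * g.2 - v.2 * g.1) • w := by
    ext <;> simp <;> ring
  rw [hcramer]
  exact add_mem (mem_sup_left ⟨_, rfl⟩) (mem_sup_right ⟨_, rfl⟩)

lemma exists_zmultiples_sup_zmultiples_finiteIndex {v : ℤ × ℤ} (hv : v ≠ 0) :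
    ∃ w, (zmultiples v ⊔ zmultiples w).FiniteIndex := by
  refine ⟨(-v.2, v.1), zmultiples_sup_zmultiples_finiteIndex_of_det_ne_zero fun h ↦ hv ?_⟩
  have hsq : v.1 * v.1 + v.2 * v.2 = 0 := by linarith
  exact Prod.ext_iff.2 (mul_self_add_mul_self_eq_zero.1 hsq)

lemma zmultiples_sup_zmultiples_finiteIndex_or_exists_ne_zero {v w : ℤ × ℤ} (hv : v ≠ 0)
    (hw : w ≠ 0) : (zmultiples v ⊔ zmultiples w).FiniteIndex ∨
      ∃ u ≠ 0, u ∈ zmultiples v ∧ u ∈ zmultiples w := by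
  by_cases hdet : v.1 * w.2 - v.2 * w.1 = 0
  · right
    by_cases hw1 : w.1 = 0
    · have hw2 : w.2 ≠ 0 := fun h ↦ hw (Prod.ext hw1 h)
      refine ⟨w.2 • v, smul_ne_zero hw2 hv, ⟨w.2, rfl⟩, v.2, ?_⟩
      ext <;> simp <;> linarith
    · refine ⟨w.1 • v, smul_ne_zero hw1 hv, ⟨w.1, rfl⟩, v.1, ?_⟩
      ext <;> simp <;> linarith
  · exact .inl (zmultiples_sup_zmultiples_finiteIndex_of_det_ne_zero hdet)

end IntProd

section TransverseDecomposition

open AddSubgroup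

variable {G X : Type*} [AddCommGroup G] [AddAction G X] [MeasurableSpace X]
  [MeasurableConstVAdd G X] {μ : Measure X} [VAddInvariantMeasure G X μ]

/-- A decomposition of `f` into finitely many `L²` functions `F s`, each invariant under a nonzero
translation `v s`, where any two of the translations span a subgroup of finite index. -/
structure IsTransverseDecomposition {ι : Type*} [Fintype ι] (f : Lp ℝ 2 μ) (v : ι → G)
    (F : ι → Lp ℝ 2 μ) : Prop where
  ne_zero : ∀ s, v s ≠ 0
  mem_aeStabilizer : ∀ s, v s ∈ aeStabilizer μ (F s)
  finiteIndex : Pairwise fun s t ↦ (zmultiples (v s) ⊔ zmultiples (v t)).FiniteIndex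
  sum_eq : ∑ s, F s = f

namespace IsTransverseDecomposition

variable {n : ℕ} {f : Lp ℝ 2 μ} {v : Fin n → G} {F : Fin n → Lp ℝ 2 μ}

lemma cons (h : IsTransverseDecomposition f v F) {w : G} (hw : w ≠ 0) {F₀ : Lp ℝ 2 μ}
    (hF₀ : w ∈ aeStabilizer μ F₀)
    (hindex : ∀ t, (zmultiples (v t) ⊔ zmultiples w).FiniteIndex) :
    IsTransverseDecomposition (F₀ + f) (Fin.cons w v : Fin (n + 1) → G) (Fin.cons F₀ F) where
  ne_zero := Fin.cases hw h.ne_zero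
  mem_aeStabilizer := Fin.cases hF₀ h.mem_aeStabilizer
  finiteIndex := by
    refine Fin.cases (Fin.cases (fun hne ↦ (hne rfl).elim) fun t _ ↦ ?_)
      fun s ↦ Fin.cases (fun _ ↦ hindex s) fun t hst ↦ ?_
    · simpa only [Fin.cons_zero, Fin.cons_succ, sup_comm] using hindex t
    · exact h.finiteIndex fun hne ↦ hst (congrArg _ hne)
  sum_eq := by rw [Fin.sum_cons, h.sum_eq]

lemma update [AddGroup.FG G] (h : IsTransverseDecomposition f v F) {t : Fin n} {u : G}
    (hu : u ≠ 0) (hut : u ∈ zmultiples (v t)) {F₀ : Lp ℝ 2 μ} (hF₀ : u ∈ aeStabilizer μ F₀) :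
    IsTransverseDecomposition (F₀ + f) (Function.update v t u)
      (Function.update F t (F₀ + F t)) where
  ne_zero := by
    rw [Function.forall_update_iff v fun _ w ↦ w ≠ 0]
    exact ⟨hu, fun s _ ↦ h.ne_zero s⟩
  mem_aeStabilizer s := by
    obtain rfl | hst := eq_or_ne s t
    · have hFs := zmultiples_le_of_mem (h.mem_aeStabilizer s) hut
      rw [Function.update_self, Function.update_self, ← koopman_eq_self_iff, map_add,
        koopman_eq_self_iff.2 hF₀, koopman_eq_self_iff.2 hFs]
    · rw [Function.update_of_ne hst, Function.update_of_ne hst]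
      exact h.mem_aeStabilizer s
  finiteIndex s s' hne := by
    obtain ⟨k, rfl⟩ := hut
    have hk : k ≠ 0 := by rintro rfl; exact hu (zero_smul ..)
    obtain rfl | hs := eq_or_ne s t
    · rw [Function.update_self, Function.update_of_ne hne.symm, sup_comm]
      exact finiteIndex_sup_zmultiples_zsmul (h.finiteIndex hne.symm) hk
    rw [Function.update_of_ne hs]
    obtain rfl | hs' := eq_or_ne s' t
    · rw [Function.update_self]
      exact finiteIndex_sup_zmultiples_zsmul (h.finiteIndex hs) hk
    · rw [Function.update_of_ne hs']
      exact h.finiteIndex hne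
  sum_eq := by
    rw [Finset.sum_update_of_mem (Finset.mem_univ t), ← h.sum_eq, add_assoc,
      ← Finset.sum_eq_add_sum_sdiff_singleton_of_mem (Finset.mem_univ t)]

end IsTransverseDecomposition

lemma exists_isTransverseDecomposition_sum [AddAction (ℤ × ℤ) X]
    [MeasurableConstVAdd (ℤ × ℤ) X] [VAddInvariantMeasure (ℤ × ℤ) X μ] {ι : Type*}
    (S : Finset ι) {v : ι → ℤ × ℤ} {F : ι → Lp ℝ 2 μ} (hv : ∀ s ∈ S, v s ≠ 0)
    (hF : ∀ s ∈ S, v s ∈ aeStabilizer μ (F s)) :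
    ∃ (n : ℕ) (w : Fin n → ℤ × ℤ) (F' : Fin n → Lp ℝ 2 μ),
      IsTransverseDecomposition (∑ s ∈ S, F s) w F' := by
  classical
  induction S using Finset.induction_on with
  | empty => exact ⟨0, Fin.elim0, Fin.elim0, nofun, nofun, nofun, rfl⟩
  | insert a S ha ih =>
    rw [Finset.forall_mem_insert] at hv hF
    obtain ⟨n, w, F', h⟩ := ih hv.2 hF.2
    rw [Finset.sum_insert ha]
    by_cases hindex : ∀ t, (zmultiples (w t) ⊔ zmultiples (v a)).FiniteIndex
    · exact ⟨n + 1, _, _, h.cons hv.1 hF.1 hindex⟩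
    obtain ⟨t, ht⟩ := not_forall.1 hindex
    obtain ⟨u, hu, hut, hua⟩ :=
      (zmultiples_sup_zmultiples_finiteIndex_or_exists_ne_zero (h.ne_zero t) hv.1).resolve_left ht
    exact ⟨n, _, _, h.update hu hut (zmultiples_le_of_mem hF.1 hua)⟩

theorem exists_isTransverseDecomposition [AddAction (ℤ × ℤ) X]
    [MeasurableConstVAdd (ℤ × ℤ) X] [VAddInvariantMeasure (ℤ × ℤ) X μ] {A : Set X}
    {f : Lp ℝ 2 μ} (hf : f =ᵐ[μ] A.indicator 1) {p : AddMonoidAlgebra ℤ (ℤ × ℤ)} (hp0 : p ≠ 0)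
    (hp : ∀ᵐ x ∂μ, groupRingAction p (fun h ↦ A.indicator 1 (h +ᵥ x)) = 0) :
    ∃ (n : ℕ) (v : Fin n → ℤ × ℤ) (F : Fin n → Lp ℝ 2 μ), IsTransverseDecomposition f v F := by
  obtain ⟨S, v, F, hv, hF, rfl⟩ := exists_sum_eq_of_groupRingAction_eq_zero hf hp0 hp
  exact exists_isTransverseDecomposition_sum S hv hF

end TransverseDecomposition

section ErgodicComponents

open Filter

variable {G X : Type*} [AddCommGroup G] [AddAction G X] [MeasurableSpace X] {μ : Measure X}

lemma exists_eventuallyEq_const_of_ergodicVAdd [ErgodicVAdd G X μ] {β : Type*} [Nonempty β]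
    [MeasurableSpace β] [MeasurableSpace.CountablySeparated β] {φ : X → β} (hφ : Measurable φ)
    (h : ∀ g : G, (fun x ↦ φ (g +ᵥ x)) =ᵐ[μ] φ) : ∃ c, φ =ᵐ[μ] Function.const X c := by
  refine exists_eventuallyEq_const_of_forall_separating MeasurableSet fun U hU ↦ ?_
  exact eventuallyConst_set.1 <|
    ErgodicVAdd.aeconst_of_forall_preimage_vadd_ae_eq (G := G) (hφ hU) fun g ↦
      (h g).fun_comp (· ∈ U)

variable [MeasurableConstVAdd G X]

lemma measure_univ_le_index_mul_s14 [Countable G] [ErgodicVAdd G X μ] {Λ : AddSubgroup G}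
    [Λ.FiniteIndex] {B : Set X} (hB : MeasurableSet B) (hΛ : Λ ≤ aeStabilizer μ (· ∈ B))
    (h₀ : μ B ≠ 0) : μ Set.univ ≤ Λ.index * μ B := by
  set U : Set X := ⋃ g : G, (g +ᵥ ·) ⁻¹' B
  have hU : U =ᵐ[μ] Set.univ := by
    have hinv (g : G) : (g +ᵥ ·) ⁻¹' U = U := by
      ext x
      simp only [U, Set.mem_preimage, Set.mem_iUnion, vadd_vadd]
      exact (Equiv.addRight g).exists_congr_left.trans (by simp)
    refine (eventuallyConst_set'.1 (aeconst_of_forall_preimage_vadd_ae_eq G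
      (MeasurableSet.iUnion fun g ↦ measurable_const_vadd g hB).nullMeasurableSet
      fun g ↦ (hinv g).eventuallyEq)).resolve_left fun hU₀ ↦ h₀ ?_
    refine measure_mono_null (fun x hx ↦ Set.mem_iUnion.2 ⟨0, ?_⟩) (ae_eq_empty.1 hU₀)
    rwa [Set.mem_preimage, zero_vadd]
  have htranslate : ∀ᵐ x ∂μ, ∀ (g : G) (l : Λ), l +ᵥ g +ᵥ x ∈ B ↔ g +ᵥ x ∈ B := by
    refine ae_all_iff.2 fun g ↦ ae_all_iff.2 fun l ↦ ?_
    filter_upwards [(measurePreserving_vadd g μ).quasiMeasurePreserving.ae (hΛ l.2)] with x hx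
    exact iff_of_eq hx
  have : Fintype (G ⧸ Λ) := Λ.fintypeQuotientOfFiniteIndex
  calc μ Set.univ = μ U := (measure_congr hU).symm
    _ ≤ μ (⋃ q : G ⧸ Λ, (q.out +ᵥ ·) ⁻¹' B) := by
        refine measure_mono_ae ?_
        filter_upwards [htranslate] with x hx hxU
        obtain ⟨g, hg⟩ := Set.mem_iUnion.1 hxU
        obtain ⟨l, hl⟩ := QuotientAddGroup.mk_out_eq_add Λ g
        refine Set.mem_iUnion.2 ⟨g, ?_⟩
        rw [Set.mem_preimage, hl, add_comm, add_vadd]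
        exact (hx g l).2 hg
    _ ≤ ∑ q : G ⧸ Λ, μ ((q.out +ᵥ ·) ⁻¹' B) := by
        simpa only [tsum_fintype] using measure_iUnion_le fun q : G ⧸ Λ ↦ (q.out +ᵥ ·) ⁻¹' B
    _ = Λ.index * μ B := by
        simp only [measure_preimage_vadd, Finset.sum_const, nsmul_eq_mul, Finset.card_univ,
          AddSubgroup.index, Nat.card_eq_fintype_card]

lemma exists_measure_eq_zero_of_antitone [Countable G] [IsFiniteMeasure μ] [ErgodicVAdd G X μ]
    {Λ : AddSubgroup G} [Λ.FiniteIndex] {D : ℕ → Set X} (hD : ∀ k, MeasurableSet (D k))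
    (hΛ : ∀ k, Λ ≤ aeStabilizer μ (· ∈ D k)) (hanti : Antitone D) (hempty : ⋂ k, D k = ∅) :
    ∃ k, μ (D k) = 0 := by
  by_contra! hne
  have hlim : Tendsto (fun k ↦ Λ.index * μ (D k)) atTop (nhds (Λ.index * 0)) := by
    refine ENNReal.Tendsto.const_mul ?_ (.inr (ENNReal.natCast_ne_top _))
    rw [← measure_empty (μ := μ), ← hempty]
    exact tendsto_measure_iInter_atTop (fun k ↦ (hD k).nullMeasurableSet) hanti
      ⟨0, measure_ne_top μ _⟩
  have huniv : μ Set.univ ≤ Λ.index * 0 := ge_of_tendsto' hlim fun k ↦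
    measure_univ_le_index_mul_s14 (hD k) (hΛ k) (hne k)
  rw [mul_zero, nonpos_iff_eq_zero] at huniv
  exact hne 0 (measure_mono_null (Set.subset_univ _) huniv)

/-- An ergodic component of the action of `Λ`: a non-null `Λ`-invariant set which is not split by
any `Λ`-invariant set. -/
structure IsErgodicComponent (μ : Measure X) [VAddInvariantMeasure G X μ] (Λ : AddSubgroup G)
    (Y : Set X) : Prop where
  measurableSet : MeasurableSet Y
  measure_ne_zero : μ Y ≠ 0
  le_aeStabilizer : Λ ≤ aeStabilizer μ (· ∈ Y)
  null_inter_or_null_diff : ∀ S, MeasurableSet S → Λ ≤ aeStabilizer μ (· ∈ S) →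
    μ (Y ∩ S) = 0 ∨ μ (Y \ S) = 0

lemma measurePreserving_vadd_restrict [VAddInvariantMeasure G X μ] {g : G} {Y : Set X}
    (hY : MeasurableSet Y) (hg : g ∈ aeStabilizer μ (· ∈ Y)) :
    MeasurePreserving (g +ᵥ ·) (μ.restrict Y) (μ.restrict Y) := by
  have hgY : (g +ᵥ ·) ⁻¹' Y =ᵐ[μ] Y := hg
  simpa only [Measure.restrict_congr_set hgY] using
    (measurePreserving_vadd g μ).restrict_preimage hY

lemma IsErgodicComponent.ergodicVAdd [VAddInvariantMeasure G X μ] {Λ : AddSubgroup G} {Y : Set X}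
    (hY : IsErgodicComponent μ Λ Y) : ErgodicVAdd Λ X (μ.restrict Y) where
  measure_preimage_vadd g _ hS :=
    (measurePreserving_vadd_restrict hY.measurableSet (hY.le_aeStabilizer g.2)).measure_preimage
      hS.nullMeasurableSet
  aeconst_of_forall_preimage_vadd_ae_eq {S} hS hinv := by
    have hYS : Λ ≤ aeStabilizer μ (· ∈ Y ∩ S) := by
      intro g hg
      filter_upwards [hY.le_aeStabilizer hg, (ae_restrict_iff' hY.measurableSet).1 (hinv ⟨g, hg⟩)]
        with x hxY hxS
      change (g +ᵥ x ∈ Y ∧ g +ᵥ x ∈ S) = (x ∈ Y ∧ x ∈ S)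
      rw [hxY]
      exact propext (and_congr_right fun hx ↦ iff_of_eq (hxS hx))
    rw [eventuallyConst_set', ae_eq_empty, ae_eq_univ, Measure.restrict_apply hS,
      Measure.restrict_apply hS.compl, Set.inter_comm, Set.inter_comm Sᶜ, ← Set.sdiff_eq]
    simpa only [Set.sdiff_self_inter, ← Set.inter_assoc, Set.inter_self] using
      hY.null_inter_or_null_diff _ (hY.measurableSet.inter hS) hYS

lemma IsErgodicComponent.exists_ae_eq_const [VAddInvariantMeasure G X μ] {Λ : AddSubgroup G}
    {Y : Set X} (hY : IsErgodicComponent μ Λ Y) {β : Type*} [Nonempty β] [MeasurableSpace β]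
    [MeasurableSpace.CountablySeparated β] {φ : X → β} (hφ : Measurable φ)
    (hΛ : Λ ≤ aeStabilizer μ φ) : ∃ c, ∀ᵐ x ∂μ.restrict Y, φ x = c :=
  have := hY.ergodicVAdd
  exists_eventuallyEq_const_of_ergodicVAdd hφ fun g : Λ ↦ ae_restrict_of_ae (hΛ g.2)

lemma exists_finite_isErgodicComponent_of_index_mul_lt [Countable G] [IsProbabilityMeasure μ]
    [ErgodicVAdd G X μ] (Λ : AddSubgroup G) [Λ.FiniteIndex] (k : ℕ) {Y : Set X}
    (hY : MeasurableSet Y) (hΛ : Λ ≤ aeStabilizer μ (· ∈ Y)) (hk : Λ.index * μ Y < k) :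
    ∃ 𝒞 : Set (Set X), 𝒞.Finite ∧ (∀ C ∈ 𝒞, IsErgodicComponent μ Λ C ∧ C ⊆ Y) ∧
      𝒞.PairwiseDisjoint id ∧ μ (Y \ ⋃₀ 𝒞) = 0 := by
  induction k generalizing Y with
  | zero => exact absurd hk (by simp)
  | succ k ih =>
    by_cases hY₀ : μ Y = 0
    · exact ⟨∅, Set.finite_empty, by simp, by simp, by simpa using hY₀⟩
    by_cases hsplit : ∀ S, MeasurableSet S → Λ ≤ aeStabilizer μ (· ∈ S) →
        μ (Y ∩ S) = 0 ∨ μ (Y \ S) = 0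
    · exact ⟨{Y}, Set.finite_singleton Y, by simpa using ⟨hY, hY₀, hΛ, hsplit⟩, by simp, by simp⟩
    push Not at hsplit
    obtain ⟨S, hS, hΛS, hinter, hdiff⟩ := hsplit
    have hΛi : Λ ≤ aeStabilizer μ (· ∈ Y ∩ S) :=
      (le_inf hΛ hΛS).trans (aeStabilizer_inf_le_comp₂ (· ∈ Y) (· ∈ S) And)
    have hΛd : Λ ≤ aeStabilizer μ (· ∈ Y \ S) :=
      (le_inf hΛ hΛS).trans (aeStabilizer_inf_le_comp₂ (· ∈ Y) (· ∈ S) fun p q ↦ p ∧ ¬q)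
    have hi := measure_univ_le_index_mul_s14 (hY.inter hS) hΛi hinter
    have hd := measure_univ_le_index_mul_s14 (hY.diff hS) hΛd hdiff
    rw [measure_univ] at hi hd
    rw [← measure_inter_add_sdiff Y hS, mul_add, Nat.cast_succ] at hk
    obtain ⟨𝒞, h𝒞, hC, hCdisj, hCY⟩ := ih (hY.inter hS) hΛi
      (lt_of_add_lt_add_right ((add_le_add_right hd _).trans_lt hk))
    obtain ⟨𝒟, h𝒟, hD, hDdisj, hDY⟩ := ih (hY.diff hS) hΛd
      (lt_of_add_lt_add_left ((add_le_add_left hi _).trans_lt (add_comm (k : ENNReal) 1 ▸ hk)))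
    refine ⟨𝒞 ∪ 𝒟, h𝒞.union h𝒟, ?_, ?_, ?_⟩
    · rintro C (hC' | hC')
      · exact ⟨(hC C hC').1, (hC C hC').2.trans Set.inter_subset_left⟩
      · exact ⟨(hD C hC').1, (hD C hC').2.trans Set.sdiff_subset⟩
    · exact hCdisj.union hDdisj fun C hC' D hD' _ ↦
        (Set.disjoint_sdiff_inter.symm.mono (hC C hC').2 (hD D hD').2)
    · refine measure_mono_null ?_ (measure_union_null hCY hDY)
      rw [Set.sUnion_union]
      rintro x ⟨hxY, hx⟩
      by_cases hxS : x ∈ S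
      · exact .inl ⟨⟨hxY, hxS⟩, fun h ↦ hx (.inl h)⟩
      · exact .inr ⟨⟨hxY, hxS⟩, fun h ↦ hx (.inr h)⟩

theorem exists_fin_isErgodicComponent [Countable G] [IsProbabilityMeasure μ]
    [ErgodicVAdd G X μ] (Λ : AddSubgroup G) [Λ.FiniteIndex] :
    ∃ (n : ℕ) (Y : Fin n → Set X), (∀ i, IsErgodicComponent μ Λ (Y i)) ∧
      Pairwise (Function.onFun Disjoint Y) ∧ μ (Set.univ \ ⋃ i, Y i) = 0 := by
  obtain ⟨𝒞, h𝒞, hC, hdisj, hcover⟩ := exists_finite_isErgodicComponent_of_index_mul_lt (μ := μ) Λ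
    (Λ.index + 1) .univ (fun g _ ↦ mem_aeStabilizer.2 .rfl)
    (by rw [measure_univ, mul_one]; exact_mod_cast Λ.index.lt_succ_self)
  obtain ⟨n, Y, hinj, rfl⟩ := h𝒞.fin_param
  exact ⟨n, Y, fun i ↦ (hC _ ⟨i, rfl⟩).1, fun i j hij ↦ hdisj ⟨i, rfl⟩ ⟨j, rfl⟩ (hinj.ne hij),
    Set.sUnion_range Y ▸ hcover⟩

end ErgodicComponents

section OrbitSequences

open Filter Topology

variable {G X β : Type*} [AddCommGroup G] [AddAction G X] {f : X → β} {w : G}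

/-- The two-sided sequence of values of `f` along the orbit of `x` under the translation `w`. -/
def orbitSeq (f : X → β) (w : G) (x : X) (n : ℤ) : β := f (n • w +ᵥ x)

lemma orbitSeq_zsmul_vadd (f : X → β) (w : G) (k : ℤ) (x : X) :
    orbitSeq f w (k • w +ᵥ x) = fun n ↦ orbitSeq f w x (n + k) := by
  ext n
  rw [orbitSeq, orbitSeq, vadd_vadd, add_smul]

lemma periodic_comp_add_right_iff {a : ℤ → β} {k m : ℤ} :
    Function.Periodic (fun n ↦ a (n + m)) k ↔ Function.Periodic a k := by
  refine ⟨fun h n ↦ ?_, fun h n ↦ ?_⟩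
  · simpa only [sub_add_cancel, sub_add_eq_add_sub] using h (n - m)
  · simpa only [add_right_comm] using h (n + m)

lemma isPeriodicSeq_comp_add_right_iff {a : ℤ → β} {m : ℤ} :
    IsPeriodicSeq (fun n ↦ a (n + m)) ↔ IsPeriodicSeq a := by
  simp only [IsPeriodicSeq, periodic_comp_add_right_iff]

variable [MeasurableSpace X]

lemma measurableSet_setOf_periodic_orbitSeq [MeasurableConstVAdd G X] [MeasurableSpace β]
    [MeasurableEq β] (hf : Measurable f) (w : G) (k : ℤ) :
    MeasurableSet {x | Function.Periodic (orbitSeq f w x) k} := by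
  simp only [Function.Periodic, Set.ofPred_forall]
  exact MeasurableSet.iInter fun n ↦ measurableSet_eq_fun
    (hf.comp (measurable_const_vadd _)) (hf.comp (measurable_const_vadd _))

lemma measurableSet_setOf_isPeriodicSeq_orbitSeq [MeasurableConstVAdd G X] [MeasurableSpace β]
    [MeasurableEq β] (hf : Measurable f) (w : G) :
    MeasurableSet {x | IsPeriodicSeq (orbitSeq f w x)} := by
  simp only [IsPeriodicSeq, Set.ofPred_exists, Set.ofPred_and]
  exact MeasurableSet.iUnion fun k ↦
    (MeasurableSet.const _).inter (measurableSet_setOf_periodic_orbitSeq hf w k)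

variable [MeasurableConstVAdd G X] {μ : Measure X}

section Invariance

variable [VAddInvariantMeasure G X μ]

lemma ae_periodic_of_mem_aeStabilizer [Countable G] {v : G} (hv : v ∈ aeStabilizer μ f) :
    ∀ᵐ x ∂μ, Function.Periodic (fun g : G ↦ f (g +ᵥ x)) v := by
  refine ae_all_iff.2 fun g ↦ ?_
  filter_upwards [(measurePreserving_vadd g μ).quasiMeasurePreserving.ae hv] with x hx
  rw [add_comm, add_vadd, hx]

lemma aeStabilizer_le_orbitSeq (f : X → β) (w : G) :
    (aeStabilizer μ f : AddSubgroup G) ≤ aeStabilizer μ (orbitSeq f w) := by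
  intro g hg
  have horbit : ∀ᵐ x ∂μ, ∀ n : ℤ, f (g +ᵥ n • w +ᵥ x) = f (n • w +ᵥ x) := ae_all_iff.2 fun n ↦
    (measurePreserving_vadd (n • w) μ).quasiMeasurePreserving.ae hg
  rw [mem_aeStabilizer]
  filter_upwards [horbit] with x hx
  ext n
  rw [orbitSeq, vadd_comm]
  exact hx n

lemma aeStabilizer_sup_zmultiples_le_orbitSeq (f : X → β) (w : G) {γ : Type*} {P : (ℤ → β) → γ}
    (hP : ∀ a m, P (fun n ↦ a (n + m)) = P a) :
    aeStabilizer μ f ⊔ AddSubgroup.zmultiples w ≤ aeStabilizer μ fun x ↦ P (orbitSeq f w x) := by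
  refine sup_le ((aeStabilizer_le_orbitSeq f w).trans (aeStabilizer_le_comp _ P)) ?_
  rintro _ ⟨k, rfl⟩
  refine mem_aeStabilizer.2 (.of_forall fun x ↦ ?_)
  simp only [orbitSeq_zsmul_vadd, hP]

lemma aeStabilizer_sup_zmultiples_le_periodic_orbitSeq (f : X → β) (w : G) (k : ℤ) :
    aeStabilizer μ f ⊔ AddSubgroup.zmultiples w ≤
      aeStabilizer μ (· ∈ {x | Function.Periodic (orbitSeq f w x) k}) :=
  aeStabilizer_sup_zmultiples_le_orbitSeq (P := (Function.Periodic · k)) f w fun _ _ ↦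
    propext periodic_comp_add_right_iff

lemma aeStabilizer_sup_zmultiples_le_isPeriodicSeq_orbitSeq (f : X → β) (w : G) :
    aeStabilizer μ f ⊔ AddSubgroup.zmultiples w ≤
      aeStabilizer μ (· ∈ {x | IsPeriodicSeq (orbitSeq f w x)}) :=
  aeStabilizer_sup_zmultiples_le_orbitSeq (P := IsPeriodicSeq) f w fun _ _ ↦
    propext isPeriodicSeq_comp_add_right_iff

end Invariance

/-- The points of period `k !` exhaust the periodic ones as `k → ∞`. -/
lemma exists_ae_periodic_orbitSeq [Countable G] [IsFiniteMeasure μ] [ErgodicVAdd G X μ]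
    [MeasurableSpace β] [MeasurableEq β] (hf : Measurable f)
    (hindex : (aeStabilizer μ f ⊔ AddSubgroup.zmultiples w).FiniteIndex) :
    ∃ k : ℤ, k ≠ 0 ∧
      ∀ᵐ x ∂μ, IsPeriodicSeq (orbitSeq f w x) → Function.Periodic (orbitSeq f w x) k := by
  let E : Set X := {x | IsPeriodicSeq (orbitSeq f w x)}
  let B (k : ℕ) : Set X := {x | Function.Periodic (orbitSeq f w x) (k.factorial : ℤ)}
  have hBmono : Monotone B := by
    intro k l hkl x hx
    obtain ⟨m, hm⟩ := Nat.factorial_dvd_factorial hkl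
    simpa [B, hm, mul_comm] using (show Function.Periodic _ _ from hx).int_mul m
  have hEB : E ⊆ ⋃ k, B k := by
    intro x hx
    obtain ⟨k, hk, hper⟩ := (show IsPeriodicSeq _ from hx).exists_pos_nat
    obtain ⟨m, hm⟩ := Nat.dvd_factorial hk le_rfl
    exact Set.mem_iUnion.2 ⟨k, by simpa [B, hm, mul_comm] using hper.int_mul m⟩
  have hinv (k : ℕ) : aeStabilizer μ f ⊔ AddSubgroup.zmultiples w ≤ aeStabilizer μ (· ∈ E \ B k) :=
    (le_inf (aeStabilizer_sup_zmultiples_le_isPeriodicSeq_orbitSeq f w)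
      (aeStabilizer_sup_zmultiples_le_periodic_orbitSeq f w _)).trans
        (aeStabilizer_inf_le_comp₂ (· ∈ E) (· ∈ B k) fun p q ↦ p ∧ ¬q)
  obtain ⟨k, hk⟩ := exists_measure_eq_zero_of_antitone (fun k ↦
    (measurableSet_setOf_isPeriodicSeq_orbitSeq hf w).diff
      (measurableSet_setOf_periodic_orbitSeq hf w _)) hinv
    (fun k l hkl ↦ Set.sdiff_subset_sdiff_right (hBmono hkl))
    (by rw [← Set.sdiff_iUnion, Set.sdiff_eq_empty.2 hEB])
  refine ⟨k.factorial, mod_cast k.factorial_ne_zero, ?_⟩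
  filter_upwards [measure_eq_zero_iff_ae_notMem.1 hk] with x hx hper
  exact not_not.1 fun h ↦ hx ⟨hper, h⟩

lemma exists_zsmul_mem_aeStabilizer_indicator_isPeriodicSeq [Countable G] [IsFiniteMeasure μ]
    [ErgodicVAdd G X μ] [Zero β] [MeasurableSpace β] [MeasurableEq β] (hf : Measurable f)
    (hindex : (aeStabilizer μ f ⊔ AddSubgroup.zmultiples w).FiniteIndex) :
    ∃ k : ℤ, k ≠ 0 ∧
      k • w ∈ aeStabilizer μ ({x | IsPeriodicSeq (orbitSeq f w x)}.indicator f) := by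
  obtain ⟨k, hk, hper⟩ := exists_ae_periodic_orbitSeq hf hindex
  refine ⟨k, hk, mem_aeStabilizer.2 ?_⟩
  filter_upwards [hper, aeStabilizer_sup_zmultiples_le_isPeriodicSeq_orbitSeq (μ := μ) f w
    (AddSubgroup.mem_sup_right ⟨k, rfl⟩)] with x hx hmem
  classical
  rw [Set.indicator_apply, Set.indicator_apply]
  refine if_congr (iff_of_eq hmem) rfl rfl |>.trans (ite_congr rfl (fun hxE ↦ ?_) fun _ ↦ rfl)
  simpa [orbitSeq] using hx hxE 0

end OrbitSequences

section Equidistribution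

open Filter Topology

lemma ext_of_integral_fourier_eq {T : ℝ} [Fact (0 < T)] {ρ ρ' : Measure (AddCircle T)}
    [IsFiniteMeasure ρ] [IsFiniteMeasure ρ']
    (h : ∀ j : ℤ, ∫ x, fourier j x ∂ρ = ∫ x, fourier j x ∂ρ') : ρ = ρ' := by
  have hint (τ : Measure (AddCircle T)) [IsFiniteMeasure τ] (f : C(AddCircle T, ℂ)) :
      Integrable f τ := f.continuous.integrable_of_hasCompactSupport (.of_compactSpace _)
  have hspan {f : C(AddCircle T, ℂ)} (hf : f ∈ Submodule.span ℂ (Set.range fourier)) :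
      ∫ x, f x ∂ρ = ∫ x, f x ∂ρ' := by
    induction hf using Submodule.span_induction with
    | mem f hf =>
      obtain ⟨j, rfl⟩ := hf
      exact h j
    | zero => simp
    | add f g _ _ hf hg =>
      simp only [ContinuousMap.add_apply]
      rw [integral_add (hint ρ f) (hint ρ g), integral_add (hint ρ' f) (hint ρ' g), hf, hg]
    | smul c f _ hf =>
      simp only [ContinuousMap.smul_apply]
      rw [integral_smul, integral_smul, hf]
  let Φ := BoundedContinuousFunction.toContinuousMapStarₐ ℂ (α := AddCircle T) (β := ℂ)
  refine ext_of_forall_mem_subalgebra_integral_eq_of_polish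
    (A := fourierSubalgebra.comap Φ) (fun x y hxy ↦ ?_) fun g hg ↦ hspan (f := Φ g) ?_
  · obtain ⟨_, ⟨f, hf, rfl⟩, hne⟩ := fourierSubalgebra_separatesPoints hxy
    exact ⟨_, ⟨f, ⟨.mkOfCompact f, hf, rfl⟩, rfl⟩, hne⟩
  · rw [← fourierSubalgebra_coe]
    exact hg

lemma eq_smul_volume_of_integral_fourier_eq_zero {ρ : Measure UnitAddCircle} [IsFiniteMeasure ρ]
    (h : ∀ j : ℤ, j ≠ 0 → ∫ x, fourier j x ∂ρ = 0) : ρ = ρ Set.univ • volume := by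
  have := (volume : Measure UnitAddCircle).smul_finite (measure_ne_top ρ Set.univ)
  refine ext_of_integral_fourier_eq fun j ↦ ?_
  rw [integral_smul_measure]
  obtain rfl | hj := eq_or_ne j 0
  · simp [Measure.real]
  · rw [h j hj, integral_eq_zero_of_add_right_eq_neg (fourier_add_half_inv_index hj zero_lt_one),
      smul_zero]

lemma coe_equivIco_coe_of_ne_zero {r : ℝ} (hr : r ∈ Set.Icc 0 1) (h : (r : UnitAddCircle) ≠ 0) :
    (AddCircle.equivIco 1 0 (r : UnitAddCircle) : ℝ) = r := by
  have hr1 : r ≠ 1 := by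
    rintro rfl
    exact h (AddCircle.coe_period 1)
  rw [AddCircle.equivIco_coe_eq ⟨hr.1, by simpa using lt_of_le_of_ne hr.2 hr1⟩]

lemma integral_equivIco : ∫ x : UnitAddCircle, (AddCircle.equivIco 1 0 x : ℝ) = 1 / 2 := by
  calc ∫ x : UnitAddCircle, (AddCircle.equivIco 1 0 x : ℝ)
    _ = ∫ r in Set.Ioo (0 : ℝ) 1, (AddCircle.equivIco 1 0 (r : UnitAddCircle) : ℝ) := by
      rw [← integral_Ioc_eq_integral_Ioo]
      simpa only [zero_add] using (UnitAddCircle.integral_preimage 0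
        fun x ↦ (AddCircle.equivIco 1 0 x : ℝ)).symm
    _ = ∫ r in Set.Ioo (0 : ℝ) 1, r := by
      refine setIntegral_congr_fun measurableSet_Ioo fun r hr ↦ ?_
      exact congrArg _ (AddCircle.equivIco_coe_eq ⟨hr.1.le, by simpa using hr.2⟩)
    _ = 1 / 2 := by
      rw [← integral_Ioc_eq_integral_Ioo, ← intervalIntegral.integral_of_le zero_le_one]
      norm_num

variable {X : Type*} [MeasurableSpace X] {ν : Measure X}

lemma integral_eq_half_of_integral_fourier_eq_zero [IsFiniteMeasure ν] {Q : X → ℝ}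
    (hQ : Measurable Q) (hmem : ∀ᵐ x ∂ν, Q x ∈ Set.Icc 0 1)
    (h : ∀ j : ℤ, j ≠ 0 → ∫ x, fourier j (Q x : UnitAddCircle) ∂ν = 0) :
    ∫ x, Q x ∂ν = ν.real Set.univ / 2 := by
  have hQc : Measurable fun x ↦ (Q x : UnitAddCircle) := AddCircle.measurable_mk'.comp hQ
  have hmap : ν.map (fun x ↦ (Q x : UnitAddCircle)) = ν Set.univ • volume := by
    rw [eq_smul_volume_of_integral_fourier_eq_zero (ρ := ν.map fun x ↦ (Q x : UnitAddCircle)),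
      Measure.map_apply hQc .univ, Set.preimage_univ]
    intro j hj
    rw [integral_map hQc.aemeasurable (fourier j).continuous.aestronglyMeasurable, h j hj]
  have hne : ∀ᵐ x ∂ν, (Q x : UnitAddCircle) ≠ 0 := by
    refine ae_of_ae_map (p := (· ≠ 0)) hQc.aemeasurable ?_
    rw [hmap]
    have hvolume : volume {(0 : UnitAddCircle)} = 0 := by
      rw [← Metric.closedBall_zero, AddCircle.volume_closedBall]
      simp
    exact Measure.ae_smul_measure (measure_eq_zero_iff_ae_notMem.1 hvolume) _
  have hrepr : Measurable fun y : UnitAddCircle ↦ (AddCircle.equivIco 1 0 y : ℝ) :=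
    (AddCircle.measurableEquivIco 1 0).measurable.subtype_val
  calc ∫ x, Q x ∂ν
    _ = ∫ x, (AddCircle.equivIco 1 0 (Q x : UnitAddCircle) : ℝ) ∂ν := by
      refine integral_congr_ae ?_
      filter_upwards [hmem, hne] with x hx hx0 using (coe_equivIco_coe_of_ne_zero hx hx0).symm
    _ = ∫ y : UnitAddCircle, (AddCircle.equivIco 1 0 y : ℝ) ∂(ν Set.univ • volume) := by
      rw [← hmap, integral_map hQc.aemeasurable hrepr.aestronglyMeasurable]
    _ = ν.real Set.univ / 2 := by
      rw [integral_smul_measure, integral_equivIco, smul_eq_mul, mul_one_div, Measure.real]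

lemma integral_eq_zero_of_tendsto_cesaroMean_iterate [IsFiniteMeasure ν] {E : Type*}
    [NormedAddCommGroup E] [NormedSpace ℝ E] {U : X → X} (hU : MeasurePreserving U ν ν)
    {f : X → E} (hf : StronglyMeasurable f) {C : ℝ} (hC : ∀ x, ‖f x‖ ≤ C)
    (h : ∀ᵐ x ∂ν, Tendsto (cesaroMean fun n ↦ f (U^[n] x)) atTop (𝓝 0)) :
    ∫ x, f x ∂ν = 0 := by
  have hint (n : ℕ) : Integrable (fun x ↦ f (U^[n] x)) ν :=
    .of_bound (hf.comp_measurable (hU.iterate n).measurable).aestronglyMeasurable C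
      (.of_forall fun x ↦ hC _)
  have hlim : Tendsto (fun N ↦ ∫ x, cesaroMean (fun n ↦ f (U^[n] x)) N ∂ν) atTop
      (𝓝 (∫ _, (0 : E) ∂ν)) := by
    refine tendsto_integral_of_dominated_convergence (fun _ ↦ C) (fun N ↦ ?_) (integrable_const _)
      (fun N ↦ .of_forall fun x ↦ (norm_cesaroMean_le _ N).trans
        (cesaroMean_le_of_le ((norm_nonneg _).trans (hC x)) (fun n ↦ hC _) N)) h
    exact ((integrable_finsetSum _ fun n _ ↦ hint n).smul _).aestronglyMeasurable
  rw [integral_zero] at hlim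
  refine tendsto_nhds_unique (tendsto_const_nhds.congr' ?_) hlim
  filter_upwards [eventually_ne_atTop 0] with N hN
  simp only [cesaroMean]
  rw [integral_smul, integral_finsetSum _ fun n _ ↦ hint n]
  have hconst (n : ℕ) : ∫ x, f (U^[n] x) ∂ν = ∫ x, f x ∂ν := by
    rw [← integral_map (hU.iterate n).measurable.aemeasurable hf.aestronglyMeasurable,
      (hU.iterate n).map_eq]
  simp only [hconst, Finset.sum_const, Finset.card_range]
  rw [← Nat.cast_smul_eq_nsmul ℝ, inv_smul_smul₀ (Nat.cast_ne_zero.2 hN)]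

end Equidistribution

section ReductionModOne

open AddSubgroup Filter Topology

lemma IsPolySeq.tendsto_cesaroMean_fourier_add {m : ℕ} {a : ℤ → UnitAddCircle}
    (ha : IsPolySeq m a) (hper : ¬IsPeriodicSeq a) (c : UnitAddCircle) {j L : ℤ} (hj : j ≠ 0)
    (hL : L ≠ 0) :
    Tendsto (cesaroMean fun n ↦ fourier j (c + a (L * n))) atTop (𝓝 0) := by
  have hlim := (ha.zsmul_comp_mul j L).tendsto_cesaroMean_toCircle fun h ↦
    hper (ha.isPeriodicSeq_of_zsmul_comp_mul hj hL h)
  refine (mul_zero (fourier j c) ▸ hlim.const_mul (fourier j c)).congr fun N ↦ ?_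
  rw [← LinearMap.mulLeft_apply ℝ, map_cesaroMean]
  simp only [LinearMap.mulLeft_apply, fourier_apply, smul_add, AddCircle.toCircle_add,
    Circle.coe_mul]

/-- The reduction of a real function modulo `1`. -/
noncomputable def modOne {X : Type*} (F : X → ℝ) (x : X) : UnitAddCircle := F x

lemma measurable_modOne {X : Type*} [MeasurableSpace X] {F : X → ℝ} (hF : Measurable F) :
    Measurable (modOne F) := AddCircle.measurable_mk'.comp hF

variable {G X : Type*} [AddCommGroup G] [AddAction G X] [MeasurableSpace X]
  [MeasurableConstVAdd G X] {μ : Measure X} [VAddInvariantMeasure G X μ] {A : Set X}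
  {n : ℕ} {f : Lp ℝ 2 μ} {v : Fin n → G} {F : Fin n → Lp ℝ 2 μ} {s : Fin n} {w : G}

lemma measurable_Lp (F : Lp ℝ 2 μ) : Measurable F := (Lp.stronglyMeasurable F).measurable

lemma aeStabilizer_le_modOne (F : X → ℝ) :
    (aeStabilizer μ F : AddSubgroup G) ≤ aeStabilizer μ (modOne F) :=
  aeStabilizer_le_comp F fun r ↦ (r : UnitAddCircle)

/-- Modulo `1`, the function `F s` is minus the sum of the other `F t`, as the sum of all of them
takes integer values. -/
lemma IsTransverseDecomposition.ae_isPolySeq_orbitSeq [Countable G]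
    (h : IsTransverseDecomposition f v F) (hf : f =ᵐ[μ] A.indicator 1)
    (hw : ∀ t ≠ s, w ∈ zmultiples (v s) ⊔ zmultiples (v t)) :
    ∀ᵐ x ∂μ, ∃ m, IsPolySeq m (orbitSeq (modOne (F s)) w x) := by
  have hsum : ∀ᵐ x ∂μ, ∑ t, modOne (F t) x = 0 := by
    filter_upwards [hf, h.sum_eq ▸ Lp.coeFn_finsetSum Finset.univ F] with x hx hxsum
    rw [hx, Finset.sum_apply] at hxsum
    calc ∑ t, modOne (F t) x
      _ = ((∑ t, F t x : ℝ) : UnitAddCircle) :=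
        (map_sum (QuotientAddGroup.mk' (zmultiples (1 : ℝ))) (fun t ↦ F t x) Finset.univ).symm
      _ = 0 := by
        rw [← hxsum]
        by_cases hxA : x ∈ A <;> simp [hxA]
  have hsum' : ∀ᵐ x ∂μ, ∀ g : G, ∑ t, modOne (F t) (g +ᵥ x) = 0 := ae_all_iff.2 fun g ↦
    (measurePreserving_vadd g μ).quasiMeasurePreserving.ae hsum
  have hper : ∀ᵐ x ∂μ, ∀ t, Function.Periodic (fun g ↦ modOne (F t) (g +ᵥ x)) (v t) :=
    ae_all_iff.2 fun t ↦ ae_periodic_of_mem_aeStabilizer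
      (aeStabilizer_le_modOne _ (h.mem_aeStabilizer t))
  filter_upwards [hsum', hper] with x hxsum hxper
  refine ⟨(Finset.univ.erase s).card, ?_⟩
  have hpoly := IsPolySeq.of_eq_sum (V := Finset.univ.erase s) (hxper s)
    (αs := fun t g ↦ -modOne (F t) (g +ᵥ x)) (fun t _ ↦ (hxper t).comp Neg.neg)
    (fun t ht ↦ hw t (Finset.ne_of_mem_erase ht)) (by
      ext g
      rw [Finset.sum_apply, Finset.sum_neg_distrib, eq_neg_iff_add_eq_zero,
        Finset.add_sum_erase _ (fun t ↦ modOne (F t) (g +ᵥ x)) (Finset.mem_univ s), hxsum]) 0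
  simp only [zero_add] at hpoly
  exact hpoly

end ReductionModOne

section NonperiodicCase

open AddSubgroup Filter Topology

variable {G X : Type*} [AddCommGroup G] [AddAction G X] [MeasurableSpace X]
  [MeasurableConstVAdd G X] {μ : Measure X} [VAddInvariantMeasure G X μ] {A Y : Set X}
  {n : ℕ} {f : Lp ℝ 2 μ} {v : Fin n → G} {F : Fin n → Lp ℝ 2 μ} {s : Fin n} {w : G}

lemma nsmul_mem_zmultiples_nsmul_sup {v w u : G} (h : w ∈ zmultiples v ⊔ zmultiples u) (L : ℕ) :
    L • w ∈ zmultiples (L • v) ⊔ zmultiples u := by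
  obtain ⟨_, ⟨i, rfl⟩, _, ⟨j, rfl⟩, rfl⟩ := mem_sup.1 h
  rw [smul_add]
  exact add_mem (mem_sup_left ⟨i, smul_comm ..⟩)
    (mem_sup_right (nsmul_mem (zsmul_mem_zmultiples u j) L))

lemma IsTransverseDecomposition.nsmul_mem_aeStabilizer_sub (h : IsTransverseDecomposition f v F)
    (hw : ∀ t ≠ s, w ∈ zmultiples (v s) ⊔ zmultiples (v t)) (L : ℕ) :
    L • w ∈ aeStabilizer μ ↑(invariantPart μ (L • v s) f - F s) := by
  refine le_aeStabilizer_invariantPart_sub h.sum_eq (nsmul_mem (h.mem_aeStabilizer s) L)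
    (fun t ht ↦ zmultiples_le_of_mem ?_) (mem_zmultiples (L • w))
  exact sup_le_sup_left (zmultiples_le_of_mem (h.mem_aeStabilizer t)) _
    (nsmul_mem_zmultiples_nsmul_sup (hw t ht) L)

lemma IsTransverseDecomposition.ae_modOne_invariantPart_eq_add_orbitSeq [Countable G]
    (h : IsTransverseDecomposition f v F)
    (hw : ∀ t ≠ s, w ∈ zmultiples (v s) ⊔ zmultiples (v t)) (L : ℕ) :
    ∀ᵐ x ∂μ, ∃ c, ∀ n : ℕ, modOne (invariantPart μ (L • v s) f) (n • L • w +ᵥ x) =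
      c + orbitSeq (modOne (F s)) w x (L * n) := by
  set Q := invariantPart μ (L • v s) f
  have hsub : ∀ᵐ x ∂μ, ∀ g : G, (Q - F s : Lp ℝ 2 μ) (g +ᵥ x) = Q (g +ᵥ x) - F s (g +ᵥ x) :=
    ae_all_iff.2 fun g ↦
      (measurePreserving_vadd g μ).quasiMeasurePreserving.ae (Lp.coeFn_sub Q (F s))
  filter_upwards [hsub, ae_periodic_of_mem_aeStabilizer (h.nsmul_mem_aeStabilizer_sub hw L)]
    with x hxsub hxper
  refine ⟨modOne (Q - F s : Lp ℝ 2 μ) x, fun n ↦ ?_⟩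
  have hx := hxper.nsmul_eq n
  rw [zero_vadd, hxsub] at hx
  rw [modOne, modOne, orbitSeq, modOne, ← hx, mul_comm, mul_smul, natCast_zsmul, natCast_zsmul,
    ← AddCircle.coe_add, sub_add_cancel]

lemma IsTransverseDecomposition.integral_fourier_eq_zero [Countable G] [IsFiniteMeasure μ]
    (h : IsTransverseDecomposition f v F) (hf : f =ᵐ[μ] A.indicator 1)
    (hw : ∀ t ≠ s, w ∈ zmultiples (v s) ⊔ zmultiples (v t)) (hY : MeasurableSet Y) {L : ℕ}
    (hL : L ≠ 0) (hwY : L • w ∈ aeStabilizer μ (· ∈ Y))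
    (hnonper : ∀ᵐ x ∂μ.restrict Y, ¬IsPeriodicSeq (orbitSeq (modOne (F s)) w x)) {j : ℤ}
    (hj : j ≠ 0) :
    ∫ x in Y, fourier j (modOne (invariantPart μ (L • v s) f) x) ∂μ = 0 := by
  refine integral_eq_zero_of_tendsto_cesaroMean_iterate (measurePreserving_vadd_restrict hY hwY)
    ?_ (C := 1) (fun x ↦ ?_) ?_
  · exact (fourier j).continuous.stronglyMeasurable.comp_measurable
      (measurable_modOne (measurable_Lp _))
  · rw [fourier_apply, Circle.norm_coe]
  · filter_upwards [hnonper, ae_restrict_of_ae (h.ae_isPolySeq_orbitSeq hf hw),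
      ae_restrict_of_ae (h.ae_modOne_invariantPart_eq_add_orbitSeq hw L)] with x hx ⟨m, hm⟩ ⟨c, hc⟩
    simp only [vadd_iterate, hc]
    exact hm.tendsto_cesaroMean_fourier_add hx c hj (mod_cast hL)

lemma IsTransverseDecomposition.measure_inter_eq_half [Countable G] [IsFiniteMeasure μ]
    (h : IsTransverseDecomposition f v F) (hf : f =ᵐ[μ] A.indicator 1) (hA : MeasurableSet A)
    (hw : ∀ t ≠ s, w ∈ zmultiples (v s) ⊔ zmultiples (v t)) (hY : MeasurableSet Y) {L : ℕ}
    (hL : L ≠ 0) (hvY : L • v s ∈ aeStabilizer μ (· ∈ Y)) (hwY : L • w ∈ aeStabilizer μ (· ∈ Y))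
    (hnonper : ∀ᵐ x ∂μ.restrict Y, ¬IsPeriodicSeq (orbitSeq (modOne (F s)) w x)) :
    μ (Y ∩ A) = μ Y / 2 := by
  have hreal : μ.real (Y ∩ A) = μ.real Y / 2 := by
    calc μ.real (Y ∩ A) = ∫ x in Y, f x ∂μ := by
          rw [setIntegral_congr_ae hY (hf.mono fun x hx _ ↦ hx), setIntegral_indicator hA]
          simp
      _ = ∫ x in Y, invariantPart μ (L • v s) f x ∂μ := (setIntegral_invariantPart f hY hvY).symm
      _ = (μ.restrict Y).real Set.univ / 2 := by
          refine integral_eq_half_of_integral_fourier_eq_zero (measurable_Lp _)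
            (ae_restrict_of_ae ((ae_invariantPart_mem_Icc hf _).mono fun x hx ↦ hx.1)) fun j hj ↦ ?_
          exact h.integral_fourier_eq_zero hf hw hY hL hwY hnonper hj
      _ = μ.real Y / 2 := by rw [measureReal_restrict_apply_univ]
  rwa [← ENNReal.toReal_eq_toReal_iff' (measure_ne_top μ _) (by finiteness), ENNReal.toReal_div]

end NonperiodicCase

section Adapted

open AddSubgroup

variable {G X : Type*} [AddCommGroup G] [AddAction G X] [MeasurableSpace X]
  [MeasurableConstVAdd G X] {μ : Measure X} [VAddInvariantMeasure G X μ] {n : ℕ}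

/-- For each index `s`, a translation `w s` along which the orbits of `F s` are sampled, with a
finite index subgroup `Λ` small enough for the argument on each of its ergodic components. The
last field says that where the orbit sequence of `F s` modulo `1` is periodic, `Λ` fixes it. -/
structure IsAdapted (μ : Measure X) [VAddInvariantMeasure G X μ] (v : Fin n → G)
    (F : Fin n → Lp ℝ 2 μ) (w : Fin n → G) (Λ : AddSubgroup G) : Prop where
  finiteIndex : Λ.FiniteIndex
  mem_sup : ∀ s t, t ≠ s → w s ∈ zmultiples (v s) ⊔ zmultiples (v t)
  le_sup : ∀ s t, t ≠ s → Λ ≤ zmultiples (v s) ⊔ zmultiples (v t)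
  le_sup_step : ∀ s, Λ ≤ zmultiples (v s) ⊔ zmultiples (w s)
  le_aeStabilizer : ∀ s, Λ ≤ aeStabilizer μ
    ({x | IsPeriodicSeq (orbitSeq (modOne (F s)) (w s) x)}.indicator (modOne (F s)))

lemma exists_mem_zmultiples_sup_zmultiples {v : Fin n → ℤ × ℤ}
    (hv : Pairwise fun s t ↦ (zmultiples (v s) ⊔ zmultiples (v t)).FiniteIndex) {s : Fin n}
    (hs : v s ≠ 0) : ∃ w, (zmultiples (v s) ⊔ zmultiples w).FiniteIndex ∧
      ∀ t ≠ s, w ∈ zmultiples (v s) ⊔ zmultiples (v t) := by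
  obtain ⟨u, hu⟩ := exists_zmultiples_sup_zmultiples_finiteIndex hs
  let H : AddSubgroup (ℤ × ℤ) := ⨅ t : {t // t ≠ s}, zmultiples (v s) ⊔ zmultiples (v t)
  have hH : H.FiniteIndex := finiteIndex_iInf fun t ↦ hv t.2.symm
  refine ⟨(H.index : ℤ) • u, finiteIndex_sup_zmultiples_zsmul hu
    (Int.natCast_ne_zero.2 hH.index_ne_zero), fun t ht ↦ ?_⟩
  rw [natCast_zsmul]
  exact iInf_le (fun t : {t // t ≠ s} ↦ zmultiples (v s) ⊔ zmultiples (v t)) ⟨t, ht⟩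
    (H.nsmul_index_mem u)

lemma aeStabilizer_le_indicator_isPeriodicSeq {β : Type*} [Zero β] (f : X → β) (w : G) :
    (aeStabilizer μ f : AddSubgroup G) ≤
      aeStabilizer μ ({x | IsPeriodicSeq (orbitSeq f w x)}.indicator f) := by
  classical
  exact (le_inf (le_sup_left.trans (aeStabilizer_sup_zmultiples_le_isPeriodicSeq_orbitSeq f w))
    le_rfl).trans (aeStabilizer_inf_le_comp₂ _ f fun (p : Prop) y ↦ if p then y else 0)

lemma IsTransverseDecomposition.exists_isAdapted [AddAction (ℤ × ℤ) X]
    [MeasurableConstVAdd (ℤ × ℤ) X] [ErgodicVAdd (ℤ × ℤ) X μ] [IsFiniteMeasure μ]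
    {f : Lp ℝ 2 μ} {v : Fin n → ℤ × ℤ} {F : Fin n → Lp ℝ 2 μ}
    (h : IsTransverseDecomposition f v F) : ∃ w Λ, IsAdapted μ v F w Λ := by
  choose w hw hmem using fun s ↦ exists_mem_zmultiples_sup_zmultiples h.finiteIndex (h.ne_zero s)
  have hle (s : Fin n) : zmultiples (v s) ≤ aeStabilizer μ (modOne (F s)) :=
    (zmultiples_le_of_mem (h.mem_aeStabilizer s)).trans (aeStabilizer_le_modOne _)
  have hindex (s : Fin n) :
      (aeStabilizer μ (modOne (F s)) ⊔ zmultiples (w s) : AddSubgroup (ℤ × ℤ)).FiniteIndex :=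
    have := hw s
    finiteIndex_of_le (sup_le_sup_right (hle s) _)
  choose k hk hper using fun s ↦ exists_zsmul_mem_aeStabilizer_indicator_isPeriodicSeq
    (measurable_modOne (measurable_Lp (F s))) (hindex s)
  let K (s : Fin n) := zmultiples (v s) ⊔ zmultiples (k s • w s)
  let H (p : {p : Fin n × Fin n // p.2 ≠ p.1}) := zmultiples (v p.1.1) ⊔ zmultiples (v p.1.2)
  have hK : (⨅ s, K s).FiniteIndex :=
    finiteIndex_iInf fun s ↦ finiteIndex_sup_zmultiples_zsmul (hw s) (hk s)
  have hH : (⨅ p, H p).FiniteIndex := finiteIndex_iInf fun p ↦ h.finiteIndex p.2.symm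
  refine ⟨w, (⨅ s, K s) ⊓ ⨅ p, H p, inferInstance, hmem, fun s t ht ↦ ?_, fun s ↦ ?_,
    fun s ↦ ?_⟩
  · exact inf_le_right.trans (iInf_le H ⟨(s, t), ht⟩)
  · refine inf_le_left.trans ((iInf_le K s).trans (sup_le_sup_left ?_ _))
    exact zmultiples_le_of_mem (zsmul_mem_zmultiples _ _)
  · refine inf_le_left.trans ((iInf_le K s).trans (sup_le ?_ (zmultiples_le_of_mem (hper s))))
    exact (hle s).trans (aeStabilizer_le_indicator_isPeriodicSeq _ _)

end Adapted

section PeriodicCase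

open AddSubgroup

variable {G X : Type*} [AddCommGroup G] [AddAction G X] [MeasurableSpace X]
  [MeasurableConstVAdd G X] {μ : Measure X} [VAddInvariantMeasure G X μ] {A Y : Set X}
  {n : ℕ} {f : Lp ℝ 2 μ} {v w : Fin n → G} {F : Fin n → Lp ℝ 2 μ} {Λ : AddSubgroup G}

lemma IsAdapted.ae_isPeriodicSeq_or_ae_not (hΛ : IsAdapted μ v F w Λ)
    (h : IsTransverseDecomposition f v F) (hY : IsErgodicComponent μ Λ Y) (s : Fin n) :
    (∀ᵐ x ∂μ.restrict Y, IsPeriodicSeq (orbitSeq (modOne (F s)) (w s) x)) ∨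
      ∀ᵐ x ∂μ.restrict Y, ¬IsPeriodicSeq (orbitSeq (modOne (F s)) (w s) x) := by
  set E : Set X := {x | IsPeriodicSeq (orbitSeq (modOne (F s)) (w s) x)}
  have hE : MeasurableSet E :=
    measurableSet_setOf_isPeriodicSeq_orbitSeq (measurable_modOne (measurable_Lp _)) _
  have hΛE : Λ ≤ aeStabilizer μ (· ∈ E) := by
    refine (hΛ.le_sup_step s).trans ((sup_le_sup_right (zmultiples_le_of_mem ?_) _).trans
      (aeStabilizer_sup_zmultiples_le_isPeriodicSeq_orbitSeq _ _))
    exact aeStabilizer_le_modOne _ (h.mem_aeStabilizer s)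
  rw [ae_restrict_iff' hY.measurableSet, ae_restrict_iff' hY.measurableSet]
  refine (hY.null_inter_or_null_diff E hE hΛE).symm.imp (fun h₀ ↦ ?_) fun h₀ ↦ ?_
  · filter_upwards [measure_eq_zero_iff_ae_notMem.1 h₀] with x hx hxY
    exact not_not.1 fun hxE ↦ hx ⟨hxY, hxE⟩
  · filter_upwards [measure_eq_zero_iff_ae_notMem.1 h₀] with x hx hxY hxE using hx ⟨hxY, hxE⟩

lemma IsAdapted.le_aeStabilizer_sub (hΛ : IsAdapted μ v F w Λ)
    (h : IsTransverseDecomposition f v F) (s : Fin n) :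
    Λ ≤ aeStabilizer μ ↑(invariantPart μ (v s) f - F s) :=
  le_aeStabilizer_invariantPart_sub h.sum_eq (h.mem_aeStabilizer s) fun t ht ↦
    (hΛ.le_sup s t ht).trans (sup_le_sup_left (zmultiples_le_of_mem (h.mem_aeStabilizer t)) _)

lemma IsAdapted.exists_ae_modOne_invariantPart_eq_const (hΛ : IsAdapted μ v F w Λ)
    (h : IsTransverseDecomposition f v F) (hY : IsErgodicComponent μ Λ Y) {s : Fin n}
    (hper : ∀ᵐ x ∂μ.restrict Y, IsPeriodicSeq (orbitSeq (modOne (F s)) (w s) x)) :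
    ∃ c, ∀ᵐ x ∂μ.restrict Y, modOne (invariantPart μ (v s) f) x = c := by
  set E : Set X := {x | IsPeriodicSeq (orbitSeq (modOne (F s)) (w s) x)}
  set C := invariantPart μ (v s) f - F s with hC
  have hE : MeasurableSet E :=
    measurableSet_setOf_isPeriodicSeq_orbitSeq (measurable_modOne (measurable_Lp _)) _
  obtain ⟨c, hc⟩ := hY.exists_ae_eq_const
    (φ := fun x ↦ modOne C x + E.indicator (modOne (F s)) x)
    ((measurable_modOne (measurable_Lp C)).add
      ((measurable_modOne (measurable_Lp (F s))).indicator hE))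
    ((le_inf ((hΛ.le_aeStabilizer_sub h s).trans (aeStabilizer_le_modOne _))
      (hΛ.le_aeStabilizer s)).trans (aeStabilizer_inf_le_comp₂ _ _ (· + ·)))
  refine ⟨c, ?_⟩
  filter_upwards [hc, hper, ae_restrict_of_ae (Lp.coeFn_sub (invariantPart μ (v s) f) (F s))]
    with x hx hxE hsub
  rw [← hx, Set.indicator_of_mem (show x ∈ E from hxE), modOne, modOne, modOne, hC, hsub,
    Pi.sub_apply, ← AddCircle.coe_add, sub_add_cancel]

lemma aeStabilizer_inf_le_inter {φ : X → ℝ} (hY : MeasurableSet Y)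
    (hφ : ∀ᵐ x ∂μ.restrict Y, x ∈ A ↔ φ x = 1) :
    aeStabilizer μ (· ∈ Y) ⊓ aeStabilizer μ φ ≤ (aeStabilizer μ (· ∈ Y ∩ A) : AddSubgroup G) := by
  have heq : (· ∈ Y ∩ A) =ᵐ[μ] fun x ↦ x ∈ Y ∧ φ x = 1 := by
    filter_upwards [(ae_restrict_iff' hY).1 hφ] with x hx using propext (and_congr_right hx)
  rw [aeStabilizer_congr heq]
  exact aeStabilizer_inf_le_comp₂ _ φ fun p y ↦ p ∧ y = 1

/-- Here `invariantPart μ v f` only takes the values `0` and `1` on `Y`, so it is equal to `f`. -/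
lemma aeStabilizer_inf_zmultiples_le_inter [IsFiniteMeasure μ] (hf : f =ᵐ[μ] A.indicator 1)
    (hY : MeasurableSet Y) {v : G}
    (hzero : ∀ᵐ x ∂μ.restrict Y, modOne (invariantPart μ v f) x = 0) :
    aeStabilizer μ (· ∈ Y) ⊓ zmultiples v ≤ aeStabilizer μ (· ∈ Y ∩ A) := by
  refine (inf_le_inf_left _ (zmultiples_le_aeStabilizer_invariantPart v f)).trans
    (aeStabilizer_inf_le_inter hY ?_)
  filter_upwards [hzero, ae_restrict_of_ae (ae_invariantPart_mem_Icc hf v)]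
    with x hx ⟨hmem, hx0, hx1⟩
  refine ⟨fun hxA ↦ by_contra fun hne ↦ hx0 ?_ hxA, hx1⟩
  exact (AddCircle.coe_eq_zero_iff_of_mem_Ico ⟨hmem.1, lt_of_le_of_ne hmem.2 hne⟩).1 hx

lemma IsAdapted.exists_ae_eq_const (hΛ : IsAdapted μ v F w Λ) [IsFiniteMeasure μ]
    (h : IsTransverseDecomposition f v F) (hf : f =ᵐ[μ] A.indicator 1)
    (hY : IsErgodicComponent μ Λ Y) {s : Fin n} {c : UnitAddCircle} (hc : c ≠ 0)
    (hQ : ∀ᵐ x ∂μ.restrict Y, modOne (invariantPart μ (v s) f) x = c) :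
    ∃ r, ∀ᵐ x ∂μ.restrict Y, F s x = r := by
  obtain ⟨r, hr⟩ := hY.exists_ae_eq_const (measurable_Lp _) (hΛ.le_aeStabilizer_sub h s)
  refine ⟨AddCircle.equivIco 1 0 c - r, ?_⟩
  filter_upwards [hr, hQ, ae_restrict_of_ae (ae_invariantPart_mem_Icc hf (v s)),
    ae_restrict_of_ae (Lp.coeFn_sub (invariantPart μ (v s) f) (F s))] with x hxr hxQ hmem hsub
  rw [hsub, Pi.sub_apply] at hxr
  have hlift := coe_equivIco_coe_of_ne_zero hmem.1 (hxQ.trans_ne hc)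
  rw [modOne] at hxQ
  rw [← hxr, ← hxQ, hlift, sub_sub_cancel]

lemma le_aeStabilizer_inter_of_ae_eq_const {ι : Type*} [Fintype ι] {F : ι → Lp ℝ 2 μ}
    (hF : ∑ s, F s = f) (hf : f =ᵐ[μ] A.indicator 1) (hY : MeasurableSet Y)
    (hconst : ∀ s, ∃ r, ∀ᵐ x ∂μ.restrict Y, F s x = r) :
    aeStabilizer μ (· ∈ Y) ≤ (aeStabilizer μ (· ∈ Y ∩ A) : AddSubgroup G) := by
  choose r hr using hconst
  have htop : (aeStabilizer μ fun _ : X ↦ ∑ s, r s) = (⊤ : AddSubgroup G) :=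
    eq_top_iff.2 fun g _ ↦ mem_aeStabilizer.2 .rfl
  rw [← inf_top_eq (aeStabilizer μ (· ∈ Y)), ← htop]
  refine aeStabilizer_inf_le_inter hY ?_
  filter_upwards [ae_all_iff.2 hr, ae_restrict_of_ae hf,
    ae_restrict_of_ae (hF ▸ Lp.coeFn_finsetSum Finset.univ F)] with x hxr hx hxsum
  have hind : A.indicator 1 x = ∑ s, r s := by
    rw [← hx, hxsum, Finset.sum_apply]
    exact Finset.sum_congr rfl fun s _ ↦ hxr s
  rw [← hind]
  by_cases hxA : x ∈ A <;> simp [hxA]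

theorem IsAdapted.exists_mem_aeStabilizer_or_measure_inter_eq_half [Countable G]
    [IsAddTorsionFree G] [Nontrivial G] [IsFiniteMeasure μ] (hΛ : IsAdapted μ v F w Λ)
    (h : IsTransverseDecomposition f v F) (hf : f =ᵐ[μ] A.indicator 1) (hA : MeasurableSet A)
    (hY : IsErgodicComponent μ Λ Y) :
    (∃ g : G, g ≠ 0 ∧ g ∈ aeStabilizer μ (· ∈ Y ∩ A)) ∨ μ (Y ∩ A) = μ Y / 2 := by
  have := hΛ.finiteIndex
  have hL := this.index_ne_zero
  have hmem (g : G) : Λ.index • g ∈ aeStabilizer μ (· ∈ Y) :=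
    hY.le_aeStabilizer (Λ.nsmul_index_mem g)
  by_cases hper : ∀ s, ∀ᵐ x ∂μ.restrict Y, IsPeriodicSeq (orbitSeq (modOne (F s)) (w s) x)
  · left
    choose c hc using fun s ↦ hΛ.exists_ae_modOne_invariantPart_eq_const h hY (hper s)
    by_cases hc₀ : ∃ s, c s = 0
    · obtain ⟨s, hs⟩ := hc₀
      refine ⟨Λ.index • v s, smul_ne_zero hL (h.ne_zero s),
        aeStabilizer_inf_zmultiples_le_inter hf hY.measurableSet (hs ▸ hc s)
          ⟨hmem _, nsmul_mem (mem_zmultiples _) _⟩⟩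
    · push Not at hc₀
      obtain ⟨g, hg⟩ := exists_ne (0 : G)
      exact ⟨Λ.index • g, smul_ne_zero hL hg,
        le_aeStabilizer_inter_of_ae_eq_const h.sum_eq hf hY.measurableSet
          (fun s ↦ hΛ.exists_ae_eq_const h hf hY (hc₀ s) (hc s)) (hmem g)⟩
  · right
    obtain ⟨s, hs⟩ := not_forall.1 hper
    exact h.measure_inter_eq_half hf hA (hΛ.mem_sup s) hY.measurableSet hL (hmem _) (hmem _)
      ((hΛ.ae_isPeriodicSeq_or_ae_not h hY s).resolve_left hs)

end PeriodicCase

section Interface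

variable {G X : Type*} [AddCommGroup G] [AddAction G X] [MeasurableSpace X]
  [MeasurableConstVAdd G X] {μ : Measure X} [VAddInvariantMeasure G X μ]

lemma image_vadd_ae_eq_of_mem_aeStabilizer {g : G} {B : Set X}
    (hg : g ∈ aeStabilizer μ (· ∈ B)) : (g +ᵥ ·) '' B =ᵐ[μ] B := by
  have himage : (g +ᵥ ·) '' B = (-g +ᵥ ·) ⁻¹' B :=
    congrFun (Set.image_eq_preimage_of_inverse (neg_vadd_vadd g) (vadd_neg_vadd g)) B
  exact himage ▸ neg_mem hg

lemma isErgodicComponents_of_forall_isErgodicComponent [AddAction (ℤ × ℤ) X]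
    [MeasurableConstVAdd (ℤ × ℤ) X] [VAddInvariantMeasure (ℤ × ℤ) X μ] {Λ : AddSubgroup (ℤ × ℤ)}
    {n : ℕ} {Y : Fin n → Set X} (hY : ∀ i, IsErgodicComponent μ Λ (Y i))
    (hdisj : Pairwise (Function.onFun Disjoint Y)) (hcover : μ (Set.univ \ ⋃ i, Y i) = 0) :
    IsErgodicComponents μ (· +ᵥ ·) Λ Y := by
  refine ⟨fun i ↦ (hY i).measurableSet, fun i ↦ pos_iff_ne_zero.2 (hY i).measure_ne_zero,
    fun i j hij ↦ ?_, hcover, fun i g hg ↦ (hY i).le_aeStabilizer hg,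
    fun i S hS hinv ↦ (hY i).null_inter_or_null_diff S hS hinv⟩
  rw [(hdisj hij).inter_eq, measure_empty]

lemma ae_groupRingAction_indicator_eq_zero_of_polyAct [AddAction (ℤ × ℤ) X]
    [MeasurableConstVAdd (ℤ × ℤ) X] [VAddInvariantMeasure (ℤ × ℤ) X μ] {A : Set X}
    {p : AddMonoidAlgebra ℤ (ℤ × ℤ)}
    (hp : polyAct (· +ᵥ ·) p (A.indicator 1) =ᵐ[μ] fun _ ↦ 0) :
    ∀ᵐ x ∂μ, groupRingAction p (fun h ↦ A.indicator 1 (h +ᵥ x)) = 0 := by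
  have hcast (x : X) : (A.indicator 1 x : ℝ) = (A.indicator 1 x : ℤ) := by
    by_cases hx : x ∈ A <;> simp [hx]
  have horbit : ∀ᵐ x ∂μ, ∀ h : ℤ × ℤ, polyAct (· +ᵥ ·) p (A.indicator 1) (h +ᵥ x) = 0 :=
    ae_all_iff.2 fun h ↦ (measurePreserving_vadd h μ).quasiMeasurePreserving.ae hp
  filter_upwards [horbit] with x hx
  ext h
  rw [groupRingAction_apply, Pi.zero_apply, ← Int.cast_eq_zero (α := ℝ), ← hx h, polyAct,
    Finsupp.sum, Finsupp.sum, Int.cast_sum]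
  refine Finset.sum_congr rfl fun g _ ↦ ?_
  rw [Int.cast_mul, hcast, vadd_vadd, neg_add_eq_sub]

end Interface

/-- **Theorem 4.4.** Let `(X, μ)` be a probability space with an ergodic
measure-preserving `ℤ²`-action `T`, and let `A ⊆ X` be measurable with
`Ann(1_A) ≠ {0}`. Then there is a finite index subgroup `Λ ⊆ ℤ²` such that for each
`Λ`-ergodic component `X_s`, either `X_s ∩ A` is 1-periodic (invariant up to null sets
under some nonzero element of `ℤ²`) or `μ(X_s ∩ A) = μ(X_s)/2`. -/
theorem onePeriodic_or_half_measure_on_components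
    {X : Type*} [MeasurableSpace X] (μ : Measure X) [IsProbabilityMeasure μ]
    (T : ℤ × ℤ → X → X)
    (hmp : ∀ g, MeasurePreserving (T g) μ μ)
    (hT0 : T 0 = id)
    (hTadd : ∀ g h : ℤ × ℤ, T (g + h) = T g ∘ T h)
    (herg : ∀ S : Set X, MeasurableSet S → (∀ g : ℤ × ℤ, T g ⁻¹' S =ᵐ[μ] S) →
      μ S = 0 ∨ μ S = 1)
    (A : Set X) (hA : MeasurableSet A)
    (hann : ∃ p : AddMonoidAlgebra ℤ (ℤ × ℤ), p ≠ 0 ∧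
      polyAct T p (A.indicator 1) =ᵐ[μ] (fun _ => (0 : ℝ))) :
    ∃ Λ : AddSubgroup (ℤ × ℤ), Λ.FiniteIndex ∧
      ∃ (n : ℕ) (Xs : Fin n → Set X),
        IsErgodicComponents μ T Λ Xs ∧
        ∀ i, (∃ g : ℤ × ℤ, g ≠ 0 ∧ T g '' (Xs i ∩ A) =ᵐ[μ] ((Xs i ∩ A : Set X))) ∨
          μ (Xs i ∩ A) = μ (Xs i) / 2 := by
  let act : AddAction (ℤ × ℤ) X :=
    { vadd := T, zero_vadd := congrFun hT0, add_vadd := fun g h ↦ congrFun (hTadd g h) }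
  have : MeasurableConstVAdd (ℤ × ℤ) X := ⟨fun g ↦ (hmp g).measurable⟩
  have : ErgodicVAdd (ℤ × ℤ) X μ :=
    { measure_preimage_vadd := fun g S hS ↦ (hmp g).measure_preimage hS.nullMeasurableSet
      aeconst_of_forall_preimage_vadd_ae_eq := fun {S} hS hinv ↦
        Filter.eventuallyConst_set'.2 ((herg S hS hinv).imp ae_eq_empty.2 fun h ↦
          (ae_eq_univ_iff_measure_eq hS.nullMeasurableSet).2 (h.trans measure_univ.symm)) }
  have hf : indicatorConstLp 2 hA (measure_ne_top μ A) (1 : ℝ) =ᵐ[μ] A.indicator 1 :=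
    indicatorConstLp_coeFn
  obtain ⟨p, hp, hpA⟩ := hann
  obtain ⟨_, v, F, h⟩ :=
    exists_isTransverseDecomposition hf hp (ae_groupRingAction_indicator_eq_zero_of_polyAct hpA)
  obtain ⟨w, Λ, hΛ⟩ := h.exists_isAdapted
  have := hΛ.finiteIndex
  obtain ⟨n, Y, hY, hdisj, hcover⟩ := exists_fin_isErgodicComponent (μ := μ) Λ
  refine ⟨Λ, this, n, Y, isErgodicComponents_of_forall_isErgodicComponent hY hdisj hcover,
    fun i ↦ ?_⟩
  exact (hΛ.exists_mem_aeStabilizer_or_measure_inter_eq_half h hf hA (hY i)).imp_left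
    fun ⟨g, hg, hmem⟩ ↦ ⟨g, hg, image_vadd_ae_eq_of_mem_aeStabilizer hmem⟩
end
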